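/- arXiv:1006.5285 — 8 statements merged into one kernel-verified Lean document; each statement's English description precedes it below -/
import Mathlib

section
/- Let G be a Hausdorff topological group and let H be a dense subgroup of G (with the subspace topology). Then H is locally minimal if and only if G is locally minimal and H is locally essential in G. -/
/-- A Hausdorff topological group `(G, τ)` is *locally minimal* if there exists a
neighborhood `V` of the identity such that the only Hausdorff group topology `σ`
coarser than `τ` for which `V` is still a `σ`-neighborhood of the identity is `τ` itself. -/
def LocallyMinimal (G : Type*) [Group G] [τ : TopologicalSpace G] : Prop :=
  ∃ V ∈ nhds (1 : G), ∀ σ : TopologicalSpace G, τ ≤ σ →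
    @IsTopologicalGroup G σ _ → @T2Space G σ → V ∈ @nhds G σ 1 → σ = τ

/-- A subgroup `H` of a topological group `G` is *locally essential* if there is a
neighborhood `V` of the identity such that every closed normal subgroup `N ⊆ V`
with `H ⊓ N = ⊥` is trivial. -/
def LocallyEssential {G : Type*} [Group G] [TopologicalSpace G] (H : Subgroup G) : Prop :=
  ∃ V ∈ nhds (1 : G), ∀ N : Subgroup G, N.Normal → IsClosed (N : Set G) →
    (N : Set G) ⊆ V → H ⊓ N = ⊥ → N = ⊥

open Topology Filter Pointwise in
theorem aux_closure_mem {G K : Type*} [Group G] [TopologicalSpace G]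
    [Group K] [TopologicalSpace K] (ι : K →* G) (hd : DenseRange ι)
    (hc : comap ι (𝓝 1) ≤ 𝓝 1) {U : Set K} (hU : U ∈ 𝓝 (1 : K)) :
    closure (ι '' U) ∈ 𝓝 (1 : G) := by
  obtain ⟨O, hO, hOU⟩ := hc hU
  obtain ⟨O', hO', ho, h1⟩ := mem_nhds_iff.1 hO
  refine mem_of_superset (ho.mem_nhds h1) ?_
  refine (hd.open_subset_closure_inter ho).trans (closure_mono ?_)
  rintro _ ⟨hy, k, rfl⟩
  exact ⟨k, hOU (hO' hy), rfl⟩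

open Topology Filter Pointwise in
theorem aux_closure_pre {G K : Type*} [Group G] [TopologicalSpace G] [IsTopologicalGroup G]
    [Group K] [TopologicalSpace K] [IsTopologicalGroup K] (ι : K →* G)
    (hc : comap ι (𝓝 1) ≤ 𝓝 1) {U : Set K} {x : K} (hx : ι x ∈ closure (ι '' U)) :
    x ∈ closure U := by
  rw [mem_closure_iff_nhds_one] at hx ⊢
  intro W hW
  obtain ⟨O, hO, hOW⟩ := hc hW
  obtain ⟨_, ⟨u, hu, rfl⟩, h⟩ := hx O hO
  exact ⟨u, hu, hOW (by simpa using h)⟩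

open Topology Filter Pointwise in
theorem aux_extend {G K : Type*} [Group G] [TopologicalSpace G] [IsTopologicalGroup G]
    [Group K] [TopologicalSpace K] [IsTopologicalGroup K] (ι : K →* G) (hd : DenseRange ι)
    (hc : comap ι (𝓝 1) ≤ 𝓝 1) :
    ∃ s : GroupTopology G,
      (@nhds G s.toTopologicalSpace 1).HasBasis (fun U : Set K => U ∈ 𝓝 (1 : K)) (fun U => closure (ι '' U)) := by
  let B : GroupFilterBasis G :=
    { sets := {S | ∃ U ∈ 𝓝 (1 : K), closure (ι '' U) = S}
      nonempty := ⟨_, Set.univ, univ_mem, rfl⟩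
      inter_sets := by
        rintro _ _ ⟨U, hU, rfl⟩ ⟨V, hV, rfl⟩
        refine ⟨_, ⟨U ∩ V, inter_mem hU hV, rfl⟩, Set.subset_inter ?_ ?_⟩
        · exact closure_mono (Set.image_mono Set.inter_subset_left)
        · exact closure_mono (Set.image_mono Set.inter_subset_right)
      one' := by
        rintro _ ⟨U, hU, rfl⟩
        exact subset_closure ⟨1, mem_of_mem_nhds hU, map_one ι⟩
      mul' := by
        rintro _ ⟨U, hU, rfl⟩
        obtain ⟨V, hV, hVU⟩ := exists_nhds_one_split hU
        refine ⟨_, ⟨V, hV, rfl⟩, ?_⟩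
        rintro _ ⟨a, ha, b, hb, rfl⟩
        refine map_mem_closure₂ continuous_mul ha hb ?_
        rintro _ ⟨u, hu, rfl⟩ _ ⟨v, hv, rfl⟩
        exact ⟨u * v, hVU u hu v hv, map_mul ι _ _⟩
      inv' := by
        rintro _ ⟨U, hU, rfl⟩
        refine ⟨_, ⟨U⁻¹, inv_mem_nhds_one K hU, rfl⟩, ?_⟩
        intro a ha
        refine map_mem_closure continuous_inv ha ?_
        rintro _ ⟨u, hu, rfl⟩
        exact ⟨u⁻¹, hu, map_inv ι _⟩
      conj' := by
        rintro g _ ⟨U, hU, rfl⟩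
        obtain ⟨V, hV, hVU⟩ := exists_nhds_one_split hU
        obtain ⟨W, hW, hWV⟩ := exists_nhds_split_inv hV
        have hC := aux_closure_mem ι hd hc (inter_mem hV hW)
        have h2 : ∀ᶠ x in 𝓝 g, g * x⁻¹ ∈ closure (ι '' (V ∩ W)) := by
          have : Tendsto (fun x => g * x⁻¹) (𝓝 g) (𝓝 1) := by
            have h : Continuous (fun x => g * x⁻¹) := by fun_prop
            simpa using h.tendsto g
          exact this hC
        obtain ⟨k, hk⟩ := hd.exists_mem_open isOpen_interior
          ⟨g, mem_interior_iff_mem_nhds.2 h2⟩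
        have hk := interior_subset hk
        change g * (ι k)⁻¹ ∈ closure (ι '' (V ∩ W)) at hk
        have hconj : (fun x => k * x * k⁻¹) ⁻¹' W ∈ 𝓝 (1 : K) := by
          have h : Continuous (fun x : K => k * x * k⁻¹) := by fun_prop
          exact h.continuousAt.preimage_mem_nhds (by simpa using hW)
        refine ⟨_, ⟨_, hconj, rfl⟩, ?_⟩
        intro x hx
        have hx' : ι k * x * (ι k)⁻¹ ∈ closure (ι '' W) := by
          refine map_mem_closure (f := fun x => ι k * x * (ι k)⁻¹) (by fun_prop) hx ?_
          rintro _ ⟨u, hu, rfl⟩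
          exact ⟨_, hu, by simp⟩
        have hV' : ι k * x * (ι k)⁻¹ / (g * (ι k)⁻¹) ∈ closure (ι '' V) := by
          refine map_mem_closure₂ continuous_div' hx'
            (closure_mono (Set.image_mono Set.inter_subset_right) hk) ?_
          rintro _ ⟨u, hu, rfl⟩ _ ⟨v, hv, rfl⟩
          exact ⟨u / v, hWV u hu v hv, map_div ι _ _⟩
        have : g * (ι k)⁻¹ * (ι k * x * (ι k)⁻¹ / (g * (ι k)⁻¹)) ∈ closure (ι '' U) := by
          refine map_mem_closure₂ continuous_mul
            (closure_mono (Set.image_mono Set.inter_subset_left) hk) hV' ?_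
          rintro _ ⟨u, hu, rfl⟩ _ ⟨v, hv, rfl⟩
          exact ⟨u * v, hVU u hu v hv, map_mul ι _ _⟩
        have e : g * (ι k)⁻¹ * (ι k * x * (ι k)⁻¹ / (g * (ι k)⁻¹)) = g * x * g⁻¹ := by
          simp [div_eq_mul_inv, mul_assoc]
        rw [e] at this
        exact this }
  refine ⟨⟨B.topology, B.isTopologicalGroup⟩, ⟨fun t => ?_⟩⟩
  change t ∈ @nhds G B.topology 1 ↔ _
  rw [B.nhds_one_hasBasis.mem_iff]
  constructor
  · rintro ⟨_, ⟨U, hU, rfl⟩, h⟩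
    exact ⟨U, hU, h⟩
  · rintro ⟨U, hU, h⟩
    exact ⟨_, ⟨U, hU, rfl⟩, h⟩

open Topology Filter in
theorem aux_le {G : Type*} [Group G] {t s : TopologicalSpace G}
    (ht : @IsTopologicalGroup G t _) (hs : @IsTopologicalGroup G s _)
    (h : @nhds G t 1 ≤ @nhds G s 1) : t ≤ s := by
  rw [le_iff_nhds]
  intro x
  rw [← @nhds_translation_mul_inv G t _ _ x, ← @nhds_translation_mul_inv G s _ _ x]
  exact comap_mono h

open Topology Filter in
theorem aux_eq {G : Type*} [Group G] (s : TopologicalSpace G) [t : TopologicalSpace G]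
    [IsTopologicalGroup G] (H : Subgroup G) (hH : Dense (H : Set G)) (hts : t ≤ s)
    (hs : @IsTopologicalGroup G s _)
    (hi : s.induced ((↑) : H → G) = t.induced ((↑) : H → G)) : s = t := by
  refine le_antisymm (aux_le hs inferInstance ?_) hts
  intro U hU
  obtain ⟨C, hC, hCc, hCU⟩ := exists_mem_nhds_isClosed_subset hU
  have h1 : ((↑) : H → G) ⁻¹' C ∈ @nhds H (s.induced ((↑) : H → G)) 1 := by
    rw [hi, nhds_induced]
    exact ⟨C, hC, subset_rfl⟩
  rw [@nhds_induced _ _ s] at h1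
  obtain ⟨O, hO, hOC⟩ := h1
  obtain ⟨O', hO', ho, h1⟩ := (@mem_nhds_iff _ s _ _).1 hO
  refine (@mem_nhds_iff _ s _ _).2 ⟨O', ?_, ho, h1⟩
  refine (hH.open_subset_closure_inter (hts _ ho)).trans
    ((hCc.closure_subset_iff.2 ?_).trans hCU)
  rintro y ⟨hy, hyH⟩
  exact hOC (show (⟨y, hyH⟩ : H) ∈ _ from hO' hy)

open Topology Filter in
theorem aux_backward {G : Type*} [Group G] [τ : TopologicalSpace G]
    [IsTopologicalGroup G] [T2Space G] (H : Subgroup G) (hH : Dense (H : Set G))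
    (hG : LocallyMinimal G) (hE : LocallyEssential H) : LocallyMinimal ↥H := by
  obtain ⟨V₁, hV₁, h₁⟩ := hG
  obtain ⟨V₂, hV₂, h₂⟩ := hE
  obtain ⟨W, hW, hWc, hWV⟩ := exists_mem_nhds_isClosed_subset (inter_mem hV₁ hV₂)
  refine ⟨((↑) : H → G) ⁻¹' W, ?_, ?_⟩
  · exact continuous_subtype_val.continuousAt.preimage_mem_nhds hW
  intro σ hle hσ hσ2 hWσ
  have hd : DenseRange H.subtype := by
    simpa [DenseRange] using hH
  have hc : comap H.subtype (𝓝 1) ≤ @nhds H σ 1 := by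
    have := (le_iff_nhds _ _).1 hle 1
    rw [nhds_induced] at this
    exact this
  obtain ⟨s, hb⟩ := @aux_extend G H _ _ _ _ σ hσ H.subtype hd hc
  have hs := s.toIsTopologicalGroup
  have hτs : τ ≤ s.1 := by
    refine aux_le inferInstance hs ?_
    intro S hS
    obtain ⟨U, hU, hUS⟩ := hb.mem_iff.1 hS
    exact mem_of_superset (@aux_closure_mem G H _ _ _ σ H.subtype hd hc U hU) hUS
  have hWs : W ∈ @nhds G s.1 1 := by
    refine hb.mem_iff.2 ⟨_, hWσ, hWc.closure_subset_iff.2 ?_⟩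
    rintro _ ⟨y, hy, rfl⟩
    exact hy
  let N : Subgroup G := @Subgroup.topologicalClosure G s.1 _ hs ⊥
  have hNmem : ∀ x, x ∈ N ↔ ∀ S ∈ @nhds G s.1 1, x ∈ S := by
    intro x
    change x ∈ @closure G s.1 ((⊥ : Subgroup G) : Set G) ↔ _
    rw [Subgroup.coe_bot, @R0Space.closure_singleton G s.1 _ 1, mem_ker]
  have hσsep : ∀ x : H, (x : G) ∈ N → x = 1 := by
    intro x hx
    by_contra hne
    have h3 : {x}ᶜ ∈ @nhds H σ 1 :=
      @IsOpen.mem_nhds H σ 1 _ (@isOpen_compl_singleton H σ _ x) (Ne.symm hne)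
    obtain ⟨C, hC, hCc, hCU⟩ := @exists_mem_nhds_isClosed_subset H σ _ _ _ h3
    have h4 := (hNmem x).1 hx _ (hb.mem_of_mem hC)
    have h5 := @aux_closure_pre G H _ _ _ _ σ hσ H.subtype hc C x h4
    rw [@IsClosed.closure_eq H σ _ hCc] at h5
    exact hCU h5 rfl
  have hN : N = ⊥ := by
    refine h₂ N ?_ ?_ ?_ ?_
    · exact @Subgroup.is_normal_topologicalClosure G s.1 _ hs ⊥ inferInstance
    · exact IsClosed.mono (@isClosed_closure G s.1 _) hτs
    · intro x hx
      exact (hWV ((hNmem x).1 hx W hWs)).2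
    · rw [eq_bot_iff]
      rintro x ⟨hxH, hxN⟩
      have := hσsep ⟨x, hxH⟩ hxN
      exact congrArg Subtype.val this
  have hs2 : @T2Space G s.1 := by
    refine @IsTopologicalGroup.t2Space_of_one_sep G s.1 _ hs ?_
    intro x hx
    by_contra! hcon
    have : x ∈ N := (hNmem x).2 hcon
    rw [hN] at this
    exact hx this
  have hsτ : s.1 = τ := h₁ s.1 hτs hs hs2
    (mem_of_superset hWs fun x hx => (hWV hx).1)
  refine le_antisymm (aux_le hσ inferInstance ?_) hle
  intro S hS
  rw [nhds_induced] at hS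
  obtain ⟨T, hT, hTS⟩ := hS
  have hT : T ∈ @nhds G s.1 1 := by rw [hsτ]; exact hT
  obtain ⟨U, hU, hUT⟩ := hb.mem_iff.1 hT
  refine mem_of_superset hU fun x hx => hTS (hUT (subset_closure ⟨x, hx, rfl⟩))

open Topology Filter in
theorem aux_forward {G : Type*} [Group G] [τ : TopologicalSpace G]
    [IsTopologicalGroup G] [T2Space G] (H : Subgroup G) (hH : Dense (H : Set G))
    (h : LocallyMinimal ↥H) : LocallyMinimal G ∧ LocallyEssential H := by
  obtain ⟨V, hV, h⟩ := h
  rw [nhds_induced] at hV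
  obtain ⟨V₀, hV₀, hVV⟩ := hV
  have key : ∀ s : GroupTopology G, τ ≤ s.1 →
      @T2Space H (s.1.induced ((↑) : H → G)) → V₀ ∈ @nhds G s.1 1 → s.1 = τ := by
    intro s hτs hs2 hVs
    have hs := s.toIsTopologicalGroup
    refine aux_eq s.1 H hH hτs hs ?_
    refine h _ (induced_mono hτs) ?_ hs2 ?_
    · exact @topologicalGroup_induced G H s.1 _ hs _ _ _ _ H.subtype
    · rw [@nhds_induced _ _ s.1]
      exact ⟨V₀, hVs, hVV⟩
  constructor
  · refine ⟨V₀, hV₀, fun s hτs hs hs2 hVs => key ⟨s, hs⟩ hτs ?_ hVs⟩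
    exact @T2Space.of_injective_continuous H G (s.induced _) s hs2 _ Subtype.val_injective
      (@continuous_induced_dom _ _ _ s)
  · obtain ⟨W, hW, hWV⟩ := exists_nhds_one_split hV₀
    refine ⟨W, hW, fun N hNn hNc hNW hHN => ?_⟩
    let s : GroupTopology G :=
      ⟨TopologicalSpace.induced (QuotientGroup.mk' N) (QuotientGroup.instTopologicalSpace N),
        topologicalGroup_induced (QuotientGroup.mk' N)⟩
    have hτs : τ ≤ s.1 := continuous_iff_le_induced.1 QuotientGroup.continuous_mk
    have hsτ : s.1 = τ := by
      refine key s hτs ?_ ?_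
      · have hcont : @Continuous H (G ⧸ N) (s.1.induced ((↑) : H → G)) _
            (fun x => QuotientGroup.mk' N (x : G)) :=
          @Continuous.comp _ _ _ (s.1.induced ((↑) : H → G)) s.1 _ _ _
            (@continuous_induced_dom G (G ⧸ N) _ _) (@continuous_induced_dom H G _ s.1)
        refine @T2Space.of_injective_continuous H (G ⧸ N) (s.1.induced _) _ inferInstance _
          ?_ hcont
        intro x y hxy
        have h1 : (x : G)⁻¹ * y ∈ N := QuotientGroup.eq.1 hxy
        have h2 : (x : G)⁻¹ * y ∈ H ⊓ N := ⟨H.mul_mem (H.inv_mem x.2) y.2, h1⟩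
        rw [hHN, Subgroup.mem_bot, inv_mul_eq_one] at h2
        exact Subtype.ext h2
      · rw [@nhds_induced _ _ _ _ 1]
        refine ⟨QuotientGroup.mk' N '' W, ?_, ?_⟩
        · exact QuotientGroup.isOpenMap_coe.image_mem_nhds hW
        · rintro x ⟨w, hw, hwx⟩
          have h1 : w⁻¹ * x ∈ N := QuotientGroup.eq.1 hwx
          have := hWV w hw _ (hNW h1)
          simpa using this
    rw [eq_bot_iff]
    intro x hx
    have h1 : QuotientGroup.mk' N x = QuotientGroup.mk' N 1 := by
      rw [map_one]; exact (QuotientGroup.eq_one_iff x).2 hx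
    by_contra hne
    have h2 : {x}ᶜ ∈ @nhds G s.1 1 := by
      rw [hsτ]
      exact isOpen_compl_singleton.mem_nhds (fun h => hne h.symm)
    rw [@nhds_induced _ _ _ _ 1] at h2
    obtain ⟨O, hO, hOx⟩ := h2
    have h3 : x ∈ QuotientGroup.mk' N ⁻¹' O := by
      change QuotientGroup.mk' N x ∈ O
      rw [h1]; exact mem_of_mem_nhds hO
    exact hOx h3 rfl

/-- Local minimality criterion: a dense subgroup `H` of a Hausdorff topological group `G`
is locally minimal iff `G` is locally minimal and `H` is locally essential in `G`. -/
theorem denseSubgroup_locallyMinimal_iff {G : Type*} [Group G] [TopologicalSpace G]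
    [IsTopologicalGroup G] [T2Space G] (H : Subgroup G) (hH : Dense (H : Set G)) :
    LocallyMinimal ↥H ↔ LocallyMinimal G ∧ LocallyEssential H := by
  exact ⟨aux_forward H hH, fun h => aux_backward H hH h.1 h.2⟩
end

section
/- Let G be a locally minimal Hausdorff topological group which is NSnS, and let H be a dense subgroup of G. Then H (with the subspace topology) is locally minimal. -/
/-- A topological group is *NSnS* (has no small normal subgroups) if some neighborhood
of the identity contains no nontrivial normal subgroup. -/
def IsNSnS (G : Type*) [Group G] [TopologicalSpace G] : Prop :=
  ∃ V ∈ nhds (1 : G), ∀ N : Subgroup G, N.Normal → (N : Set G) ⊆ V → N = ⊥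

/-- Extension of a group topology along a dense homomorphism by closures. -/
@[reducible]
def closureBasis {K G : Type*} [Group K] [TopologicalSpace K] [IsTopologicalGroup K]
    [Group G] [TopologicalSpace G] [IsTopologicalGroup G] (f : K →* G)
    (hf : DenseRange f) (hc : ∀ O ∈ nhds (1 : K), closure (f '' O) ∈ nhds (1 : G)) :
    GroupFilterBasis G where
  sets := {S | ∃ O ∈ nhds (1 : K), S = closure (f '' O)}
  nonempty := ⟨_, Set.univ, Filter.univ_mem, rfl⟩
  inter_sets := by
    rintro _ _ ⟨O, hO, rfl⟩ ⟨P, hP, rfl⟩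
    refine ⟨_, ⟨O ∩ P, Filter.inter_mem hO hP, rfl⟩, Set.subset_inter ?_ ?_⟩
    · exact closure_mono (Set.image_mono Set.inter_subset_left)
    · exact closure_mono (Set.image_mono Set.inter_subset_right)
  one' := by
    rintro _ ⟨O, hO, rfl⟩
    exact mem_of_mem_nhds (hc O hO)
  mul' := by
    rintro _ ⟨O, hO, rfl⟩
    have h : Filter.Tendsto (fun p : K × K => p.1 * p.2) (nhds 1 ×ˢ nhds 1) (nhds 1) := by
      have : Continuous (fun p : K × K => p.1 * p.2) := by fun_prop
      simpa [nhds_prod_eq] using this.tendsto (1, 1)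
    obtain ⟨P, hP, hPO⟩ := Filter.mem_prod_same_iff.1 (h hO)
    refine ⟨_, ⟨P, hP, rfl⟩, ?_⟩
    rintro _ ⟨a, ha, b, hb, rfl⟩
    refine map_mem_closure₂ (f := fun a b : G => a * b) (by fun_prop) ha hb ?_
    rintro _ ⟨a, ha, rfl⟩ _ ⟨b, hb, rfl⟩
    exact ⟨a * b, hPO (Set.mk_mem_prod ha hb), map_mul f a b⟩
  inv' := by
    rintro _ ⟨O, hO, rfl⟩
    refine ⟨_, ⟨O⁻¹, inv_mem_nhds_one K hO, rfl⟩, ?_⟩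
    intro a ha
    refine map_mem_closure (f := fun a : G => a⁻¹) (by fun_prop) ha ?_
    rintro _ ⟨a, ha, rfl⟩
    exact ⟨a⁻¹, ha, map_inv f a⟩
  conj' := by
    rintro g _ ⟨O, hO, rfl⟩
    have h : Filter.Tendsto (fun p : K × K => p.1 * p.2 * p.1⁻¹)
        (nhds 1 ×ˢ nhds 1) (nhds 1) := by
      have : Continuous (fun p : K × K => p.1 * p.2 * p.1⁻¹) := by fun_prop
      simpa [nhds_prod_eq] using this.tendsto (1, 1)
    obtain ⟨P, hP, hPO⟩ := Filter.mem_prod_same_iff.1 (h hO)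
    have hg : {y : G | g * y⁻¹ ∈ closure (f '' P)} ∈ nhds g := by
      have : Continuous (fun y : G => g * y⁻¹) := by fun_prop
      have h2 := this.tendsto g
      rw [mul_inv_cancel] at h2
      exact h2 (hc P hP)
    obtain ⟨_, ⟨k, rfl⟩, hk⟩ := hf.inter_nhds_nonempty hg
    have hk' : (fun x : K => k * x * k⁻¹) ⁻¹' P ∈ nhds (1 : K) := by
      have : Continuous (fun x : K => k * x * k⁻¹) := by fun_prop
      have h2 := this.tendsto 1
      rw [mul_one, mul_inv_cancel] at h2
      exact h2 hP
    refine ⟨_, ⟨_, hk', rfl⟩, ?_⟩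
    intro x hx
    have h1 : f k * x * (f k)⁻¹ ∈ closure (f '' P) := by
      refine map_mem_closure (f := fun x : G => f k * x * (f k)⁻¹) (by fun_prop) hx ?_
      rintro _ ⟨a, ha, rfl⟩
      exact ⟨k * a * k⁻¹, ha, by simp⟩
    have h2 : (g * (f k)⁻¹) * (f k * x * (f k)⁻¹) * (g * (f k)⁻¹)⁻¹ ∈ closure (f '' O) := by
      refine map_mem_closure₂ (f := fun a b : G => a * b * a⁻¹) (by fun_prop) hk h1 ?_
      rintro _ ⟨a, ha, rfl⟩ _ ⟨b, hb, rfl⟩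
      exact ⟨a * b * a⁻¹, hPO (Set.mk_mem_prod ha hb), by simp⟩
    have h3 : (g * (f k)⁻¹) * (f k * x * (f k)⁻¹) * (g * (f k)⁻¹)⁻¹ = g * x * g⁻¹ := by group
    rw [h3] at h2
    exact h2

/-- The intersection of a group filter basis, as a subgroup. -/
def coreSubgroup {G : Type*} [Group G] (B : GroupFilterBasis G) : Subgroup G where
  carrier := ⋂₀ B.sets
  one_mem' := fun _ hU => B.one hU
  mul_mem' := by
    intro a b ha hb U hU
    obtain ⟨V, hV, hVU⟩ := B.mul hU
    exact hVU (Set.mul_mem_mul (ha V hV) (hb V hV))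
  inv_mem' := by
    intro a ha U hU
    obtain ⟨V, hV, hVU⟩ := B.inv hU
    exact hVU (ha V hV)

theorem coreSubgroup_normal {G : Type*} [Group G] (B : GroupFilterBasis G) :
    (coreSubgroup B).Normal := by
  constructor
  intro a ha g U hU
  obtain ⟨V, hV, hVU⟩ := B.conj g hU
  exact hVU (ha V hV)

theorem topology_key {K G : Type*} [Group K] [TopologicalSpace K] [IsTopologicalGroup K]
    [Group G] [τ : TopologicalSpace G] [IsTopologicalGroup G] (f : K →* G)
    (hf : DenseRange f) 
    (hc : ∀ O ∈ nhds (1 : K), closure (f '' O) ∈ nhds (1 : G))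
    (V W : Set G)
    (hV : ∀ σ : TopologicalSpace G, τ ≤ σ →
      @IsTopologicalGroup G σ _ → @T2Space G σ → V ∈ @nhds G σ 1 → σ = τ)
    (hW : ∀ N : Subgroup G, N.Normal → (N : Set G) ⊆ W → N = ⊥)
    (C : Set G) (hCV : C ⊆ V) (hCW : C ⊆ W) (hCc : IsClosed C)
    (hC : f ⁻¹' C ∈ nhds (1 : K)) (A : Set G) (hA : A ∈ nhds (1 : G)) :
    f ⁻¹' A ∈ nhds (1 : K) := by
  let B := closureBasis f hf hc
  have hsub : closure (f '' (f ⁻¹' C)) ⊆ C :=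
    closure_minimal (Set.image_preimage_subset f C) hCc
  have hmem : closure (f '' (f ⁻¹' C)) ∈ B := ⟨_, hC, rfl⟩
  have hbot : coreSubgroup B = ⊥ := by
    refine hW _ (coreSubgroup_normal B) ?_
    intro x hx
    exact hCW (hsub (hx _ hmem))
  have hle : τ ≤ B.topology := by
    have h1 : nhds (1 : G) ≤ @nhds G B.topology 1 := by
      rw [B.nhds_one_hasBasis.ge_iff]
      rintro _ ⟨O, hO, rfl⟩
      exact hc O hO
    refine le_of_nhds_le_nhds fun x => ?_
    rw [B.nhds_eq, GroupFilterBasis.N, ← B.nhds_one_eq, ← map_mul_left_nhds_one x]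
    exact Filter.map_mono h1
  have hT2 : @T2Space G B.topology := by
    rw [@GroupFilterBasis.t2Space_iff_sInter_subset G _ B.topology B rfl]
    intro x hx
    have : x ∈ coreSubgroup B := hx
    rw [hbot] at this
    exact this
  have heq := hV B.topology hle B.isTopologicalGroup hT2
    (Filter.mem_of_superset (B.mem_nhds_one hmem) (hsub.trans hCV))
  rw [← heq] at hA
  obtain ⟨_, ⟨O, hO, rfl⟩, hOA⟩ := B.nhds_one_hasBasis.mem_iff.1 hA
  exact Filter.mem_of_superset hO fun x hx => hOA (subset_closure ⟨x, hx, rfl⟩)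

/-- A dense subgroup of a locally minimal NSnS Hausdorff topological group is locally
minimal. -/
theorem denseSubgroup_locallyMinimal_of_NSnS {G : Type*} [Group G] [TopologicalSpace G]
    [IsTopologicalGroup G] [T2Space G] (hmin : LocallyMinimal G) (hnsns : IsNSnS G)
    (H : Subgroup G) (hH : Dense (H : Set G)) :
    LocallyMinimal ↥H := by
  obtain ⟨V, hV, hVm⟩ := hmin
  obtain ⟨W, hW, hWm⟩ := hnsns
  obtain ⟨C, hC, hCc, hCVW⟩ := exists_mem_nhds_isClosed_subset (Filter.inter_mem hV hW)
  refine ⟨H.subtype ⁻¹' C, continuous_subtype_val.continuousAt.preimage_mem_nhds hC, ?_⟩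
  intro σ hσ hσg _ hσC
  have hc : ∀ O ∈ @nhds H σ 1, closure (H.subtype '' O) ∈ nhds (1 : G) := by
    intro O hO
    have hO2 : O ∈ @nhds H instTopologicalSpaceSubtype 1 := nhds_mono hσ hO
    obtain ⟨A, hA, hAO⟩ := mem_nhds_subtype _ _ _ |>.1 hO2
    obtain ⟨A', hA'A, hA'o, hA'1⟩ := mem_nhds_iff.1 hA
    refine Filter.mem_of_superset (hA'o.mem_nhds hA'1) ?_
    refine (hH.open_subset_closure_inter hA'o).trans (closure_mono ?_)
    rintro x ⟨hx, hxH⟩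
    exact ⟨⟨x, hxH⟩, hAO (hA'A hx), rfl⟩
  have hf : DenseRange H.subtype := by
    simpa [DenseRange] using hH
  refine IsTopologicalGroup.ext hσg inferInstance (le_antisymm ?_ (nhds_mono hσ))
  intro O hO
  obtain ⟨A, hA, hAO⟩ := mem_nhds_subtype _ _ _ |>.1 hO
  exact Filter.mem_of_superset
    (@topology_key H G _ σ hσg _ _ _ H.subtype hf hc V W hVm hWm C
      (hCVW.trans Set.inter_subset_left) (hCVW.trans Set.inter_subset_right) hCc hσC A hA) hAO
end

section
/- Let H be a dense locally essential subgroup of a Hausdorff topological group G. Then H is NSnS if and only if G is NSnS. -/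
/-- If `H` is a dense locally essential subgroup of a Hausdorff topological group `G`,
then `H` is NSnS iff `G` is NSnS. -/
theorem denseLocallyEssential_NSnS_iff {G : Type*} [Group G] [TopologicalSpace G]
    [IsTopologicalGroup G] [T2Space G] (H : Subgroup G) (hH : Dense (H : Set G))
    (hess : LocallyEssential H) :
    IsNSnS ↥H ↔ IsNSnS G := by
  constructor
  · rintro ⟨W, hW, hWN⟩
    obtain ⟨V, hV, hVN⟩ := hess
    obtain ⟨U, hU, hUW⟩ := mem_nhds_subtype (H : Set G) (1 : H) W |>.1 hW
    have hU' : U ∈ nhds (1 : G) := hU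
    obtain ⟨C, hC, hCc, hCU⟩ := exists_mem_nhds_isClosed_subset (Filter.inter_mem hU' hV)
    refine ⟨C, hC, fun N hN hNC => ?_⟩
    have hsub : (N.topologicalClosure : Set G) ⊆ C := by
      rw [Subgroup.topologicalClosure_coe]
      exact closure_minimal hNC hCc
    have hnorm : N.topologicalClosure.Normal := Subgroup.is_normal_topologicalClosure N
    have h1 := hWN (N.topologicalClosure.subgroupOf H) inferInstance (by
      intro x hx
      exact hUW (hCU (hsub hx)).1)
    have h2 := hVN N.topologicalClosure hnorm N.isClosed_topologicalClosure
      (fun x hx => (hCU (hsub hx)).2) (by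
        rw [Subgroup.subgroupOf_eq_bot] at h1
        exact h1.symm.eq_bot)
    exact le_bot_iff.1 (h2 ▸ N.le_topologicalClosure)
  · rintro ⟨U, hU, hUN⟩
    obtain ⟨C, hC, hCc, hCU⟩ := exists_mem_nhds_isClosed_subset hU
    refine ⟨Subtype.val ⁻¹' C, continuous_subtype_val.continuousAt.preimage_mem_nhds hC, ?_⟩
    intro N hN hNC
    have hMC : ((N.map H.subtype : Subgroup G) : Set G) ⊆ C := by
      rintro _ ⟨x, hx, rfl⟩
      exact hNC hx
    have hnorm : (N.map H.subtype).topologicalClosure.Normal := by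
      refine ⟨fun x hx g => ?_⟩
      have hcl : IsClosed {g : G | g * x * g⁻¹ ∈ (N.map H.subtype).topologicalClosure} :=
        (Subgroup.isClosed_topologicalClosure _).preimage
          (f := fun g : G => g * x * g⁻¹) (by fun_prop)
      refine (closure_minimal (s := (H : Set G)) ?_ hcl) (hH g)
      intro h hh
      refine map_mem_closure (f := fun y : G => h * y * h⁻¹) (by fun_prop) hx ?_
      rintro _ ⟨y, hy, rfl⟩
      exact ⟨⟨h, hh⟩ * y * ⟨h, hh⟩⁻¹, hN.conj_mem y hy _, rfl⟩
    have h := hUN _ hnorm (by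
      rw [Subgroup.topologicalClosure_coe]
      exact (closure_minimal hMC hCc).trans hCU)
    have h3 : N.map H.subtype = ⊥ := le_bot_iff.1 (h ▸ Subgroup.le_topologicalClosure _)
    exact (Subgroup.map_eq_bot_iff_of_injective N H.subtype_injective).1 h3
end

section
/- For every prime p and every increasing sequence (m_n) of natural numbers, the abelian group ⊕_{n∈ℕ} ℤ(p^{m_n}) admits a non-discrete locally quasi-convex UFSS group topology. -/
open scoped DirectSum

/-- `(1/n)U = {x : kx ∈ U for all 1 ≤ k ≤ n}`. -/
def invDiv {G : Type*} [AddGroup G] (n : ℕ) (U : Set G) : Set G :=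
  {x | ∀ k : ℕ, 1 ≤ k → k ≤ n → k • x ∈ U}

/-- A Hausdorff topological abelian group is *UFSS* (uniformly free from small subgroups)
if there is a symmetric neighborhood `U` of `0` such that the sets `(1/n)U`, `n ∈ ℕ`,
form a neighborhood basis at `0`. -/
def IsUFSS (G : Type*) [AddGroup G] [TopologicalSpace G] : Prop :=
  ∃ U ∈ nhds (0 : G), (∀ x ∈ U, -x ∈ U) ∧
    (∀ n : ℕ, 1 ≤ n → invDiv n U ∈ nhds (0 : G)) ∧
    (∀ V ∈ nhds (0 : G), ∃ n : ℕ, 1 ≤ n ∧ invDiv n U ⊆ V)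

/-- `𝕋₊`, the image of `[-1/4, 1/4]` in `𝕋 = ℝ/ℤ`. -/
noncomputable def Tplus : Set UnitAddCircle :=
  (fun r : ℝ => (r : UnitAddCircle)) '' Set.Icc (-(1/4) : ℝ) (1/4)

/-- The polar of a subset `A` of a topological abelian group: all continuous characters
`χ : G → 𝕋` with `χ(A) ⊆ 𝕋₊`. -/
def polar {G : Type*} [AddGroup G] [TopologicalSpace G] (A : Set G) :
    Set (G →+ UnitAddCircle) :=
  {χ | Continuous χ ∧ ∀ x ∈ A, χ x ∈ Tplus}

/-- A subset `A` is *quasi-convex* if it coincides with its quasi-convex hull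
`{x : χ(x) ∈ 𝕋₊ for all χ in the polar of A}`. -/
def IsQuasiConvex {G : Type*} [AddGroup G] [TopologicalSpace G] (A : Set G) : Prop :=
  A = {x | ∀ χ ∈ polar A, χ x ∈ Tplus}

/-- A topological abelian group is *locally quasi-convex* if it has a neighborhood basis
at `0` consisting of quasi-convex sets. -/
def IsLocallyQuasiConvex (G : Type*) [AddGroup G] [TopologicalSpace G] : Prop :=
  ∀ V ∈ nhds (0 : G), ∃ A : Set G, IsQuasiConvex A ∧ A ∈ nhds (0 : G) ∧ A ⊆ V

open scoped BoundedContinuousFunction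

theorem aux_mem_Tplus (t : UnitAddCircle) : t ∈ Tplus ↔ ‖t‖ ≤ 1/4 := by
  constructor
  · rintro ⟨r, hr, rfl⟩
    have h : |r| ≤ 1/4 := abs_le.2 ⟨by linarith [hr.1], hr.2⟩
    have : ‖(r : UnitAddCircle)‖ = |r| :=
      (AddCircle.norm_coe_eq_abs_iff 1 one_ne_zero).2 (by rw [abs_one]; linarith)
    show ‖(r : UnitAddCircle)‖ ≤ 1/4
    rw [this]; exact h
  · intro h
    induction t using QuotientAddGroup.induction_on with
    | H r =>
      have h' : ‖(r : UnitAddCircle)‖ ≤ 1/4 := h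
      rw [UnitAddCircle.norm_eq, abs_le] at h'
      refine ⟨r - round r, ⟨by linarith [h'.1], h'.2⟩, ?_⟩
      have : ((round r : ℝ) : UnitAddCircle) = 0 := by
        rw [AddCircle.coe_eq_zero_iff]
        exact ⟨round r, by simp⟩
      show ((r - round r : ℝ) : UnitAddCircle) = (r : UnitAddCircle)
      rw [AddCircle.coe_sub, this, sub_zero]

theorem aux_key (t : UnitAddCircle) (n : ℕ) (hn : 1 ≤ n)
    (h : ∀ k : ℕ, 1 ≤ k → k ≤ n → ‖k • t‖ ≤ 1/4) : n * ‖t‖ ≤ 1/4 := by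
  obtain ⟨r, hr1, hr2⟩ : ∃ r : ℝ, (r : UnitAddCircle) = t ∧ |r| = ‖t‖ := by
    induction t using QuotientAddGroup.induction_on with
    | H r =>
      refine ⟨r - round r, ?_, ?_⟩
      · have : ((round r : ℝ) : UnitAddCircle) = 0 := by
          rw [AddCircle.coe_eq_zero_iff]
          exact ⟨round r, by simp⟩
        show ((r - round r : ℝ) : UnitAddCircle) = (r : UnitAddCircle)
        rw [AddCircle.coe_sub, this, sub_zero]
      · exact (UnitAddCircle.norm_eq).symm
  induction n, hn using Nat.le_induction with
  | base => simpa using h 1 le_rfl le_rfl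
  | succ n hn ih =>
    have ih := ih (fun k h1 h2 => h k h1 (by omega))
    have hn' : (1 : ℝ) ≤ n := by exact_mod_cast hn
    have h0 := norm_nonneg t
    have e : ‖(((n + 1 : ℕ) * r : ℝ) : UnitAddCircle)‖ = |((n + 1 : ℕ) * r : ℝ)| := by
      refine (AddCircle.norm_coe_eq_abs_iff 1 one_ne_zero).2 ?_
      rw [abs_mul, hr2, abs_one, Nat.abs_cast]
      push_cast
      nlinarith
    have e2 : (((n + 1 : ℕ) * r : ℝ) : UnitAddCircle) = (n + 1) • t := by
      rw [← hr1, ← AddCircle.coe_nsmul, nsmul_eq_mul]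
    have := h (n + 1) (by omega) le_rfl
    rw [← e2, e, abs_mul, hr2, Nat.abs_cast] at this
    exact this

section
variable {G : Type*} [AddCommGroup G] [TopologicalSpace G]
  (f : G →+ (ℕ →ᵇ UnitAddCircle)) (hf : Topology.IsInducing f)
include hf

theorem aux_basis : (nhds (0 : G)).HasBasis (fun ε : ℝ => 0 < ε) (fun ε => {x | ‖f x‖ ≤ ε}) := by
  rw [hf.nhds_eq_comap, map_zero]
  refine (Metric.nhds_basis_closedBall.comap f).congr (fun _ => Iff.rfl) ?_
  intro ε _
  ext x
  simp

theorem aux_eval_cont (i k : ℕ) :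
    Continuous (fun x : G => k • (f x i)) := by
  have h1 : Continuous fun x : G => f x i :=
    (BoundedContinuousFunction.lipschitz_eval_const i).continuous.comp hf.continuous
  exact h1.nsmul k

theorem aux_ufss : IsUFSS G := by
  have hb := aux_basis f hf
  have key : ∀ n : ℕ, 1 ≤ n → invDiv n {x : G | ‖f x‖ ≤ 1/4} = {x : G | ‖f x‖ ≤ 1/(4*n)} := by
    intro n hn
    have hn' : (0 : ℝ) < n := by exact_mod_cast hn
    ext x
    constructor
    · intro h
      refine (BoundedContinuousFunction.norm_le (by positivity)).2 fun i => ?_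
      have := aux_key (f x i) n hn (fun k h1 h2 => by
        have h3 : ‖f (k • x)‖ ≤ 1/4 := h k h1 h2
        have h4 := (BoundedContinuousFunction.norm_coe_le_norm _ i).trans h3
        rw [map_nsmul] at h4
        exact h4)
      rw [le_div_iff₀ (by positivity)]
      linarith
    · intro h k h1 h2
      have h3 : ‖f x‖ ≤ 1/(4*n) := h
      show ‖f (k • x)‖ ≤ 1/4
      rw [map_nsmul]
      have h4 : ‖k • f x‖ ≤ k * ‖f x‖ := norm_nsmul_le
      have h5 : (k : ℝ) ≤ n := by exact_mod_cast h2
      rw [le_div_iff₀ (by positivity)] at h3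
      have := mul_le_mul_of_nonneg_right h5 (norm_nonneg (f x))
      linarith
  refine ⟨{x | ‖f x‖ ≤ 1/4}, hb.mem_of_mem (by norm_num), ?_, ?_, ?_⟩
  · intro x hx
    show ‖f (-x)‖ ≤ 1/4
    rw [map_neg, norm_neg]; exact hx
  · intro n hn
    rw [key n hn]
    have hn' : (0 : ℝ) < n := by exact_mod_cast hn
    exact hb.mem_of_mem (by positivity)
  · intro V hV
    obtain ⟨ε, hε, hV⟩ := hb.mem_iff.1 hV
    obtain ⟨n, hn⟩ := exists_nat_one_div_lt hε
    refine ⟨n + 1, by omega, ?_⟩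
    rw [key _ (by omega)]
    refine subset_trans ?_ hV
    intro x hx
    refine le_trans hx (le_trans ?_ hn.le)
    push_cast
    apply one_div_le_one_div_of_le <;> linarith [(Nat.cast_nonneg n : (0:ℝ) ≤ n)]

theorem aux_lqc : IsLocallyQuasiConvex G := by
  have hb := aux_basis f hf
  intro V hV
  obtain ⟨ε, hε, hV⟩ := hb.mem_iff.1 hV
  obtain ⟨m, hm⟩ := exists_nat_one_div_lt hε
  obtain ⟨n, hn, hn1⟩ : ∃ n : ℕ, n = m + 1 ∧ 1 ≤ n := ⟨m + 1, rfl, by omega⟩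
  have hn' : (0 : ℝ) < n := by exact_mod_cast hn1
  refine ⟨{x | ‖f x‖ ≤ 1/(4*n)}, ?_, hb.mem_of_mem (by positivity), ?_⟩
  · apply Set.Subset.antisymm
    · intro x hx χ hχ
      exact hχ.2 x hx
    · intro x hx
      refine (BoundedContinuousFunction.norm_le (by positivity)).2 fun i => ?_
      have := aux_key (f x i) n hn1 (fun k h1 h2 => by
        let χ : G →+ UnitAddCircle := AddMonoidHom.mk' (fun x : G => k • (f x i)) (by
          intro a b
          rw [map_add, BoundedContinuousFunction.add_apply, nsmul_add])
        have hχ : χ ∈ polar {x : G | ‖f x‖ ≤ 1/(4*n)} := by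
          refine ⟨aux_eval_cont f hf i k, ?_⟩
          intro y hy
          rw [aux_mem_Tplus]
          show ‖k • (f y i)‖ ≤ 1/4
          have h3 : ‖f y i‖ ≤ 1/(4*n) := (BoundedContinuousFunction.norm_coe_le_norm _ i).trans hy
          have h4 : ‖k • f y i‖ ≤ k * ‖f y i‖ := norm_nsmul_le
          have h5 : (k : ℝ) ≤ n := by exact_mod_cast h2
          rw [le_div_iff₀ (by positivity)] at h3
          have := mul_le_mul_of_nonneg_right h5 (norm_nonneg (f y i))
          linarith
        exact (aux_mem_Tplus _).1 (hx χ hχ))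
      rw [le_div_iff₀ (by positivity)]
      linarith
  · refine subset_trans ?_ hV
    intro x hx
    refine le_trans hx (le_trans ?_ hm.le)
    rw [hn]
    push_cast
    apply one_div_le_one_div_of_le <;> linarith [(Nat.cast_nonneg m : (0:ℝ) ≤ m)]

end

/-- The embedding into bounded sequences in the circle. -/
noncomputable def auxEmb (N : ℕ → ℕ) [∀ n, NeZero (N n)] :
    (⨁ n : ℕ, ZMod (N n)) →+ (ℕ →ᵇ UnitAddCircle) :=
  AddMonoidHom.mk' (fun x => BoundedContinuousFunction.ofNormedAddCommGroupDiscrete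
    (fun n => ZMod.toAddCircle (x n)) (1/2) (fun n => by
      simpa using AddCircle.norm_le_half_period (1 : ℝ) one_ne_zero (x := ZMod.toAddCircle (x n)))) (by
    intro a b
    ext n
    simp)

theorem auxEmb_apply (N : ℕ → ℕ) [∀ n, NeZero (N n)] (x : ⨁ n : ℕ, ZMod (N n)) (n : ℕ) :
    auxEmb N x n = ZMod.toAddCircle (x n) := rfl

theorem auxEmb_inj (N : ℕ → ℕ) [∀ n, NeZero (N n)] : Function.Injective (auxEmb N) := by
  intro x y h
  refine DFinsupp.ext fun n => ?_
  apply ZMod.toAddCircle_injective (N n)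
  have := congrArg (fun g : ℕ →ᵇ UnitAddCircle => g n) h
  exact this

/-- For every prime `p` and every increasing sequence `(m_n)` of natural numbers, the
group `⊕_{n∈ℕ} ℤ(p^{m_n})` admits a non-discrete locally quasi-convex UFSS group
topology. -/
theorem directSum_admits_nondiscrete_lqc_ufss_topology (p : ℕ) (hp : p.Prime)
    (m : ℕ → ℕ) (hm : StrictMono m) :
    ∃ τ : TopologicalSpace (⨁ n : ℕ, ZMod (p ^ m n)),
      @IsTopologicalAddGroup _ τ _ ∧ @T2Space _ τ ∧ τ ≠ ⊥ ∧
      @IsUFSS _ _ τ ∧ @IsLocallyQuasiConvex _ _ τ := by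
  have : ∀ n, NeZero (p ^ m n) := fun n => ⟨pow_ne_zero _ hp.ne_zero⟩
  let f := auxEmb (fun n => p ^ m n)
  let τ : TopologicalSpace (⨁ n : ℕ, ZMod (p ^ m n)) := TopologicalSpace.induced f inferInstance
  have hf : Topology.IsInducing f := ⟨rfl⟩
  have hinj : Function.Injective f := auxEmb_inj _
  refine ⟨τ, topologicalAddGroup_induced f, ?_, ?_, aux_ufss f hf, aux_lqc f hf⟩
  · exact T2Space.of_injective_continuous hinj hf.continuous
  · intro hbot
    have h0 : ({0} : Set (⨁ n : ℕ, ZMod (p ^ m n))) ∈ nhds 0 := by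
      have : DiscreteTopology (⨁ n : ℕ, ZMod (p ^ m n)) := ⟨hbot⟩
      rw [nhds_discrete]; exact Filter.mem_pure.2 rfl
    obtain ⟨ε, hε, hsub⟩ := (aux_basis f hf).mem_iff.1 h0
    obtain ⟨k, hk⟩ := exists_nat_one_div_lt hε
    have hkm : k + 1 ≤ m (k + 1) := hm.id_le (k + 1)
    have hlt : k + 1 < p ^ m (k + 1) :=
      lt_of_le_of_lt hkm (Nat.lt_pow_self hp.one_lt)
    let x : ⨁ n : ℕ, ZMod (p ^ m n) := DirectSum.of (fun n => ZMod (p ^ m n)) (k + 1) 1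
    have hx : ‖f x‖ ≤ ε := by
      refine (BoundedContinuousFunction.norm_le hε.le).2 fun i => ?_
      show ‖ZMod.toAddCircle (x i)‖ ≤ ε
      by_cases hi : i = k + 1
      · subst hi
        rw [show x (k + 1) = 1 from DirectSum.of_eq_same _ _]
        have e : (ZMod.toAddCircle (1 : ZMod (p ^ m (k + 1)))) =
            ((1 / (p ^ m (k + 1) : ℕ) : ℝ) : UnitAddCircle) := by
          have := ZMod.toAddCircle_intCast (N := p ^ m (k + 1)) 1
          simpa using this
        rw [e]
        have hP : ((k : ℝ) + 1) ≤ (p ^ m (k + 1) : ℕ) := by exact_mod_cast hlt.le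
        have hk0 : (0 : ℝ) < (k : ℝ) + 1 := by positivity
        have h1 : ‖((1 / (p ^ m (k + 1) : ℕ) : ℝ) : UnitAddCircle)‖ ≤ ‖(1 / (p ^ m (k + 1) : ℕ) : ℝ)‖ :=
          QuotientAddGroup.norm_mk_le_norm
        refine h1.trans (le_trans ?_ hk.le)
        rw [Real.norm_of_nonneg (by positivity)]
        exact one_div_le_one_div_of_le hk0 hP
      · rw [show x i = 0 from DirectSum.of_eq_of_ne _ _ _ hi, map_zero, norm_zero]
        exact hε.le
    have hx0 : x = 0 := hsub hx
    have h1 : x (k + 1) = 0 := by rw [hx0]; rfl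
    rw [show x (k + 1) = 1 from DirectSum.of_eq_same _ _] at h1
    have : Fact (1 < p ^ m (k + 1)) := ⟨by omega⟩
    exact one_ne_zero h1
end

section
/- Every abelian group that is unbounded (i.e. not of finite exponent: for no n ∈ ℕ does nx = 0 hold for all x) admits a non-discrete locally quasi-convex UFSS group topology. -/
open Filter Topology

namespace UfssAux

theorem mem_Tplus_iff (x : UnitAddCircle) : x ∈ Tplus ↔ ‖x‖ ≤ 1/4 := by
  constructor
  · rintro ⟨r, hr, rfl⟩
    have h : |r| ≤ 1/4 := abs_le.2 hr
    have := (AddCircle.norm_coe_eq_abs_iff (1:ℝ) (x := r) one_ne_zero).2 (by rw [abs_one]; linarith)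
    exact this.le.trans h
  · intro h
    induction x using QuotientAddGroup.induction_on with
    | H r =>
      refine ⟨r - round r, ?_, ?_⟩
      · have h2 := UnitAddCircle.norm_eq (x := r)
        have h3 : |r - round r| ≤ 1/4 := h2 ▸ h
        exact abs_le.1 h3
      · have h0 : (((round r : ℤ) : ℝ) : UnitAddCircle) = 0 :=
          (AddCircle.coe_eq_zero_iff (1:ℝ)).2 ⟨round r, by simp⟩
        show ((r - round r : ℝ) : UnitAddCircle) = (r : UnitAddCircle)
        rw [AddCircle.coe_sub, h0, sub_zero]

theorem exists_rep (x : UnitAddCircle) : ∃ r : ℝ, (r : UnitAddCircle) = x ∧ ‖x‖ = |r| := by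
  induction x using QuotientAddGroup.induction_on with
  | H r =>
    refine ⟨r - round r, ?_, UnitAddCircle.norm_eq (x := r)⟩
    have h0 : (((round r : ℤ) : ℝ) : UnitAddCircle) = 0 :=
      (AddCircle.coe_eq_zero_iff (1:ℝ)).2 ⟨round r, by simp⟩
    rw [AddCircle.coe_sub, h0, sub_zero]

theorem norm_coe_le (r : ℝ) : ‖(r : UnitAddCircle)‖ ≤ |r| := by
  rw [UnitAddCircle.norm_eq]
  simpa using round_le r 0

theorem norm_small (x : UnitAddCircle) (n : ℕ)
    (h : ∀ k : ℕ, 1 ≤ k → k ≤ n → ‖k • x‖ ≤ 1/4) : n * ‖x‖ ≤ 1/4 := by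
  obtain ⟨r, rfl, hr⟩ := exists_rep x
  rw [hr]
  have key : ∀ k : ℕ, k ≤ n → k * |r| ≤ 1/4 := by
    intro k
    induction k with
    | zero => intro _; norm_num
    | succ k ih =>
      intro hk
      have h1 := ih (by omega)
      have h2 := h 1 le_rfl (by omega)
      rw [one_smul, hr] at h2
      have h3 := h (k+1) (by omega) hk
      have e : (k+1) • (r : UnitAddCircle) = (((k+1 : ℕ) * r : ℝ) : UnitAddCircle) := by
        rw [← AddCircle.coe_nsmul, nsmul_eq_mul]
      have e2 : |((k+1 : ℕ) : ℝ) * r| = ((k+1 : ℕ) : ℝ) * |r| := by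
        rw [abs_mul, abs_of_nonneg (Nat.cast_nonneg _)]
      have h4 := (AddCircle.norm_coe_eq_abs_iff (1:ℝ) (x := ((k+1 : ℕ) * r : ℝ)) one_ne_zero).2 (by
        rw [e2, abs_one]; push_cast; linarith)
      rw [e] at h3
      rw [← e2, ← h4]
      exact h3
  exact key n le_rfl

variable {G : Type*} [AddCommGroup G]

theorem topology_of_chars (X : Set (G →+ UnitAddCircle))
    (sep : ∀ g : G, g ≠ 0 → ∃ χ ∈ X, χ g ≠ 0)
    (small : ∀ ε : ℝ, 0 < ε → ∃ x : G, x ≠ 0 ∧ ∀ χ ∈ X, ‖χ x‖ < ε) :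
    ∃ τ : TopologicalSpace G,
      @IsTopologicalAddGroup G τ _ ∧ @T2Space G τ ∧ τ ≠ ⊥ ∧
      @IsUFSS G _ τ ∧ @IsLocallyQuasiConvex G _ τ := by
  let Φ : G →+ UniformFun X UnitAddCircle :=
    { toFun := fun g => UniformFun.ofFun (fun χ => χ.1 g)
      map_zero' := funext fun χ => map_zero χ.1
      map_add' := fun a b => funext fun χ => map_add χ.1 a b }
  let τ : TopologicalSpace G := TopologicalSpace.induced Φ inferInstance
  have hΦ : Continuous Φ := continuous_induced_dom
  have hgrp : IsTopologicalAddGroup G := topologicalAddGroup_induced Φ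
  have hinj : Function.Injective Φ := by
    refine (injective_iff_map_eq_zero Φ).2 fun g hg => ?_
    by_contra hne
    obtain ⟨χ, hχ, h⟩ := sep g hne
    exact h (congrFun (congrArg UniformFun.toFun hg) ⟨χ, hχ⟩)
  have hbasis : (𝓝 (0 : G)).HasBasis (fun ε : ℝ => 0 < ε)
      (fun ε => {g | ∀ χ ∈ X, ‖χ g‖ < ε}) := by
    have h1 := UniformFun.hasBasis_nhds_zero_of_basis (α := X)
      (Metric.nhds_basis_ball (x := (0 : UnitAddCircle)))
    have h2 := h1.comap Φ
    rw [← map_zero Φ, ← nhds_induced] at h2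
    refine h2.congr (fun _ => Iff.rfl) ?_
    intro ε _
    ext g
    simp only [Set.mem_preimage, Set.mem_setOf_eq, mem_ball_zero_iff]
    exact ⟨fun h χ hχ => h ⟨χ, hχ⟩, fun h χ => h χ.1 χ.2⟩
  have hcont : ∀ χ ∈ X, Continuous χ := by
    intro χ hχ
    exact (UniformFun.uniformContinuous_eval (β := UnitAddCircle)
      (⟨χ, hχ⟩ : X)).continuous.comp hΦ
  let U : Set G := {g | ∀ χ ∈ X, χ g ∈ Tplus}
  have hUn : ∀ n : ℕ, 1 ≤ n → invDiv n U ∈ 𝓝 (0 : G) := by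
    intro n hn
    have hn' : (0:ℝ) < n := by exact_mod_cast hn
    refine hbasis.mem_iff.2 ⟨1 / (4 * n), by positivity, ?_⟩
    intro g hg k hk1 hkn χ hχ
    rw [mem_Tplus_iff, map_nsmul]
    have h1 := hg χ hχ
    rw [lt_div_iff₀ (by positivity)] at h1
    have h2 : (k:ℝ) ≤ n := by exact_mod_cast hkn
    have h3 : ‖k • χ g‖ ≤ k * ‖χ g‖ := norm_nsmul_le
    nlinarith [norm_nonneg (χ g)]
  have hUV : ∀ V ∈ 𝓝 (0 : G), ∃ n : ℕ, 1 ≤ n ∧ invDiv n U ⊆ V := by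
    intro V hV
    obtain ⟨ε, hε, hsub⟩ := hbasis.mem_iff.1 hV
    obtain ⟨n, hn⟩ := exists_nat_gt (1/ε)
    have hn0 : (0:ℝ) < n := lt_trans (by positivity) hn
    refine ⟨n, by exact_mod_cast hn0, fun g hg => hsub ?_⟩
    intro χ hχ
    have h1 := norm_small (χ g) n (fun k h1 h2 => by
      rw [← map_nsmul, ← mem_Tplus_iff]; exact hg k h1 h2 χ hχ)
    rw [div_lt_iff₀ hε] at hn
    by_contra hc
    push Not at hc
    nlinarith
  have hU1 : invDiv 1 U = U := by
    ext g
    constructor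
    · intro h; simpa using h 1 le_rfl le_rfl
    · intro h k h1 h2
      obtain rfl : k = 1 := by omega
      simpa using h
  refine ⟨τ, hgrp, T2Space.of_injective_continuous hinj hΦ, ?_, ⟨U, ?_, ?_, hUn, hUV⟩, ?_⟩
  · intro hbot
    have hd : DiscreteTopology G := ⟨hbot⟩
    have h0 : ({0} : Set G) ∈ 𝓝 (0 : G) := by simp
    obtain ⟨ε, hε, hsub⟩ := hbasis.mem_iff.1 h0
    obtain ⟨x, hx, h⟩ := small ε hε
    exact hx (hsub h)
  · exact hU1 ▸ hUn 1 le_rfl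
  · intro x hx χ hχ
    rw [map_neg, mem_Tplus_iff, norm_neg, ← mem_Tplus_iff]
    exact hx χ hχ
  · intro V hV
    obtain ⟨n, hn, hsub⟩ := hUV V hV
    refine ⟨invDiv n U, ?_, hUn n hn, hsub⟩
    apply Set.Subset.antisymm
    · intro x hx χ hχ
      exact hχ.2 x hx
    · intro x hx k h1 h2 χ hχ
      have := hx (k • χ) ⟨?_, ?_⟩
      · simpa using this
      · exact (hcont χ hχ).const_smul k
      · intro y hy
        have := hy k h1 h2 χ hχ
        simpa using this

theorem exists_char (S : AddSubgroup G) (q : G) (t : UnitAddCircle)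
    (h : ∀ k : ℤ, k • q ∈ S → k • t = 0) :
    ∃ ψ : G →+ UnitAddCircle, (∀ s ∈ S, ψ s = 0) ∧ ψ q = t := by
  let f : ℤ →+ G ⧸ S := zmultiplesHom (G ⧸ S) (q : G ⧸ S)
  have hf : ∀ k : ℤ, f k = ((k • q : G) : G ⧸ S) := fun k => by simp [f]
  let g : ℤ ⧸ f.ker →+ UnitAddCircle :=
    QuotientAddGroup.lift f.ker (zmultiplesHom UnitAddCircle t) (by
      intro k hk
      rw [AddMonoidHom.mem_ker, hf, QuotientAddGroup.eq_zero_iff] at hk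
      simpa using h k hk)
  obtain ⟨φ, hφ⟩ := (Module.Baer.of_divisible UnitAddCircle).extension_property_addMonoidHom
    (QuotientAddGroup.kerLift f) (QuotientAddGroup.kerLift_injective f) g
  refine ⟨φ.comp (QuotientAddGroup.mk' S), ?_, ?_⟩
  · intro s hs
    have : ((s : G) : G ⧸ S) = 0 := (QuotientAddGroup.eq_zero_iff s).2 hs
    simp [this]
  · have h1 := DFunLike.congr_fun hφ ((1 : ℤ) : ℤ ⧸ f.ker)
    simpa [f, g] using h1

theorem coe_ne_zero_of_abs {r : ℝ} (h0 : r ≠ 0) (h : |r| ≤ 1/2) : (r : UnitAddCircle) ≠ 0 := by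
  have := (AddCircle.norm_coe_eq_abs_iff (1:ℝ) (x := r) one_ne_zero).2 (by rw [abs_one]; linarith)
  intro hc
  change ‖(r : UnitAddCircle)‖ = _ at this
  rw [hc, norm_zero] at this
  exact h0 (abs_eq_zero.1 this.symm)

/-- The order of `q` modulo `S`. -/
theorem exists_order (S : AddSubgroup G) (q : G) (d : ℕ) (hd : 0 < d) (hdq : d • q ∈ S) :
    ∃ m : ℕ, 0 < m ∧ m • q ∈ S ∧ ∀ k : ℤ, k • q ∈ S → (m : ℤ) ∣ k := by
  have hk : ∀ k : ℤ, k • q ∈ S ↔ k • (q : G ⧸ S) = 0 := fun k => by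
    rw [← QuotientAddGroup.mk_zsmul, QuotientAddGroup.eq_zero_iff]
  have hfin : 0 < addOrderOf (q : G ⧸ S) := by
    apply addOrderOf_pos_iff.2
    refine isOfFinAddOrder_iff_nsmul_eq_zero.2 ⟨d, hd, ?_⟩
    rw [← QuotientAddGroup.mk_nsmul, QuotientAddGroup.eq_zero_iff]; exact hdq
  refine ⟨addOrderOf (q : G ⧸ S), hfin, ?_, ?_⟩
  · have := (hk (addOrderOf (q : G ⧸ S) : ℤ)).2 (by rw [natCast_zsmul]; exact addOrderOf_nsmul_eq_zero _)
    simpa using this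
  · intro k h
    exact addOrderOf_dvd_iff_zsmul_eq_zero.2 ((hk k).1 h)

theorem zsmul_div (m : ℕ) (hm : 0 < m) (j k : ℤ) (h : (m : ℤ) ∣ k) :
    k • ((j / m : ℝ) : UnitAddCircle) = 0 := by
  obtain ⟨c, rfl⟩ := h
  have hm' : (m : ℝ) ≠ 0 := by positivity
  rw [← AddCircle.coe_zsmul]
  refine (AddCircle.coe_eq_zero_iff (1:ℝ)).2 ⟨c * j, ?_⟩
  simp
  field_simp

theorem not_dvd_div_ne (m : ℕ) (hm : 0 < m) (k : ℤ)
    (h : k • ((1 / m : ℝ) : UnitAddCircle) = 0) : (m : ℤ) ∣ k := by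
  have hm' : (m : ℝ) ≠ 0 := by positivity
  rw [← AddCircle.coe_zsmul] at h
  obtain ⟨c, hc⟩ := (AddCircle.coe_eq_zero_iff (1:ℝ)).1 h
  simp at hc
  field_simp at hc
  refine ⟨c, ?_⟩
  have : (c * m : ℝ) = k := by linarith
  have : c * m = k := by exact_mod_cast this
  linarith

theorem exists_sep (S : AddSubgroup G) (q : G) (hq : q ∉ S) :
    ∃ ψ : G →+ UnitAddCircle, (∀ s ∈ S, ψ s = 0) ∧ ψ q ≠ 0 := by
  by_cases h : ∃ d : ℕ, 0 < d ∧ d • q ∈ S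
  · obtain ⟨d, hd, hdq⟩ := h
    obtain ⟨m, hm, hmq, hdiv⟩ := exists_order S q d hd hdq
    obtain ⟨ψ, h1, h2⟩ := exists_char S q ((1 / m : ℝ) : UnitAddCircle) (fun k hk => by
      simpa using zsmul_div m hm 1 k (hdiv k hk))
    refine ⟨ψ, h1, ?_⟩
    rw [h2]
    intro hc
    have := not_dvd_div_ne m hm 1 (by rw [one_smul]; exact hc)
    have hm1 : m = 1 := by
      have := Int.eq_one_of_dvd_one (by positivity) this
      exact_mod_cast this
    subst hm1
    exact hq (by simpa using hmq)
  · push Not at h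
    obtain ⟨ψ, h1, h2⟩ := exists_char S q ((1 / 2 : ℝ) : UnitAddCircle) (fun k hk => by
      have : k = 0 := by
        by_contra hk0
        refine h k.natAbs (by omega) ?_
        rcases Int.natAbs_eq k with e | e
        · rw [e, natCast_zsmul] at hk; exact hk
        · rw [e, neg_smul, natCast_zsmul] at hk; exact neg_mem_iff.1 hk
      simp [this])
    exact ⟨ψ, h1, by rw [h2]; exact coe_ne_zero_of_abs (by norm_num) (by norm_num [abs_of_pos])⟩

theorem step (F : AddSubgroup G) (x : G) (n : ℕ) (d : ℕ) (hd : 0 < d) (hdx : d • x ∈ F)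
    (hx : ∀ k : ℕ, 1 ≤ k → k ≤ n → k • x ∉ F) (χ : G →+ UnitAddCircle) :
    ∃ χ' : G →+ UnitAddCircle, (∀ s ∈ F, χ' s = χ s) ∧ ‖χ' x‖ ≤ 1 / (n + 1) := by
  obtain ⟨m, hm, hmx, hdiv⟩ := exists_order F x d hd hdx
  have hmn : n + 1 ≤ m := by
    by_contra hc
    exact hx m hm (by omega) hmx
  have hm' : (0:ℝ) < m := by exact_mod_cast hm
  obtain ⟨r, hr, -⟩ := exists_rep (χ x)
  obtain ⟨ψ, h1, h2⟩ := exists_char F x ((round (m * r) / m : ℝ) : UnitAddCircle) (fun k hk =>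
    zsmul_div m hm _ k (hdiv k hk))
  refine ⟨χ - ψ, fun s hs => by simp [h1 s hs], ?_⟩
  rw [AddMonoidHom.sub_apply, h2, ← hr, ← AddCircle.coe_sub]
  refine (norm_coe_le _).trans ?_
  have e : r - round (m * r) / m = (m * r - round (m * r)) / m := by field_simp
  rw [e, abs_div, abs_of_pos hm']
  have h3 := abs_sub_round ((m:ℝ) * r)
  have h4 : (n:ℝ) + 1 ≤ m := by exact_mod_cast hmn
  rw [div_le_div_iff₀ hm' (by positivity)]
  nlinarith [abs_nonneg ((m:ℝ) * r - round (m * r))]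

theorem case_nontorsion (h : G) (hh : ∀ k : ℤ, k • h = 0 → k = 0) :
    ∃ x : ℕ → G, (∀ n, x n ≠ 0) ∧ ∀ g : G, g ≠ 0 → ∃ χ : G →+ UnitAddCircle,
      (∀ n : ℕ, ‖χ (x n)‖ ≤ 1 / (n + 1)) ∧ χ g ≠ 0 := by
  refine ⟨fun n => ((n.factorial : ℕ) : ℤ) • h, fun n hn => ?_, fun g hg => ?_⟩
  · have := hh _ hn
    exact n.factorial_ne_zero (by exact_mod_cast this)
  by_cases hgS : g ∈ AddSubgroup.zmultiples h
  · obtain ⟨k, rfl⟩ := AddSubgroup.mem_zmultiples_iff.1 hgS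
    have hk : k ≠ 0 := by rintro rfl; simp at hg
    let m := k.natAbs + 1
    obtain ⟨χ, -, hχ⟩ := exists_char (⊥ : AddSubgroup G) h ((1 / (m.factorial : ℕ) : ℝ) : UnitAddCircle)
      (fun k hk => by rw [hh k (by simpa using hk), zero_smul])
    refine ⟨χ, fun n => ?_, ?_⟩
    · rw [map_zsmul, hχ]
      rcases le_or_gt m n with hmn | hmn
      · have := zsmul_div m.factorial m.factorial_pos 1 ((n.factorial : ℕ) : ℤ)
          (by exact_mod_cast Nat.factorial_dvd_factorial hmn)
        rw [Int.cast_one] at this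
        rw [this, norm_zero]; positivity
      · rw [← AddCircle.coe_zsmul]
        refine (norm_coe_le _).trans ?_
        have h1 : (n+1).factorial ≤ m.factorial := Nat.factorial_le hmn
        rw [Nat.factorial_succ] at h1
        have h2 : ((n:ℝ)+1) * n.factorial ≤ m.factorial := by exact_mod_cast h1
        have h3 : (0:ℝ) < m.factorial := by exact_mod_cast m.factorial_pos
        rw [abs_of_nonneg (by simp only [zsmul_eq_mul]; positivity), zsmul_eq_mul, mul_one_div,
          div_le_div_iff₀ h3 (by positivity)]
        push_cast
        linarith
    · intro hc
      rw [map_zsmul, hχ] at hc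
      have h1 := not_dvd_div_ne _ m.factorial_pos k hc
      have h2 := Nat.le_of_dvd (by omega) (Int.natCast_dvd.1 h1)
      have h3 := Nat.self_le_factorial m
      omega
  · obtain ⟨ψ, h1, h2⟩ := exists_sep _ g hgS
    refine ⟨ψ, fun n => ?_, h2⟩
    rw [h1 _ (AddSubgroup.zsmul_mem_zmultiples h _), norm_zero]
    positivity

theorem exists_limit (c : UnitAddCircle) (g : G) (x : ℕ → G)
    (h : ∀ n : ℕ, ∃ χ : G →+ UnitAddCircle, χ g = c ∧ ∀ i < n, ‖χ (x i)‖ ≤ 1 / (i + 1)) :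
    ∃ χ : G →+ UnitAddCircle, χ g = c ∧ ∀ i : ℕ, ‖χ (x i)‖ ≤ 1 / (i + 1) := by
  choose χ h1 h2 using h
  let u : Ultrafilter ℕ := hyperfilter ℕ
  obtain ⟨Φ, -, hΦ⟩ := isCompact_univ.ultrafilter_le_nhds
    (u.map (fun n => (χ n : G → UnitAddCircle))) (by simp)
  have hT : Tendsto (fun n => (χ n : G → UnitAddCircle)) u (𝓝 Φ) := hΦ
  rw [tendsto_pi_nhds] at hT
  let ψ : G →+ UnitAddCircle := AddMonoidHom.mk' Φ (fun a b => by
    refine tendsto_nhds_unique (hT (a+b)) ?_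
    simpa using (hT a).add (hT b))
  refine ⟨ψ, ?_, fun i => ?_⟩
  · refine tendsto_nhds_unique (hT g) ?_
    simp [h1]
  · refine le_of_tendsto (hT (x i)).norm ?_
    have : ∀ᶠ n in (atTop : Filter ℕ), ‖χ n (x i)‖ ≤ 1 / (i + 1) := by
      filter_upwards [eventually_gt_atTop i] with n hn using h2 n i hn
    exact this.filter_mono Nat.hyperfilter_le_atTop

theorem case_torsion (htor : ∀ x : G, ∃ d : ℕ, 0 < d ∧ d • x = 0)
    (hub : ¬ ∃ n : ℕ, 1 ≤ n ∧ ∀ x : G, n • x = 0) :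
    ∃ x : ℕ → G, (∀ n, x n ≠ 0) ∧ ∀ g : G, g ≠ 0 → ∃ χ : G →+ UnitAddCircle,
      (∀ n : ℕ, ‖χ (x n)‖ ≤ 1 / (n + 1)) ∧ χ g ≠ 0 := by
  let P : AddSubgroup G → Prop := fun F => ∀ N : ℕ, 1 ≤ N → ∃ y : G, N • y ∉ F
  have hP0 : P ⊥ := by
    intro N hN
    by_contra hc
    push Not at hc
    exact hub ⟨N, hN, fun x => by simpa using hc x⟩
  have hPs : ∀ F, P F → ∀ x, P (F ⊔ AddSubgroup.zmultiples x) := by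
    intro F hF x N hN
    obtain ⟨d, hd, hdx⟩ := htor x
    obtain ⟨y, hy⟩ := hF (d * N) (Nat.mul_pos hd hN)
    refine ⟨y, fun hc => hy ?_⟩
    obtain ⟨f, hf, z, hz, e⟩ := AddSubgroup.mem_sup.1 hc
    obtain ⟨k, rfl⟩ := AddSubgroup.mem_zmultiples_iff.1 hz
    rw [mul_smul, ← e, smul_add, smul_comm, hdx, smul_zero, add_zero]
    exact F.nsmul_mem hf d
  have hex : ∀ (n : ℕ) (F : {F // P F}), ∃ x : G, ∀ k : ℕ, 1 ≤ k → k ≤ n + 1 → k • x ∉ F.1 := by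
    rintro n ⟨F, hF⟩
    obtain ⟨y, hy⟩ := hF (n+1).factorial (Nat.factorial_pos _)
    refine ⟨y, fun k h1 h2 hc => hy ?_⟩
    obtain ⟨c, hc'⟩ := Nat.dvd_factorial h1 h2
    rw [hc', mul_comm, mul_smul]
    exact F.nsmul_mem hc c
  choose f hf using hex
  let F : ℕ → {F // P F} := fun n => Nat.rec ⟨⊥, hP0⟩
    (fun n F => ⟨F.1 ⊔ AddSubgroup.zmultiples (f n F), hPs F.1 F.2 _⟩) n
  let x : ℕ → G := fun n => f n (F n)
  have hF0 : (F 0).1 = ⊥ := rfl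
  have hFs : ∀ n, (F (n+1)).1 = (F n).1 ⊔ AddSubgroup.zmultiples (x n) := fun n => rfl
  have hx : ∀ n k : ℕ, 1 ≤ k → k ≤ n + 1 → k • x n ∉ (F n).1 := fun n => hf n (F n)
  clear_value x F
  have hmono : Monotone fun n => (F n).1 :=
    monotone_nat_of_le_succ fun n => by rw [hFs]; exact le_sup_left
  have hxF : ∀ n, x n ∈ (F (n+1)).1 := fun n => by
    rw [hFs]; exact AddSubgroup.mem_sup_right (AddSubgroup.mem_zmultiples _)
  refine ⟨x, fun n hn => hx n 1 le_rfl (by omega) (by simp [hn]), fun g hg => ?_⟩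
  by_cases hgF : ∃ n, g ∈ (F n).1
  · classical
    let N := Nat.find hgF
    have hN : g ∈ (F N).1 := Nat.find_spec hgF
    have hNmin : ∀ m < N, g ∉ (F m).1 := fun m hm => Nat.find_min hgF hm
    clear_value N
    obtain _ | N := N
    · rw [hF0] at hN; exact absurd (by simpa using hN) hg
    have hgN := hNmin N (by omega)
    obtain ⟨d, hd, hdx⟩ := htor (x N)
    obtain ⟨m, hm, hmx, hdiv⟩ := exists_order (F N).1 (x N) d hd (by simp [hdx])
    have hmn : N + 1 ≤ m := by
      by_contra hc
      exact hx N m hm (by omega) hmx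
    obtain ⟨χ0, h1, h2⟩ := exists_char (F N).1 (x N) ((1 / m : ℝ) : UnitAddCircle) (fun k hk => by
      simpa using zsmul_div m hm 1 k (hdiv k hk))
    have hc0 : χ0 g ≠ 0 := by
      rw [hFs] at hN
      obtain ⟨s, hs, z, hz, e⟩ := AddSubgroup.mem_sup.1 hN
      obtain ⟨k, rfl⟩ := AddSubgroup.mem_zmultiples_iff.1 hz
      intro hc
      rw [← e, map_add, h1 s hs, zero_add, map_zsmul, h2] at hc
      obtain ⟨c, rfl⟩ := not_dvd_div_ne m hm k hc
      apply hgN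
      rw [← e, mul_comm, mul_smul, natCast_zsmul]
      exact (F N).1.add_mem hs ((F N).1.zsmul_mem hmx c)
    have hind : ∀ n, N + 1 ≤ n → ∃ χ : G →+ UnitAddCircle,
        χ g = χ0 g ∧ ∀ i < n, ‖χ (x i)‖ ≤ 1 / (i + 1) := by
      intro n hn
      induction n, hn using Nat.le_induction with
      | base =>
        refine ⟨χ0, rfl, fun i hi => ?_⟩
        rcases Nat.lt_succ_iff_lt_or_eq.1 hi with hi | rfl
        · rw [h1 _ (hmono (show i + 1 ≤ N from hi) (hxF i)), norm_zero]; positivity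
        · rw [h2]
          refine (norm_coe_le _).trans ?_
          rw [abs_of_nonneg (by positivity)]
          apply one_div_le_one_div_of_le (by positivity)
          exact_mod_cast hmn
      | succ n hn ih =>
        obtain ⟨χ, ha, hb⟩ := ih
        obtain ⟨d, hd, hdx⟩ := htor (x n)
        obtain ⟨χ', hc, hd⟩ := step (F n).1 (x n) n d hd (by simp [hdx])
          (fun k h1 h2 => hx n k h1 (by omega)) χ
        refine ⟨χ', by rw [hc g (hmono hn hN), ha], fun i hi => ?_⟩
        rcases Nat.lt_succ_iff_lt_or_eq.1 hi with hi | rfl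
        · rw [hc _ (hmono (show i + 1 ≤ n from hi) (hxF i))]; exact hb i hi
        · exact hd
    obtain ⟨χ, ha, hb⟩ := exists_limit (χ0 g) g x (fun n => by
      obtain ⟨χ, ha, hb⟩ := hind (max n (N+1)) (le_max_right _ _)
      exact ⟨χ, ha, fun i hi => hb i (lt_of_lt_of_le hi (le_max_left _ _))⟩)
    exact ⟨χ, hb, by rw [ha]; exact hc0⟩
  · have hgS : g ∉ ⨆ n, (F n).1 := by
      rw [AddSubgroup.mem_iSup_of_directed hmono.directed_le]
      exact hgF
    obtain ⟨ψ, h1, h2⟩ := exists_sep _ g hgS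
    refine ⟨ψ, fun n => ?_, h2⟩
    rw [h1 _ (AddSubgroup.mem_iSup_of_mem (n+1) (hxF n)), norm_zero]
    positivity

theorem exists_seq (hub : ¬ ∃ n : ℕ, 1 ≤ n ∧ ∀ x : G, n • x = 0) :
    ∃ x : ℕ → G, (∀ n, x n ≠ 0) ∧ ∀ g : G, g ≠ 0 → ∃ χ : G →+ UnitAddCircle,
      (∀ n : ℕ, ‖χ (x n)‖ ≤ 1 / (n + 1)) ∧ χ g ≠ 0 := by
  by_cases htor : ∀ x : G, ∃ d : ℕ, 0 < d ∧ d • x = 0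
  · exact case_torsion htor hub
  · push Not at htor
    obtain ⟨h, hh⟩ := htor
    refine case_nontorsion h fun k hk => ?_
    by_contra hk0
    refine hh k.natAbs (by omega) ?_
    rcases Int.natAbs_eq k with e | e
    · rw [e] at hk; simpa using hk
    · rw [e] at hk; simpa using hk

end UfssAux

/-- Every unbounded abelian group (not of finite exponent) admits a non-discrete locally
quasi-convex UFSS group topology. -/
theorem unbounded_admits_nondiscrete_lqc_ufss_topology (G : Type*) [AddCommGroup G]
    (hub : ¬ ∃ n : ℕ, 1 ≤ n ∧ ∀ x : G, n • x = 0) :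
    ∃ τ : TopologicalSpace G,
      @IsTopologicalAddGroup G τ _ ∧ @T2Space G τ ∧ τ ≠ ⊥ ∧
      @IsUFSS G _ τ ∧ @IsLocallyQuasiConvex G _ τ := by
  obtain ⟨x, hx, hsep⟩ := UfssAux.exists_seq hub
  refine UfssAux.topology_of_chars {χ | ∀ n : ℕ, ‖χ (x n)‖ ≤ 1 / (n + 1)} hsep fun ε hε => ?_
  obtain ⟨n, hn⟩ := exists_nat_one_div_lt hε
  exact ⟨x n, hx n, fun χ hχ => lt_of_le_of_lt (hχ n) hn⟩
end

section
/- For a Hausdorff topological abelian group G the following conditions are equivalent: (a) G is almost minimal; (b) there exists a GTG neighborhood U of 0 such that G is U-locally minimal and the quotient group G/U_∞ is UFSS; (c) there exists a GTG neighborhood U of 0 such that G is U-locally minimal and for every neighborhood V of 0 there exist n ∈ ℕ and a finite subset F ⊆ U_∞ with (1/n)U ⊆ F + V. -/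
open scoped Pointwise

/-- `U_∞ = {x : nx ∈ U for all n ∈ ℕ}`. -/
def uInf {G : Type*} [AddGroup G] (U : Set G) : Set G :=
  {x | ∀ n : ℕ, 1 ≤ n → n • x ∈ U}

/-- A symmetric subset `U ∋ 0` is a *GTG set* if the sets `(1/n)U` form a neighborhood
basis at `0` of a (not necessarily Hausdorff) group topology; equivalently,
`(1/m)U + (1/m)U ⊆ U` for some `m ∈ ℕ`. -/
def IsGTG {G : Type*} [AddGroup G] (U : Set G) : Prop :=
  (0 : G) ∈ U ∧ (∀ x ∈ U, -x ∈ U) ∧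
    ∃ m : ℕ, 1 ≤ m ∧ ∀ x ∈ invDiv m U, ∀ y ∈ invDiv m U, x + y ∈ U

/-- `(G, τ)` is *`U`-locally minimal* if the only Hausdorff group topology `σ` coarser
than `τ` for which `U` is still a `σ`-neighborhood of `0` is `τ` itself. -/
def LocallyMinimalAt (G : Type*) [AddGroup G] [τ : TopologicalSpace G] (U : Set G) : Prop :=
  ∀ σ : TopologicalSpace G, τ ≤ σ →
    @IsTopologicalAddGroup G σ _ → @T2Space G σ → U ∈ @nhds G σ 0 → σ = τ

/-- A Hausdorff topological abelian group `(G, τ)` is *minimal* if there is no Hausdorff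
group topology on `G` strictly coarser than `τ`. -/
def IsMinimal (G : Type*) [AddGroup G] [τ : TopologicalSpace G] : Prop :=
  ∀ σ : TopologicalSpace G, τ ≤ σ →
    @IsTopologicalAddGroup G σ _ → @T2Space G σ → σ = τ

/-- A Hausdorff topological abelian group is *almost minimal* if it has a closed minimal
subgroup `N` such that `G/N` is UFSS. -/
def IsAlmostMinimal (G : Type*) [AddCommGroup G] [TopologicalSpace G] : Prop :=
  ∃ N : AddSubgroup G, IsClosed (N : Set G) ∧ IsMinimal ↥N ∧ IsUFSS (G ⧸ N)

section helpers
open Topology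

theorem t2_of_sep {G : Type*} [AddCommGroup G] [TopologicalSpace G] [IsTopologicalAddGroup G]
    (hsep : ∀ x : G, x ≠ 0 → ∃ V ∈ 𝓝 (0 : G), x ∉ V) : T2Space G := by
  have : T1Space G := by
    refine IsTopologicalAddGroup.t1Space G ?_
    rw [← isOpen_compl_iff, isOpen_iff_mem_nhds]
    intro x hx
    obtain ⟨V, hV, hi⟩ := hsep (-x) (by simpa using hx)
    have : Filter.Tendsto (fun y => y - x) (𝓝 x) (𝓝 0) := by
      have : Continuous (fun y => y - x) := by fun_prop
      simpa using this.tendsto x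
    filter_upwards [this hV] with y hy h0'
    simp at h0'
    subst h0'
    simp at hy
    exact hi hy
  infer_instance

theorem le_of_zero_nhds_le {G : Type*} [AddCommGroup G] {τ σ : TopologicalSpace G}
    (h1 : @IsTopologicalAddGroup G τ _) (h2 : @IsTopologicalAddGroup G σ _)
    (h : @nhds G τ 0 ≤ @nhds G σ 0) : τ ≤ σ := by
  refine le_of_nhds_le_nhds fun x => ?_
  rw [← @map_add_left_nhds_zero G τ _ _ x, ← @map_add_left_nhds_zero G σ _ _ x]
  exact Filter.map_mono h

theorem locMin_apply {G : Type*} [AddCommGroup G] [τ : TopologicalSpace G]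
    [inst : IsTopologicalAddGroup G] {U : Set G} (hmin : LocallyMinimalAt G U)
    {ι : Type*} [Nonempty ι] (B : ι → Set G)
    (h0 : ∀ i, (0 : G) ∈ B i)
    (hneg : ∀ i, ∃ j, ∀ x ∈ B j, -x ∈ B i)
    (hadd : ∀ i, ∃ j, ∀ x ∈ B j, ∀ y ∈ B j, x + y ∈ B i)
    (hdir : ∀ i j, ∃ k, B k ⊆ B i ∧ B k ⊆ B j)
    (hsep : ∀ x : G, x ≠ 0 → ∃ V ∈ 𝓝 (0 : G), ∃ i, x ∉ V + B i)
    (hU : ∃ V ∈ 𝓝 (0 : G), ∃ i, V + B i ⊆ U) :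
    ∀ V ∈ 𝓝 (0 : G), ∃ i, B i ⊆ V := by
  let bas : AddGroupFilterBasis G := AddGroupFilterBasis.mk
    { sets := {S | ∃ V ∈ 𝓝 (0 : G), ∃ i, V + B i ⊆ S}
      nonempty := ⟨Set.univ, Set.univ, Filter.univ_mem, Classical.arbitrary ι, Set.subset_univ _⟩
      inter_sets := by
        rintro S T ⟨V, hV, i, hi⟩ ⟨W, hW, j, hj⟩
        obtain ⟨k, hk1, hk2⟩ := hdir i j
        refine ⟨S ∩ T, ⟨V ∩ W, Filter.inter_mem hV hW, k, ?_⟩, subset_rfl⟩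
        rintro _ ⟨v, hv, b, hb, rfl⟩
        exact ⟨hi ⟨v, hv.1, b, hk1 hb, rfl⟩, hj ⟨v, hv.2, b, hk2 hb, rfl⟩⟩ }
    (by
      rintro S ⟨V, hV, i, hi⟩
      exact hi ⟨0, mem_of_mem_nhds hV, 0, h0 i, by simp⟩)
    (by
      rintro S ⟨V, hV, i, hi⟩
      obtain ⟨W, hW, hWV⟩ := exists_nhds_zero_half hV
      obtain ⟨j, hj⟩ := hadd i
      refine ⟨W + B j, ⟨W, hW, j, subset_rfl⟩, ?_⟩
      rintro _ ⟨_, ⟨v, hv, b, hb, rfl⟩, _, ⟨v', hv', b', hb', rfl⟩, rfl⟩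
      exact hi ⟨v + v', hWV _ hv _ hv', b + b', hj _ hb _ hb', by simp; abel⟩)
    (by
      rintro S ⟨V, hV, i, hi⟩
      obtain ⟨j, hj⟩ := hneg i
      refine ⟨-V + B j, ⟨-V, neg_mem_nhds_zero _ hV, j, subset_rfl⟩, ?_⟩
      rintro _ ⟨v, hv, b, hb, rfl⟩
      exact hi ⟨-v, hv, -b, hj _ hb, by simp; abel⟩)
    (by
      rintro x S hS
      exact ⟨S, hS, fun y hy => by simpa using hy⟩)
  let σ := bas.topology
  have hσ : @IsTopologicalAddGroup G σ _ := bas.isTopologicalAddGroup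
  have hmem : ∀ S, S ∈ @nhds G σ 0 ↔ ∃ V ∈ @nhds G τ 0, ∃ i, V + B i ⊆ S := by
    intro S
    have := bas.nhds_zero_hasBasis.mem_iff (t := S)
    refine this.trans ⟨?_, ?_⟩
    · rintro ⟨T, ⟨V, hV, i, hi⟩, hT⟩
      exact ⟨V, hV, i, hi.trans hT⟩
    · rintro ⟨V, hV, i, hi⟩
      exact ⟨V + B i, ⟨V, hV, i, subset_rfl⟩, hi⟩
  have hle : τ ≤ σ := by
    have hτ : @IsTopologicalAddGroup G τ _ := inst
    apply le_of_zero_nhds_le hτ hσ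
    intro S hS
    obtain ⟨V, hV, i, hi⟩ := (hmem S).1 hS
    exact Filter.mem_of_superset hV fun v hv => hi ⟨v, hv, 0, h0 i, by simp⟩
  have hT2 : @T2Space G σ := by
    apply t2_of_sep
    intro x hx
    obtain ⟨V, hV, i, hi⟩ := hsep x hx
    exact ⟨_, (hmem _).2 ⟨V, hV, i, subset_rfl⟩, hi⟩
  have hst := hmin σ hle hσ hT2 ((hmem U).2 hU)
  intro V hV
  rw [show @nhds G τ 0 = @nhds G σ 0 by rw [hst]] at hV
  obtain ⟨W, hW, i, hi⟩ := (hmem V).1 hV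
  exact ⟨i, fun b hb => hi ⟨0, @mem_of_mem_nhds G τ 0 W hW, b, hb, by simp⟩⟩

theorem isMinimal_iff {G : Type*} [AddCommGroup G] [τ : TopologicalSpace G] :
    IsMinimal G ↔ LocallyMinimalAt G (Set.univ : Set G) := by
  unfold IsMinimal LocallyMinimalAt
  refine forall_congr' fun σ => ?_
  simp

theorem coarse_eq {G : Type*} [AddCommGroup G] {τ σ : TopologicalSpace G}
    (h1 : @IsTopologicalAddGroup G τ _) (h2 : @IsTopologicalAddGroup G σ _) (hle : τ ≤ σ)
    (h : ∀ V ∈ @nhds G τ 0, V ∈ @nhds G σ 0) : σ = τ := by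
  apply IsTopologicalAddGroup.ext h2 h1
  exact le_antisymm h (nhds_mono hle)

/-- Closed subgroups squeezed in `U` are minimal. -/
theorem minimal_of_closed {G : Type*} [AddCommGroup G] [τ : TopologicalSpace G]
    [IsTopologicalAddGroup G] {U : Set G} (hmin : LocallyMinimalAt G U) (N : AddSubgroup G)
    (hN : IsClosed (N : Set G)) (hNU : ∃ V ∈ 𝓝 (0 : G), V + (N : Set G) ⊆ U) :
    IsMinimal N := by
  intro σ hle hσ hT2
  have : Nonempty {A : Set N // A ∈ @nhds N σ 0} := ⟨⟨Set.univ, Filter.univ_mem⟩⟩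
  have key := locMin_apply hmin (ι := {A : Set N // A ∈ @nhds N σ 0})
    (fun A => Subtype.val '' A.1) ?_ ?_ ?_ ?_ ?_ ?_
  · apply coarse_eq inferInstance hσ hle
    intro V hV
    rw [nhds_subtype_eq_comap] at hV
    obtain ⟨W, hW, hWV⟩ := hV
    obtain ⟨⟨A, hA⟩, hAW⟩ := key W hW
    refine Filter.mem_of_superset hA fun a ha => hWV (hAW ⟨a, ha, rfl⟩)
  · rintro ⟨A, hA⟩
    exact ⟨0, mem_of_mem_nhds hA, rfl⟩
  · rintro ⟨A, hA⟩
    refine ⟨⟨-A, neg_mem_nhds_zero _ hA⟩, ?_⟩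
    rintro _ ⟨a, ha, rfl⟩
    exact ⟨-a, ha, rfl⟩
  · rintro ⟨A, hA⟩
    obtain ⟨W, hW, hWV⟩ := exists_nhds_zero_half hA
    refine ⟨⟨W, hW⟩, ?_⟩
    rintro _ ⟨a, ha, rfl⟩ _ ⟨b, hb, rfl⟩
    exact ⟨a + b, hWV _ ha _ hb, rfl⟩
  · rintro ⟨A, hA⟩ ⟨B, hB⟩
    exact ⟨⟨A ∩ B, Filter.inter_mem hA hB⟩, Set.image_mono Set.inter_subset_left,
      Set.image_mono Set.inter_subset_right⟩
  · intro x hx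
    by_cases hxN : x ∈ N
    · have : ∃ A ∈ @nhds N σ 0, (⟨x, hxN⟩ : N) ∉ A := by
        refine ⟨{⟨x, hxN⟩}ᶜ, ?_, by simp⟩
        apply (@isOpen_compl_singleton N σ _ _).mem_nhds
        simp [Subtype.ext_iff]
        exact fun h => hx h.symm
      obtain ⟨A, hA, hxA⟩ := this
      obtain ⟨W, hW, hWV⟩ := exists_nhds_zero_half hA
      have hW' : W ∈ @nhds N instTopologicalSpaceSubtype 0 := nhds_mono hle hW
      rw [nhds_subtype_eq_comap] at hW'
      obtain ⟨V, hV, hVW⟩ := hW'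
      refine ⟨V, hV, ⟨W, hW⟩, ?_⟩
      rintro ⟨v, hv, _, ⟨a, ha, rfl⟩, h⟩
      have hvN : v ∈ N := by
        have : v = x - a := by rw [← h]; simp
        rw [this]; exact N.sub_mem hxN a.2
      apply hxA
      have : (⟨x, hxN⟩ : N) = ⟨v, hvN⟩ + a := by ext; simp [← h]
      rw [this]
      exact hWV _ (hVW hv) _ ha
    · have : (fun v => x - v) ⁻¹' (N : Set G)ᶜ ∈ 𝓝 (0 : G) := by
        apply (hN.isOpen_compl.preimage (by fun_prop)).mem_nhds
        simpa using hxN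
      refine ⟨_, this, ⟨Set.univ, Filter.univ_mem⟩, ?_⟩
      rintro ⟨v, hv, _, ⟨a, ha, rfl⟩, h⟩
      apply hv
      simp only [SetLike.mem_coe]
      rw [← h]; simp
  · obtain ⟨V, hV, h⟩ := hNU
    refine ⟨V, hV, ⟨Set.univ, Filter.univ_mem⟩, fun x hx => h ?_⟩
    obtain ⟨v, hv, _, ⟨a, ha, rfl⟩, rfl⟩ := hx
    exact ⟨v, hv, a, a.2, rfl⟩


/-- `A` is covered by finitely many translates of `V`. -/
def Cov {G : Type*} [AddCommGroup G] (A V : Set G) : Prop :=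
  ∃ F : Set G, F.Finite ∧ ∀ a ∈ A, ∃ f ∈ F, a - f ∈ V

section gtg
variable {G : Type*} [AddCommGroup G]

theorem invDiv_nhds [TopologicalSpace G] [IsTopologicalAddGroup G] {U : Set G}
    (hU : U ∈ 𝓝 (0 : G)) (n : ℕ) : invDiv n U ∈ 𝓝 (0 : G) := by
  have : ∀ᶠ x in 𝓝 (0 : G), ∀ k ∈ Finset.Icc 1 n, k • x ∈ U := by
    rw [Filter.eventually_all_finset]
    intro k _
    have : Filter.Tendsto (fun x : G => k • x) (𝓝 0) (𝓝 0) := by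
      have : Continuous (fun x : G => k • x) := by fun_prop
      simpa using this.tendsto 0
    exact this hU
  filter_upwards [this] with x hx k h1 h2
  exact hx k (by simp [h1, h2])

theorem invDiv_add {U : Set G} {m : ℕ} (hm : 1 ≤ m)
    (h : ∀ x ∈ invDiv m U, ∀ y ∈ invDiv m U, x + y ∈ U) (n : ℕ) {x y : G}
    (hx : x ∈ invDiv (m * n) U) (hy : y ∈ invDiv (m * n) U) : x + y ∈ invDiv n U := by
  intro k h1 h2
  rw [smul_add]
  apply h
  · intro l hl1 hl2
    rw [smul_smul]
    exact hx _ (Nat.mul_pos hl1 h1) (Nat.mul_le_mul hl2 h2)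
  · intro l hl1 hl2
    rw [smul_smul]
    exact hy _ (Nat.mul_pos hl1 h1) (Nat.mul_le_mul hl2 h2)

theorem uInf_sub_invDiv {U : Set G} (n : ℕ) : uInf U ⊆ invDiv n U :=
  fun _ hx k h1 _ => hx k h1

theorem mem_uInf_of {U : Set G} {x : G} (h : ∀ n, 1 ≤ n → x ∈ invDiv n U) : x ∈ uInf U :=
  fun n hn => h n hn n hn le_rfl

theorem exists_uInf_subgroup {U : Set G} (hU : IsGTG U) :
    ∃ N : AddSubgroup G, (N : Set G) = uInf U := by
  obtain ⟨h0, hs, m, hm, h⟩ := hU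
  refine ⟨⟨⟨⟨uInf U, ?_⟩, ?_⟩, ?_⟩, rfl⟩
  · intro x y hx hy
    exact mem_uInf_of fun n hn => invDiv_add hm h n (uInf_sub_invDiv _ hx) (uInf_sub_invDiv _ hy)
  · intro n hn
    simpa using h0
  · intro x hx n hn
    rw [smul_neg]
    exact hs _ (hx n hn)

theorem isClosed_uInf [TopologicalSpace G] [IsTopologicalAddGroup G] {U : Set G} (hU : IsGTG U)
    (hU0 : U ∈ 𝓝 (0 : G)) : IsClosed (uInf U) := by
  obtain ⟨h0, hs, m, hm, h⟩ := hU
  rw [← closure_subset_iff_isClosed]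
  intro x hx
  refine mem_uInf_of fun n hn => ?_
  have h1 : (fun y => x - y) ⁻¹' (invDiv (m * n) U) ∈ 𝓝 x := by
    have : Continuous (fun y => x - y) := by fun_prop
    apply this.continuousAt.preimage_mem_nhds
    simpa using invDiv_nhds hU0 (m * n)
  obtain ⟨y, hy, hy'⟩ := mem_closure_iff_nhds.1 hx _ h1
  have := invDiv_add hm h n hy (uInf_sub_invDiv (m * n) hy')
  simpa using this

theorem isMinimal_uInf [TopologicalSpace G] [IsTopologicalAddGroup G] {U : Set G} (hU : IsGTG U)
    (hU0 : U ∈ 𝓝 (0 : G)) (hmin : LocallyMinimalAt G U) (N : AddSubgroup G)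
    (hN : (N : Set G) = uInf U) : IsMinimal N := by
  apply minimal_of_closed hmin N (hN ▸ isClosed_uInf hU hU0)
  obtain ⟨h0, hs, m, hm, h⟩ := hU
  refine ⟨_, invDiv_nhds hU0 m, ?_⟩
  rw [hN]
  rintro _ ⟨x, hx, y, hy, rfl⟩
  exact h _ hx _ (uInf_sub_invDiv m hy)

theorem b_to_a [TopologicalSpace G] [IsTopologicalAddGroup G] 
    (hb : ∃ U ∈ nhds (0 : G), IsGTG U ∧ LocallyMinimalAt G U ∧
        ∃ N : AddSubgroup G, (N : Set G) = uInf U ∧ IsUFSS (G ⧸ N)) : IsAlmostMinimal G := by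
  obtain ⟨U, hU0, hU, hmin, N, hN, hq⟩ := hb
  exact ⟨N, hN ▸ isClosed_uInf hU hU0, isMinimal_uInf hU hU0 hmin N hN, hq⟩

theorem c_to_a [TopologicalSpace G] [IsTopologicalAddGroup G] 
    (hb : ∃ U ∈ nhds (0 : G), IsGTG U ∧ LocallyMinimalAt G U ∧
        ∀ V ∈ nhds (0 : G), ∃ n : ℕ, 1 ≤ n ∧
          ∃ F : Finset G, (F : Set G) ⊆ uInf U ∧ invDiv n U ⊆ (F : Set G) + V) :
    IsAlmostMinimal G := by
  obtain ⟨U, hU0, hU, hmin, hc⟩ := hb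
  obtain ⟨N, hN⟩ := exists_uInf_subgroup hU
  refine ⟨N, hN ▸ isClosed_uInf hU hU0, isMinimal_uInf hU hU0 hmin N hN, ?_⟩
  obtain ⟨h0, hs, m, hm, h⟩ := hU
  have hπ : ∀ A ∈ 𝓝 (0 : G), (QuotientAddGroup.mk : G → G ⧸ N) '' A ∈ 𝓝 (0 : G ⧸ N) := fun A hA =>
    (QuotientAddGroup.isOpenMap_coe (N := N)).image_mem_nhds hA
  have hn := hπ _ (invDiv_nhds hU0 m)
  refine ⟨_, hn, ?_, fun n _ => invDiv_nhds hn n, ?_⟩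
  · rintro _ ⟨x, hx, rfl⟩
    refine ⟨-x, ?_, rfl⟩
    intro k h1 h2
    rw [smul_neg]
    exact hs _ (hx k h1 h2)
  · intro V hV
    have hV' : (QuotientAddGroup.mk : G → G ⧸ N) ⁻¹' V ∈ 𝓝 (0 : G) :=
      (QuotientAddGroup.continuous_mk (N := N)).continuousAt.preimage_mem_nhds hV
    obtain ⟨n, hn1, F, hF, hFV⟩ := hc _ hV'
    refine ⟨n, hn1, ?_⟩
    intro y hy
    obtain ⟨x, rfl⟩ := QuotientAddGroup.mk_surjective y
    have hx : x ∈ invDiv n U := by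
      intro k h1 h2
      obtain ⟨z, hz, hzx⟩ := hy k h1 h2
      have : -z + k • x ∈ N := QuotientAddGroup.eq.1 hzx
      have h3 : -z + k • x ∈ uInf U := by rw [← hN]; exact this
      have := h z hz _ (uInf_sub_invDiv m h3)
      simpa using this
    obtain ⟨f, hf, v, hv, rfl⟩ := hFV hx
    have hfN : f ∈ N := by rw [← SetLike.mem_coe, hN]; exact hF hf
    have : ((f + v : G) : G ⧸ N) = (v : G ⧸ N) := by
      rw [QuotientAddGroup.mk_add, (QuotientAddGroup.eq_zero_iff f).2 hfN, zero_add]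
    simp only [this]
    exact hv

theorem merson [TopologicalSpace G] [IsTopologicalAddGroup G] [T2Space G]
    (h : IsAlmostMinimal G) : ∃ U ∈ nhds (0 : G), IsGTG U ∧ LocallyMinimalAt G U ∧
        ∃ N : AddSubgroup G, (N : Set G) = uInf U ∧ IsMinimal N ∧ IsUFSS (G ⧸ N) ∧
        ∀ V ∈ 𝓝 (0 : G), ∃ n : ℕ, 1 ≤ n ∧ ∀ x ∈ invDiv n U, ∃ y ∈ N, x - y ∈ V := by
  obtain ⟨N, hNc, hNm, hq⟩ := h
  obtain ⟨Ub, hUb, hsym, hnb, hbas⟩ := id hq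
  let π : G → G ⧸ N := QuotientAddGroup.mk
  have hπc : Continuous π := QuotientAddGroup.continuous_mk
  have hU0 : π ⁻¹' Ub ∈ 𝓝 (0 : G) := hπc.continuousAt.preimage_mem_nhds hUb
  have hinv : ∀ n, invDiv n (π ⁻¹' Ub) = π ⁻¹' (invDiv n Ub) := by
    intro n
    rfl
  have hV : ∀ V ∈ 𝓝 (0 : G), ∃ n : ℕ, 1 ≤ n ∧ ∀ x ∈ invDiv n (π ⁻¹' Ub), ∃ y ∈ N, x - y ∈ V := by
    intro V hV
    have : π '' V ∈ 𝓝 (0 : G ⧸ N) :=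
      (QuotientAddGroup.isOpenMap_coe (N := N)).image_mem_nhds hV
    obtain ⟨n, hn, hn'⟩ := hbas _ this
    refine ⟨n, hn, fun x hx => ?_⟩
    rw [hinv] at hx
    obtain ⟨v, hv, hvx⟩ := hn' hx
    refine ⟨x - v, ?_, by simpa using hv⟩
    have := QuotientAddGroup.eq.1 hvx
    rwa [neg_add_eq_sub] at this
  have hgtg : IsGTG (π ⁻¹' Ub) := by
    refine ⟨mem_of_mem_nhds hU0, fun x hx => hsym _ hx, ?_⟩
    obtain ⟨W, hW, hWU⟩ := exists_nhds_zero_half hUb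
    obtain ⟨n, hn, hnW⟩ := hbas W hW
    exact ⟨n, hn, fun x hx y hy => hWU (π x) (hnW hx) (π y) (hnW hy)⟩
  have hNU : (N : Set G) = uInf (π ⁻¹' Ub) := by
    ext x
    constructor
    · intro hx n hn
      have : π (n • x) = 0 := (QuotientAddGroup.eq_zero_iff _).2 (N.nsmul_mem hx n)
      rw [Set.mem_preimage, this]
      exact mem_of_mem_nhds hUb
    · intro hx
      have : ∀ V ∈ 𝓝 (0 : G), ∃ y ∈ N, x - y ∈ V := by
        intro V h1
        obtain ⟨n, hn, h2⟩ := hV V h1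
        exact h2 x (uInf_sub_invDiv n hx)
      rw [← hNc.closure_eq, mem_closure_iff_nhds]
      intro t ht
      have h1 : (fun y => x - y) ⁻¹' t ∈ 𝓝 (0 : G) := by
        have : Continuous (fun y => x - y) := by fun_prop
        apply this.continuousAt.preimage_mem_nhds
        simpa using ht
      obtain ⟨y, hy, hy'⟩ := this _ h1
      exact ⟨y, by simpa using hy', hy⟩
  refine ⟨_, hU0, hgtg, ?_, N, hNU, hNm, hq, hV⟩
  rename_i τ hτ hT
  intro σ hle hσ hT2 hUσ
  apply coarse_eq hτ hσ hle
  have hsub : @instTopologicalSpaceSubtype G (fun x => x ∈ N) σ = 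
      @instTopologicalSpaceSubtype G (fun x => x ∈ N) τ := by
    apply hNm
    · exact induced_mono hle
    · exact @AddSubgroup.instIsTopologicalAddGroupSubtypeMem G σ _ hσ N
    · exact @instT2SpaceSubtype G σ _ hT2
  intro V hVτ
  obtain ⟨V1, hV1, hV1V⟩ := @exists_nhds_zero_half G τ _ _ V hVτ
  have h1 : ∃ O ∈ @nhds G σ 0, ∀ x ∈ O, x ∈ N → x ∈ V1 := by
    have h2 : (Subtype.val : N → G) ⁻¹' V1 ∈ @nhds N (@instTopologicalSpaceSubtype G _ σ) 0 := by
      rw [show @nhds N (@instTopologicalSpaceSubtype G _ σ) 0 = @nhds N (@instTopologicalSpaceSubtype G _ τ) 0 by rw [hsub]]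
      rw [@nhds_subtype_eq_comap G τ]
      exact Filter.preimage_mem_comap hV1
    rw [@nhds_subtype_eq_comap] at h2
    obtain ⟨O, hO, hO'⟩ := h2
    exact ⟨O, hO, fun x hx hxN => @hO' ⟨x, hxN⟩ hx⟩
  obtain ⟨O, hO, hON⟩ := h1
  obtain ⟨O', hO', hOO⟩ := @exists_nhds_zero_half G σ _ _ O hO
  have hO'n := @neg_mem_nhds_zero G σ _ _ O' hO'
  obtain ⟨n, hn, hn'⟩ := hV (V1 ∩ (-O')) (Filter.inter_mem hV1 (nhds_mono hle hO'n))
  have hUn := @invDiv_nhds G _ σ hσ _ hUσ n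
  filter_upwards [hUn, hO'] with x hx hxO
  obtain ⟨y, hy, hxy⟩ := hn' x hx
  have : y ∈ O := by
    have := hOO _ hxO _ hxy.2
    simpa using this
  have := hV1V _ hxy.1 _ (hON y this hy)
  simpa using this

theorem cov_subset {A V : Set G} (h : Cov A V) :
    ∃ F : Set G, F.Finite ∧ F ⊆ A ∧ ∀ a ∈ A, ∃ f ∈ F, ∃ v ∈ V, ∃ w ∈ V, a - f = v - w := by
  obtain ⟨F, hF, h⟩ := h
  let F' := {f ∈ F | ∃ a ∈ A, a - f ∈ V}
  have hF' : F'.Finite := hF.subset (Set.sep_subset _ _)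
  choose! g hg using (fun f (hf : f ∈ F') => hf.2)
  refine ⟨g '' F', hF'.image g, ?_, ?_⟩
  · rintro _ ⟨f, hf, rfl⟩
    exact (hg f hf).1
  · intro a ha
    obtain ⟨f, hf, hfa⟩ := h a ha
    have hf' : f ∈ F' := ⟨hf, a, ha, hfa⟩
    exact ⟨g f, ⟨f, hf', rfl⟩, _, hfa, _, (hg f hf').2, by abel⟩

theorem tfae_of_PS [TopologicalSpace G] [IsTopologicalAddGroup G] [T2Space G]
    (PS : ∀ N : AddSubgroup G, IsMinimal N → ∀ V ∈ 𝓝 (0 : N), Cov Set.univ V) :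
    (IsAlmostMinimal G ↔
      ∃ U ∈ nhds (0 : G), IsGTG U ∧ LocallyMinimalAt G U ∧
        ∃ N : AddSubgroup G, (N : Set G) = uInf U ∧ IsUFSS (G ⧸ N)) ∧
    (IsAlmostMinimal G ↔
      ∃ U ∈ nhds (0 : G), IsGTG U ∧ LocallyMinimalAt G U ∧
        ∀ V ∈ nhds (0 : G), ∃ n : ℕ, 1 ≤ n ∧
          ∃ F : Finset G, (F : Set G) ⊆ uInf U ∧ invDiv n U ⊆ (F : Set G) + V) := by
  refine ⟨⟨fun h => ?_, b_to_a⟩, ⟨fun h => ?_, c_to_a⟩⟩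
  · obtain ⟨U, h1, h2, h3, N, h4, h5, h6, h7⟩ := merson h
    exact ⟨U, h1, h2, h3, N, h4, h6⟩
  · obtain ⟨U, h1, h2, h3, N, h4, h5, h6, h7⟩ := merson h
    refine ⟨U, h1, h2, h3, fun V hV => ?_⟩
    obtain ⟨W, hW, hWV⟩ := exists_nhds_zero_half hV
    obtain ⟨n, hn, hnW⟩ := h7 W hW
    have hWN : (Subtype.val : N → G) ⁻¹' W ∈ 𝓝 (0 : N) :=
      continuous_subtype_val.continuousAt.preimage_mem_nhds hW
    obtain ⟨F, hF, hFW⟩ := PS N h5 _ hWN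
    classical
    refine ⟨n, hn, hF.toFinset.image Subtype.val, ?_, ?_⟩
    · intro x hx
      simp only [Finset.coe_image, Set.Finite.coe_toFinset] at hx
      obtain ⟨f, hf, rfl⟩ := hx
      rw [← h4]; exact f.2
    · intro x hx
      obtain ⟨y, hy, hxy⟩ := hnW x hx
      obtain ⟨f, hf, hfy⟩ := hFW ⟨y, hy⟩ trivial
      refine ⟨f, by simpa using hf, x - f, ?_, by simp⟩
      have := hWV _ hxy _ hfy
      simpa using this

end gtg


theorem uac_rep (t : UnitAddCircle) : ∃ r : ℝ, (r : UnitAddCircle) = t ∧ |r| = ‖t‖ := by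
  obtain ⟨x, rfl⟩ := QuotientAddGroup.mk_surjective t
  refine ⟨x - round x, ?_, ?_⟩
  · have : ((round x : ℝ) : UnitAddCircle) = 0 := by
      rw [AddCircle.coe_eq_zero_iff]
      exact ⟨round x, by simp⟩
    rw [AddCircle.coe_sub, this, sub_zero]
  · exact (UnitAddCircle.norm_eq).symm

theorem uac_inj {r s : ℝ} (h : (r : UnitAddCircle) = s) (hrs : |r - s| < 1) : r = s := by
  have : ((r - s : ℝ) : UnitAddCircle) = 0 := by rw [AddCircle.coe_sub, h, sub_self]
  rw [AddCircle.coe_eq_zero_iff] at this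
  obtain ⟨n, hn⟩ := this
  simp at hn
  rw [← hn] at hrs
  have : |n| < 1 := by exact_mod_cast hrs
  have : n = 0 := Int.abs_lt_one_iff.1 this
  rw [this] at hn
  simp at hn
  linarith

theorem uac_double {t : UnitAddCircle} (ht : ‖t‖ ≤ 1 / 4) : ‖(2 : ℕ) • t‖ = 2 * ‖t‖ := by
  obtain ⟨r, rfl, hr⟩ := uac_rep t
  rw [← hr] at ht ⊢
  have : (2 : ℕ) • (r : UnitAddCircle) = ((2 * r : ℝ) : UnitAddCircle) := by
    rw [two_nsmul, ← AddCircle.coe_add, two_mul]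
  rw [this, (AddCircle.norm_coe_eq_abs_iff (p := 1) one_ne_zero).2, abs_mul]
  · simp
  · rw [abs_mul]; simp; linarith

theorem uac_norm_le {r : ℝ} : ‖(r : UnitAddCircle)‖ ≤ |r| := by
  rw [UnitAddCircle.norm_eq]
  simpa using round_le r 0

/-- powers of two small implies small -/
theorem uac_small {t : UnitAddCircle} {N : ℕ} (h : ∀ k ≤ N, ‖(2 ^ k : ℕ) • t‖ ≤ 1 / 4) :
    ‖t‖ ≤ 1 / 4 / 2 ^ N := by
  have : ∀ k ≤ N, ‖(2 ^ k : ℕ) • t‖ = 2 ^ k * ‖t‖ := by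
    intro k
    induction k with
    | zero => simp
    | succ k ih =>
      intro hk
      have h1 := ih (by omega)
      have h2 := uac_double (h k (by omega))
      rw [pow_succ', mul_smul, h2, h1]
      ring
  have h1 := h N le_rfl
  rw [this N le_rfl] at h1
  rw [le_div_iff₀ (by positivity)]
  linarith

theorem uac_zero {t : UnitAddCircle} (h : ∀ k : ℕ, ‖(2 ^ k : ℕ) • t‖ ≤ 1 / 4) : t = 0 := by
  have h1 : ∀ N : ℕ, ‖t‖ ≤ 1 / 4 * (1 / 2) ^ N := by
    intro N
    have := uac_small (N := N) (fun k _ => h k)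
    rw [one_div_pow]
    rw [div_eq_mul_one_div] at this
    exact this
  have h2 : Filter.Tendsto (fun N : ℕ => (1 / 4 : ℝ) * (1 / 2) ^ N) Filter.atTop (𝓝 (1 / 4 * 0)) :=
    (tendsto_pow_atTop_nhds_zero_of_lt_one (by norm_num) (by norm_num)).const_mul _
  have := ge_of_tendsto' h2 h1
  simpa using this

theorem hyers {A : Type*} [AddCommGroup A] (f0 : A → UnitAddCircle) {ε : ℝ} (hε : ε ≤ 1 / 20)
    (h : ∀ a b, ‖f0 a + f0 b - f0 (a + b)‖ ≤ ε) :
    ∃ f : A →+ UnitAddCircle, ∀ a, ‖f a - f0 a‖ ≤ ε := by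
  choose c hc hc' using fun a b => uac_rep (f0 a + f0 b - f0 (a + b))
  have hcε : ∀ a b, |c a b| ≤ ε := fun a b => (hc' a b).trans_le (h a b)
  have hε0 : 0 ≤ ε := (abs_nonneg _).trans (hcε 0 0)
  have hid : ∀ a b, c a a + c b b + c (a + a) (b + b) = c a b + c a b + c (a + b) (a + b) := by
    intro a b
    apply uac_inj
    · simp only [AddCircle.coe_add, hc]
      rw [show a + a + (b + b) = a + b + (a + b) by abel]
      abel
    · have h1 := abs_le.1 (hcε a a)
      have h2 := abs_le.1 (hcε b b)
      have h3 := abs_le.1 (hcε (a + a) (b + b))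
      have h4 := abs_le.1 (hcε a b)
      have h5 := abs_le.1 (hcε (a + b) (a + b))
      rw [abs_lt]
      constructor <;> linarith [h1.1, h1.2, h2.1, h2.2, h3.1, h3.2, h4.1, h4.2, h5.1, h5.2]
  let t : A → ℕ → ℝ := fun x n => c (2 ^ n • x) (2 ^ n • x) / 2 / 2 ^ n
  have htb : ∀ x n, ‖t x n‖ ≤ ε / 2 / 2 ^ n := by
    intro x n
    simp only [t, Real.norm_eq_abs, abs_div, abs_pow, abs_two]
    gcongr
    exact hcε _ _
  have hgeo := hasSum_geometric_two' ε
  have hsum : ∀ x, Summable (t x) := fun x =>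
    Summable.of_norm_bounded hgeo.summable (htb x)
  let β : A → ℝ := fun x => ∑' n, t x n
  have hβ : ∀ x, |β x| ≤ ε := fun x => tsum_of_norm_bounded hgeo (htb x)
  have hβ2 : ∀ x, β (x + x) = 2 * β x - c x x := by
    intro x
    have h1 : β x = t x 0 + ∑' n, t x (n + 1) := (hsum x).tsum_eq_zero_add
    have h2 : β (x + x) = 2 * ∑' n, t x (n + 1) := by
      rw [← tsum_mul_left]
      apply tsum_congr
      intro n
      simp only [t]
      rw [show (2 : ℕ) ^ n • (x + x) = 2 ^ (n + 1) • x by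
        rw [pow_succ, mul_smul, two_nsmul]]
      rw [pow_succ (2 : ℝ)]
      field_simp
    have h3 : t x 0 = c x x / 2 := by simp [t]
    rw [h2, h1, h3]; ring
  let c' : A → A → ℝ := fun a b => c a b - β a - β b + β (a + b)
  have hc2 : ∀ a b, c' (a + a) (b + b) = 2 * c' a b := by
    intro a b
    have := hid a b
    simp only [c']
    rw [show a + a + (b + b) = a + b + (a + b) by abel, hβ2, hβ2, hβ2]
    linarith
  have hcb : ∀ a b, |c' a b| ≤ 4 * ε := by
    intro a b
    have h1 := abs_le.1 (hcε a b)
    have h2 := abs_le.1 (hβ a)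
    have h3 := abs_le.1 (hβ b)
    have h4 := abs_le.1 (hβ (a + b))
    rw [abs_le]
    simp only [c']
    constructor <;> linarith [h1.1, h1.2, h2.1, h2.2, h3.1, h3.2, h4.1, h4.2]
  have hcn : ∀ n : ℕ, ∀ a b, 2 ^ n * |c' a b| ≤ 4 * ε := by
    intro n
    induction n with
    | zero => intro a b; simpa using hcb a b
    | succ n ih =>
      intro a b
      have := ih (a + a) (b + b)
      rw [hc2, abs_mul, abs_two] at this
      rw [pow_succ]; linarith
  have hc0 : ∀ a b, c' a b = 0 := by
    intro a b
    by_contra hne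
    have hpos : 0 < |c' a b| := abs_pos.2 hne
    obtain ⟨n, hn⟩ := pow_unbounded_of_one_lt (4 * ε / |c' a b|) (one_lt_two)
    rw [div_lt_iff₀ hpos] at hn
    linarith [hcn n a b]
  refine ⟨AddMonoidHom.mk' (fun a => f0 a - (β a : UnitAddCircle)) ?_, ?_⟩
  · intro a b
    have h1 : ((c' a b : ℝ) : UnitAddCircle) = 0 := by rw [hc0]; rfl
    simp only [c', AddCircle.coe_add, AddCircle.coe_sub, hc] at h1
    rw [← sub_eq_zero, ← neg_eq_zero, ← h1]
    abel
  · intro a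
    simp only [AddMonoidHom.mk'_apply, sub_sub_cancel_left, norm_neg]
    exact uac_norm_le.trans (hβ a)


theorem gel_comm {K : Type*} [AddCommGroup K] [TopologicalSpace K] {B : Type*} [CommCStarAlgebra B]
    (lam : K → B) (h0 : lam 0 = 1) (hadd : ∀ x y, lam (x + y) = lam x * lam y)
    (hstar : ∀ x, star (lam x) = lam (-x)) (S : B) (hcont : Continuous fun x => lam x * S)
    (x0 : K) (hx0 : lam x0 * S ≠ S) :
    ∃ χ : K → ℂ, (∀ x y, χ (x + y) = χ x * χ y) ∧ (∀ x, ‖χ x‖ = 1) ∧ Continuous χ ∧ χ x0 ≠ 1 := by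
  have hne : WeakDual.gelfandTransform ℂ B (lam x0 * S - S) ≠ 0 := by
    intro h
    have := (gelfandTransform_isometry B).injective (h.trans (map_zero _).symm)
    exact hx0 (sub_eq_zero.1 this)
  obtain ⟨φ, hφ⟩ := DFunLike.ne_iff.1 hne
  simp only [map_sub, map_mul] at hφ
  have hφS : φ S ≠ 0 := by
    intro h
    apply hφ
    simp [h]
  have h1 : ∀ x, φ (lam x) * φ (lam (-x)) = 1 := by
    intro x
    rw [← map_mul, ← hadd, add_neg_cancel, h0, map_one]
  refine ⟨fun x => φ (lam x), fun x y => by simp only [hadd, map_mul], ?_, ?_, ?_⟩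
  · intro x
    have h2 := h1 x
    rw [← hstar, map_star] at h2
    have h3 : ‖φ (lam x)‖ * ‖φ (lam x)‖ = 1 := by
      have := congrArg norm h2
      rw [norm_mul, norm_star, norm_one] at this
      exact this
    nlinarith [norm_nonneg (φ (lam x))]
  · have h2 : (fun x => φ (lam x)) = fun x => φ (lam x * S) / φ S := by
      ext x
      rw [map_mul]; field_simp
    rw [h2]
    exact ((map_continuous φ).comp hcont).div_const _
  · intro h
    apply hφ
    simp at h
    simp [h]

theorem gel_char {K : Type*} [AddCommGroup K] [TopologicalSpace K] {A : Type*} [CStarAlgebra A]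
    (lam : K → A) (h0 : lam 0 = 1) (hadd : ∀ x y, lam (x + y) = lam x * lam y)
    (hstar : ∀ x, star (lam x) = lam (-x)) (S : A) (hS : star S = S)
    (hcomm : ∀ x, lam x * S = S * lam x) (hcont : Continuous fun x => lam x * S)
    (x0 : K) (hx0 : lam x0 * S ≠ S) :
    ∃ χ : K → ℂ, (∀ x y, χ (x + y) = χ x * χ y) ∧ (∀ x, ‖χ x‖ = 1) ∧ Continuous χ ∧ χ x0 ≠ 1 := by
  let s : Set A := insert S (Set.range lam)
  let S0 : StarSubalgebra ℂ A := StarAlgebra.adjoin ℂ s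
  let B : StarSubalgebra ℂ A := S0.topologicalClosure
  have hB : IsClosed (B : Set A) := S0.isClosed_topologicalClosure
  have hc1 : ∀ a ∈ s, ∀ b ∈ s, a * b = b * a := by
    rintro _ (rfl | ⟨x, rfl⟩) _ (rfl | ⟨y, rfl⟩)
    · rfl
    · exact (hcomm _).symm
    · exact hcomm _
    · rw [← hadd, add_comm, hadd]
  have hss : ∀ b ∈ s, star b ∈ s := by
    rintro _ (rfl | ⟨x, rfl⟩)
    · rw [hS]; exact Set.mem_insert _ _
    · rw [hstar]; exact Set.mem_insert_of_mem _ ⟨_, rfl⟩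
  have hcm := StarAlgebra.isMulCommutative_adjoin ℂ hc1 (fun a ha b hb => hc1 a ha _ (hss b hb))
  let i1 : CommRing B := S0.commRingTopologicalClosure (fun x y => mul_comm' x y)
  let i2 : CommCStarAlgebra B := { }
  have hsB : ∀ a ∈ s, a ∈ B := fun a ha =>
    S0.le_topologicalClosure (StarAlgebra.subset_adjoin ℂ s ha)
  have hl : ∀ x, lam x ∈ B := fun x => hsB _ (Set.mem_insert_of_mem _ ⟨_, rfl⟩)
  refine gel_comm (B := B) (fun x => ⟨lam x, hl x⟩) (Subtype.ext h0)
    (fun x y => Subtype.ext (hadd x y)) (fun x => Subtype.ext (hstar x))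
    ⟨S, hsB _ (Set.mem_insert _ _)⟩ (Continuous.subtype_mk hcont _) x0 ?_
  intro h
  exact hx0 (congrArg Subtype.val h)


theorem cstar_aux {A : Type*} [CStarAlgebra A] {l T : A} (h1 : T * l = l * T)
    (h2 : l * star T = star T * l) (h : l * (star T * T) = star T * T) : l * T = T := by
  have h5 : star (l * T - T) * (l * T - T) = 0 := by
    have h2 : star T * (l * T - T) = 0 := by
      rw [mul_sub, ← mul_assoc, ← h2, mul_assoc, h, sub_self]
    have h4 : l * T - T = T * (l - 1) := by rw [mul_sub, mul_one, h1]
    nth_rewrite 1 [h4]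
    rw [star_mul, mul_assoc, h2, mul_zero]
  rwa [CStarRing.star_mul_self_eq_zero_iff, sub_eq_zero] at h5

section PW
set_option linter.unusedSectionVars false
open MeasureTheory
variable {K : Type*} [AddCommGroup K] [TopologicalSpace K] [IsTopologicalAddGroup K]
  [CompactSpace K] [T2Space K] [MeasurableSpace K] [BorelSpace K] (μ : Measure K)
  [μ.IsAddHaarMeasure]

/-- translation operator -/
noncomputable def lamK (x : K) : Lp ℂ 2 μ →L[ℂ] Lp ℂ 2 μ :=
  (Lp.compMeasurePreservingₗᵢ ℂ (fun y => y + x)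
    (measurePreserving_add_right μ x)).toContinuousLinearMap

theorem lamK_toLp (x : K) (f : C(K, ℂ)) :
    lamK μ x (ContinuousMap.toLp 2 μ ℂ f) =
      ContinuousMap.toLp 2 μ ℂ (f.comp ⟨fun y => y + x, by fun_prop⟩) := by
  apply Lp.ext
  have hm := measurePreserving_add_right μ x
  have h1 := Lp.coeFn_compMeasurePreserving (ContinuousMap.toLp (E := ℂ) 2 μ ℂ f) hm
  have h2 := hm.quasiMeasurePreserving.ae_eq_comp (ContinuousMap.coeFn_toLp (p := 2) (𝕜 := ℂ) μ f)
  have h3 := ContinuousMap.coeFn_toLp (p := 2) (𝕜 := ℂ) μ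
    (f.comp ⟨fun y => y + x, by fun_prop⟩)
  exact h1.trans (h2.trans h3.symm)

theorem lamK_zero : lamK μ (0 : K) = 1 := by
  ext1 g
  apply Lp.ext
  have hm := measurePreserving_add_right μ (0 : K)
  have h1 := Lp.coeFn_compMeasurePreserving g hm
  refine h1.trans ?_
  simp [Function.comp_def]

theorem lamK_add (x y : K) : lamK μ (x + y) = lamK μ x * lamK μ y := by
  ext1 g
  apply Lp.ext
  have hm := fun x => measurePreserving_add_right μ (x : K)
  have h1 := Lp.coeFn_compMeasurePreserving g (hm (x + y))
  have h2 := Lp.coeFn_compMeasurePreserving (lamK μ y g) (hm x)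
  have h3 := Lp.coeFn_compMeasurePreserving g (hm y)
  have h4 := (hm x).quasiMeasurePreserving.ae_eq_comp h3
  refine h1.trans (h2.trans (h4.trans ?_)).symm
  apply Filter.Eventually.of_forall
  intro t
  simp [add_assoc]

theorem lamK_inner (x : K) (u v : Lp ℂ 2 μ) :
    inner ℂ (lamK μ x u) (lamK μ x v) = inner ℂ u v :=
  LinearIsometry.inner_map_map _ u v

theorem lamK_inner' (x : K) (u v : Lp ℂ 2 μ) :
    inner ℂ (lamK μ x u) v = inner ℂ u (lamK μ (-x) v) := by
  rw [← lamK_inner μ x u]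
  rw [← mul_apply_eq_comp, ← lamK_add, add_neg_cancel, lamK_zero]
  rfl

theorem lamK_star (x : K) : star (lamK μ x) = lamK μ (-x) := by
  rw [ContinuousLinearMap.star_eq_adjoint]
  symm
  rw [ContinuousLinearMap.eq_adjoint_iff]
  intro u v
  rw [lamK_inner', neg_neg]

/-- kernel operator into continuous functions -/
noncomputable def kerC (Φ : C(K, Lp ℂ 2 μ)) : Lp ℂ 2 μ →L[ℂ] C(K, ℂ) :=
  LinearMap.mkContinuous
    { toFun := fun g => ⟨fun x => inner ℂ (Φ x) g, by fun_prop⟩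
      map_add' := by intro a b; ext x; simp [inner_add_right]
      map_smul' := by intro c b; ext x; simp [inner_smul_right] } ‖Φ‖ (by
        intro g
        rw [ContinuousMap.norm_le _ (by positivity)]
        intro x
        simp only [LinearMap.coe_mk, AddHom.coe_mk, ContinuousMap.coe_mk]
        refine (norm_inner_le_norm _ _).trans ?_
        gcongr
        exact Φ.norm_coe_le_norm x)

theorem kerC_apply (Φ : C(K, Lp ℂ 2 μ)) (g : Lp ℂ 2 μ) (x : K) :
    kerC μ Φ g x = inner ℂ (Φ x) g := rfl

theorem kerC_norm (Φ : C(K, Lp ℂ 2 μ)) : ‖kerC μ Φ‖ ≤ ‖Φ‖ :=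
  LinearMap.mkContinuous_norm_le _ (norm_nonneg _) _

theorem kerC_sub (Φ Ψ : C(K, Lp ℂ 2 μ)) : kerC μ Φ - kerC μ Ψ = kerC μ (Φ - Ψ) := by
  ext g x
  simp [kerC_apply, inner_sub_left]

theorem kerC_cont : Continuous (kerC μ : C(K, Lp ℂ 2 μ) → _) := by
  have : LipschitzWith 1 (kerC μ : C(K, Lp ℂ 2 μ) → _) := by
    apply LipschitzWith.of_dist_le_mul
    intro Φ Ψ
    rw [dist_eq_norm, dist_eq_norm, kerC_sub]
    simpa using kerC_norm μ (Φ - Ψ)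
  exact this.continuous

theorem pw_aux (μ : Measure K) [μ.IsAddHaarMeasure] (f : C(K, ℂ)) (x0 : K) (hf : f x0 ≠ f 0) :
    ∃ χ : K → ℂ, (∀ x y, χ (x + y) = χ x * χ y) ∧ (∀ x, ‖χ x‖ = 1) ∧ Continuous χ ∧ χ x0 ≠ 1 := by
  let v : Lp ℂ 2 μ := ContinuousMap.toLp 2 μ ℂ f
  let tr : C(K, C(K, ℂ)) := ContinuousMap.curry ⟨fun p : K × K => f (p.2 - p.1), by fun_prop⟩
  have htr : ∀ x, ContinuousMap.toLp 2 μ ℂ (tr x) = lamK μ (-x) v := by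
    intro x
    rw [lamK_toLp]
    congr 1
    ext y
    simp [tr, sub_eq_add_neg]
  have hvc : Continuous fun x => lamK μ (-x) v := by
    have : Continuous fun x => ContinuousMap.toLp (E := ℂ) 2 μ ℂ (tr x) := by fun_prop
    simpa only [htr] using this
  let Φ : C(K, C(K, Lp ℂ 2 μ)) := ContinuousMap.curry
    ⟨fun p : K × K => lamK μ (-(p.2 + p.1)) v, hvc.comp (by fun_prop)⟩
  have hΦ : ∀ z x, Φ z x = lamK μ (-(x + z)) v := fun z x => rfl
  let L : C(K, ℂ) →L[ℂ] Lp ℂ 2 μ := ContinuousMap.toLp 2 μ ℂ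
  let T : Lp ℂ 2 μ →L[ℂ] Lp ℂ 2 μ := L ∘L kerC μ (Φ 0)
  have hlT : ∀ z, lamK μ z * T = L ∘L kerC μ (Φ z) := by
    intro z
    ext1 g
    change lamK μ z (L (kerC μ (Φ 0) g)) = L (kerC μ (Φ z) g)
    rw [lamK_toLp]
    congr 1
    ext x
    simp [kerC_apply, hΦ]
  have hTl : ∀ z, T * lamK μ z = lamK μ z * T := by
    intro z
    rw [hlT]
    ext1 g
    change L (kerC μ (Φ 0) (lamK μ z g)) = L (kerC μ (Φ z) g)
    congr 1
    ext x
    rw [kerC_apply, kerC_apply, hΦ, hΦ]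
    rw [show lamK μ z g = lamK μ (- -z) g by rw [neg_neg], ← lamK_inner',
      ← mul_apply_eq_comp, ← lamK_add]
    congr 3
    abel
  have hcont : Continuous fun z => lamK μ z * T := by
    simp only [hlT]
    have : Continuous fun z => kerC μ (Φ z) := (kerC_cont μ).comp Φ.continuous
    exact continuous_const.clm_comp this
  have hTs : ∀ z, lamK μ z * star T = star T * lamK μ z := by
    intro z
    have := congrArg star (hTl (-z))
    rw [star_mul, star_mul, lamK_star, neg_neg] at this
    exact this
  refine gel_char (lamK μ) (lamK_zero μ) (lamK_add μ) (lamK_star μ) (star T * T) ?_ ?_ ?_ x0 ?_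
  · rw [star_mul, star_star]
  · intro x
    rw [← mul_assoc, hTs, mul_assoc, ← hTl, mul_assoc]
  · have : (fun x => lamK μ x * (star T * T)) = fun x => star T * (lamK μ x * T) := by
      ext1 x
      rw [← mul_assoc, hTs, mul_assoc]
    rw [this]
    exact continuous_const.mul hcont
  · intro h
    have h1 := cstar_aux (hTl x0) (hTs x0) h
    rw [hlT] at h1
    have h2 := congrArg (fun A => A v) h1
    have h3 : kerC μ (Φ x0) v = kerC μ (Φ 0) v := ContinuousMap.toLp_injective μ h2
    have h4 := DFunLike.congr_fun h3 0
    rw [kerC_apply, kerC_apply, hΦ, hΦ] at h4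
    simp only [zero_add, neg_zero, lamK_zero, one_apply_eq_self] at h4
    have h5 : lamK μ (-x0) v = v := by
      rw [← sub_eq_zero, ← inner_self_eq_zero (𝕜 := ℂ), inner_sub_left, inner_sub_right,
        inner_sub_right, lamK_inner, h4]
      rw [← inner_conj_symm v (lamK μ (-x0) v), h4, inner_self_conj]
      ring
    rw [← htr] at h5
    have h6 : tr x0 = f := ContinuousMap.toLp_injective μ h5
    have h7 := DFunLike.congr_fun h6 x0
    apply hf
    rw [← h7]
    simp [tr]

end PW

theorem pw_sep {K : Type*} [AddCommGroup K] [TopologicalSpace K] [IsTopologicalAddGroup K]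
    [CompactSpace K] [T2Space K] (x0 : K) (hx0 : x0 ≠ 0) :
    ∃ χ : K →+ UnitAddCircle, Continuous χ ∧ χ x0 ≠ 0 := by
  let _ : MeasurableSpace K := borel K
  have : BorelSpace K := ⟨rfl⟩
  obtain ⟨f, hf1, hf2, -⟩ := exists_continuous_zero_one_of_isClosed (X := K) (s := {0}) (t := {x0})
    isClosed_singleton isClosed_singleton (by simpa using hx0.symm)
  obtain ⟨χ, h1, h2, h3, h4⟩ := pw_aux (K := K) MeasureTheory.Measure.addHaar
    ⟨fun x => (f x : ℂ), by fun_prop⟩ x0 (by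
      have h1 : f 0 = 0 := hf1 rfl
      have h2 : f x0 = 1 := hf2 rfl
      simp [h1, h2])
  let c : K → Circle := fun x => ⟨χ x, by simp [Submonoid.unitSphere, h2]⟩
  have hc : Continuous c := h3.subtype_mk _
  let e := AddCircle.homeomorphCircle (T := 1) one_ne_zero
  have he : ∀ a b : UnitAddCircle, e (a + b) = e a * e b := fun a b => by
    simp only [e, AddCircle.homeomorphCircle_apply, AddCircle.toCircle_add]
  refine ⟨AddMonoidHom.mk' (fun x => e.symm (c x)) ?_, e.symm.continuous.comp hc, ?_⟩
  · intro x y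
    apply e.injective
    rw [he]
    simp only [Homeomorph.apply_symm_apply]
    ext
    exact h1 x y
  · intro h
    apply h4
    have h5 : c x0 = e 0 := by rw [← h]; simp
    have h6 : e 0 = 1 := by simp only [e, AddCircle.homeomorphCircle_apply, AddCircle.toCircle_zero]
    rw [h6] at h5
    exact congrArg Subtype.val h5


theorem uac_extend {X : Type*} [AddCommGroup X] (D : AddSubgroup X) (f : D →+ UnitAddCircle) :
    ∃ g : X →+ UnitAddCircle, ∀ d : D, g d = f d := by
  obtain ⟨g, hg⟩ := (Module.Baer.of_divisible UnitAddCircle).extension_property_addMonoidHom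
    D.subtype D.subtype_injective f
  exact ⟨g, fun d => DFunLike.congr_fun hg d⟩

theorem uac_char {X : Type*} [AddCommGroup X] {x : X} (hx : x ≠ 0) :
    ∃ g : X →+ UnitAddCircle, g x ≠ 0 := by
  obtain ⟨c, hc⟩ := CharacterModule.exists_character_apply_ne_zero_of_ne_zero hx
  let c' : X →+ AddCircle (1 : ℚ) := c
  let ψ : AddCircle (1 : ℚ) →+ UnitAddCircle :=
    QuotientAddGroup.map (AddSubgroup.zmultiples (1 : ℚ)) (AddSubgroup.zmultiples (1 : ℝ))
      (Rat.castHom ℝ : ℚ →+* ℝ).toAddMonoidHom (by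
        rintro _ ⟨n, rfl⟩
        exact ⟨n, by simp⟩)
  refine ⟨ψ.comp c', fun h => hc ?_⟩
  change ψ (c' x) = 0 at h
  change c' x = 0
  obtain ⟨q, hq⟩ := QuotientAddGroup.mk_surjective (c' x)
  rw [← hq] at h ⊢
  have h' : ((q : ℝ) : UnitAddCircle) = 0 := h
  rw [AddCircle.coe_eq_zero_iff] at h'
  obtain ⟨n, hn⟩ := h'
  have : (n : ℚ) = q := by
    simp at hn
    exact_mod_cast hn
  rw [← this]
  exact (AddCircle.coe_eq_zero_iff (1 : ℚ)).2 ⟨n, by simp⟩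

theorem cont_of_open {X : Type*} [AddCommGroup X] [TopologicalSpace X] [IsTopologicalAddGroup X]
    {g : X →+ UnitAddCircle} (h : ∀ δ > 0, ∃ V ∈ 𝓝 (0 : X), ∀ x ∈ V, ‖g x‖ ≤ δ) :
    Continuous g := by
  apply continuous_of_continuousAt_zero
  rw [ContinuousAt, map_zero, Metric.tendsto_nhds]
  intro ε hε
  obtain ⟨V, hV, h⟩ := h (ε / 2) (by linarith)
  filter_upwards [hV] with x hx
  rw [dist_zero_right]
  linarith [h x hx]

theorem tb_of_cov {X : Type*} [AddCommGroup X] [UniformSpace X] [IsUniformAddGroup X] {s : Set X}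
    (h : ∀ U ∈ 𝓝 (0 : X), Cov s U) : TotallyBounded s := by
  rw [totallyBounded_iff_subset_finite_iUnion_nhds_zero]
  intro U hU
  obtain ⟨F, hF, h⟩ := h U hU
  refine ⟨F, hF, fun a ha => ?_⟩
  obtain ⟨f, hf, hfa⟩ := h a ha
  simp only [Set.mem_iUnion]
  exact ⟨f, hf, a - f, hfa, by simp⟩

theorem cov_of_tb {X : Type*} [AddCommGroup X] [UniformSpace X] [IsUniformAddGroup X] {s : Set X}
    (h : TotallyBounded s) : ∀ U ∈ 𝓝 (0 : X), Cov s U := by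
  rw [totallyBounded_iff_subset_finite_iUnion_nhds_zero] at h
  intro U hU
  obtain ⟨F, hF, h⟩ := h U hU
  refine ⟨F, hF, fun a ha => ?_⟩
  have := h ha
  simp only [Set.mem_iUnion] at this
  obtain ⟨f, hf, u, hu, rfl⟩ := this
  exact ⟨f, hf, by simpa using hu⟩

theorem Cov.mono {G : Type*} [AddCommGroup G] {A B U V : Set G} (h : Cov A U) (hA : B ⊆ A)
    (hU : U ⊆ V) : Cov B V := by
  obtain ⟨F, hF, h⟩ := h
  exact ⟨F, hF, fun a ha => let ⟨f, hf, h⟩ := h a (hA ha); ⟨f, hf, hU h⟩⟩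

theorem exists_sym3 {X : Type*} [AddCommGroup X] [TopologicalSpace X] [IsTopologicalAddGroup X]
    {U : Set X} (hU : U ∈ 𝓝 (0 : X)) : ∃ V ∈ 𝓝 (0 : X), (∀ x ∈ V, -x ∈ V) ∧
      (∀ x ∈ V, ∀ y ∈ V, ∀ z ∈ V, x + y + z ∈ U) ∧ V ⊆ U ∧ (∀ x ∈ V, ∀ y ∈ V, x + y ∈ U) ∧
      (∀ x ∈ V, ∀ y ∈ V, x - y ∈ U) ∧
      (∀ x ∈ V, ∀ y ∈ V, ∀ z ∈ V, ∀ w ∈ V, x + y + z + w ∈ U) := by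
  obtain ⟨W, hW, h⟩ := exists_nhds_zero_half hU
  obtain ⟨V, hV, h'⟩ := exists_nhds_zero_half hW
  have h0 : ∀ x ∈ V, x ∈ W := fun x hx => by simpa using h' x hx 0 (mem_of_mem_nhds hV)
  have h1 : ∀ x ∈ W, x ∈ U := fun x hx => by simpa using h x hx 0 (mem_of_mem_nhds hW)
  refine ⟨V ∩ -V, Filter.inter_mem hV (neg_mem_nhds_zero _ hV), fun x hx => ⟨hx.2, by simpa using hx.1⟩,
    fun x hx y hy z hz => h _ (h' _ hx.1 _ hy.1) _ (h0 _ hz.1), fun x hx => h1 _ (h0 _ hx.1),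
    fun x hx y hy => h _ (h0 _ hx.1) _ (h0 _ hy.1), fun x hx y hy => ?_, 
    fun x hx y hy z hz w hw => ?_⟩
  · rw [sub_eq_add_neg]
    exact h _ (h0 _ hx.1) _ (h0 _ hy.2)
  · rw [add_assoc (x + y)]
    exact h _ (h' _ hx.1 _ hy.1) _ (h' _ hz.1 _ hw.1)

theorem sep_complete {X : Type*} [AddCommGroup X] [UniformSpace X] [IsUniformAddGroup X]
    [CompleteSpace X] [T2Space X] (D : ℕ → AddSubgroup X) (hanti : Antitone D)
    (hopen : ∀ k, IsOpen (D k : Set X)) (hcov : ∀ U ∈ 𝓝 (0 : X), ∃ k, Cov (D k : Set X) U)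
    {x : X} (hx : x ≠ 0) : ∃ f : X →+ UnitAddCircle, Continuous f ∧ f x ≠ 0 := by
  have hclosed : ∀ k, IsClosed (D k : Set X) := fun k => (D k).isClosed_of_isOpen (hopen k)
  by_cases hxD : ∀ k, x ∈ D k
  swap
  · push Not at hxD
    obtain ⟨k, hk⟩ := hxD
    have : (x : X ⧸ D k) ≠ 0 := fun h => hk ((QuotientAddGroup.eq_zero_iff x).1 h)
    obtain ⟨g, hg⟩ := uac_char this
    refine ⟨g.comp (QuotientAddGroup.mk' (D k)), ?_, hg⟩
    apply cont_of_open
    intro δ hδ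
    refine ⟨D k, (hopen k).mem_nhds (D k).zero_mem, fun y hy => ?_⟩
    have h0 : (y : X ⧸ D k) = 0 := (QuotientAddGroup.eq_zero_iff y).2 hy
    have : (g.comp (QuotientAddGroup.mk' (D k))) y = 0 := by
      rw [AddMonoidHom.comp_apply, QuotientAddGroup.mk'_apply, h0, map_zero]
    rw [this, norm_zero]; exact hδ.le
  let M : AddSubgroup X := ⨅ k, D k
  have hM : ∀ y, y ∈ M ↔ ∀ k, y ∈ D k := fun y => AddSubgroup.mem_iInf
  have hMc : IsClosed (M : Set X) := by
    rw [AddSubgroup.coe_iInf]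
    exact isClosed_iInter hclosed
  have hMK : IsCompact (M : Set X) := by
    refine TotallyBounded.isCompact_of_isClosed (tb_of_cov fun U hU => ?_) hMc
    obtain ⟨k, hk⟩ := hcov U hU
    exact hk.mono (fun y hy => (hM y).1 hy k) subset_rfl
  have hDM : ∀ U ∈ 𝓝 (0 : X), ∃ k, ∀ d ∈ D k, ∃ m ∈ M, d - m ∈ U := by
    intro U hU
    by_contra hcon
    push Not at hcon
    choose d hd hdU using hcon
    have htb : TotallyBounded (Set.range d) := by
      apply tb_of_cov
      intro W hW
      obtain ⟨k, F, hF, hk⟩ := hcov W hW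
      refine ⟨F ∪ d '' (Set.Iio k), hF.union ((Set.finite_Iio k).image d), ?_⟩
      rintro _ ⟨n, rfl⟩
      rcases lt_or_ge n k with hn | hn
      · exact ⟨d n, Or.inr ⟨n, hn, rfl⟩, by simpa using mem_of_mem_nhds hW⟩
      · obtain ⟨f, hf, h⟩ := hk (d n) (hanti hn (hd n))
        exact ⟨f, Or.inl hf, h⟩
    have hcomp : IsCompact (closure (Set.range d)) :=
      TotallyBounded.isCompact_of_isClosed htb.closure isClosed_closure
    obtain ⟨m, -, hm⟩ := hcomp.exists_mapClusterPt (f := Filter.atTop) (u := d) (by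
      simp only [Filter.le_principal_iff, Filter.mem_map]
      exact Filter.univ_mem' fun n => subset_closure ⟨n, rfl⟩)
    have hmM : m ∈ M := by
      rw [hM]
      intro k
      by_contra hmk
      have h1 : ∃ᶠ n in Filter.atTop, d n ∈ (D k : Set X)ᶜ :=
        hm.frequently ((hclosed k).isOpen_compl.mem_nhds hmk)
      have h2 : ∀ᶠ n in Filter.atTop, d n ∈ D k := by
        filter_upwards [Filter.eventually_ge_atTop k] with n hn
        exact hanti hn (hd n)
      obtain ⟨n, hn1, hn2⟩ := (h1.and_eventually h2).exists
      exact hn1 hn2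
    have h1 : (fun y => y - m) ⁻¹' U ∈ 𝓝 m := by
      have : Continuous (fun y => y - m) := by fun_prop
      exact this.continuousAt.preimage_mem_nhds (by simpa using hU)
    obtain ⟨n, hn⟩ := (hm.frequently h1).exists
    exact hdU n m hmM hn
  have : CompactSpace M := isCompact_iff_compactSpace.1 hMK
  obtain ⟨χ, hχ, hχx⟩ := pw_sep (K := M) ⟨x, (hM x).2 hxD⟩ (by simpa [Subtype.ext_iff] using hx)
  obtain ⟨U1, hU1, hU1χ⟩ : ∃ U1 ∈ 𝓝 (0 : X), ∀ m : M, (m : X) ∈ U1 → ‖χ m‖ ≤ 1 / 20 := by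
    have h1 : χ ⁻¹' (Metric.closedBall 0 (1 / 20)) ∈ 𝓝 (0 : M) :=
      hχ.continuousAt.preimage_mem_nhds (by
        rw [map_zero]; exact Metric.closedBall_mem_nhds _ (by norm_num))
    rw [nhds_subtype_eq_comap] at h1
    obtain ⟨U1, hU1, h⟩ := h1
    exact ⟨U1, hU1, fun m hm => by simpa using h hm⟩
  obtain ⟨U, hU, hUs, hU3, hUU1, hU2, -⟩ := exists_sym3 hU1
  obtain ⟨k, hk⟩ := hDM U hU
  choose m hmM hmU using fun d : D k => hk d d.2
  obtain ⟨f, hf⟩ := hyers (fun d : D k => χ ⟨m d, hmM d⟩) le_rfl (by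
    intro a b
    rw [← map_add, ← map_sub]
    apply hU1χ
    have := hU3 _ (hUs _ (hmU a)) _ (hUs _ (hmU b)) _ (hmU (a + b))
    convert this using 1
    push_cast
    abel)
  have hfχ : ∀ y (hy : y ∈ M), f ⟨y, (hM y).1 hy k⟩ = χ ⟨y, hy⟩ := by
    have h1 : ∀ y (hy : y ∈ M), ‖f ⟨y, (hM y).1 hy k⟩ - χ ⟨y, hy⟩‖ ≤ 1 / 4 := by
      intro y hy
      have h2 := hf ⟨y, (hM y).1 hy k⟩
      have h3 : ‖χ ⟨m ⟨y, (hM y).1 hy k⟩, hmM _⟩ - χ ⟨y, hy⟩‖ ≤ 1 / 20 := by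
        rw [← map_sub]
        apply hU1χ
        have := hUs _ (hmU ⟨y, (hM y).1 hy k⟩)
        apply hUU1
        simpa using this
      have h4 := norm_add_le_of_le h2 h3
      rw [sub_add_sub_cancel] at h4
      linarith
    intro y hy
    rw [← sub_eq_zero]
    apply uac_zero
    intro j
    have := h1 (2 ^ j • y) (M.nsmul_mem hy _)
    have e1 : (⟨2 ^ j • y, (hM _).1 (M.nsmul_mem hy _) k⟩ : D k) = 2 ^ j • ⟨y, (hM y).1 hy k⟩ := rfl
    have e2 : (⟨2 ^ j • y, M.nsmul_mem hy _⟩ : M) = 2 ^ j • ⟨y, hy⟩ := rfl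
    rw [e1, e2, map_nsmul, map_nsmul, ← smul_sub] at this
    exact this
  obtain ⟨g, hg⟩ := uac_extend (D k) f
  refine ⟨g, ?_, ?_⟩
  · apply cont_of_open
    intro δ hδ
    obtain ⟨N, hN⟩ := pow_unbounded_of_one_lt (1 / δ) one_lt_two
    refine ⟨D k ∩ invDiv (2 ^ N) U, Filter.inter_mem ((hopen k).mem_nhds (D k).zero_mem)
      (invDiv_nhds hU _), ?_⟩
    rintro y ⟨hy1, hy2⟩
    have h1 : ∀ d : D k, (d : X) ∈ U → ‖f d‖ ≤ 1 / 4 := by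
      intro d hd
      have h2 := hf d
      have h3 : ‖χ ⟨m d, hmM _⟩‖ ≤ 1 / 20 := by
        apply hU1χ
        have := hU2 _ (hUs _ (hmU d)) _ hd
        simpa using this
      have h4 := norm_add_le_of_le h2 h3
      rw [sub_add_cancel] at h4
      linarith
    have h2 : ‖g y‖ ≤ 1 / 4 / 2 ^ N := by
      apply uac_small
      intro j hj
      rw [← map_nsmul, hg ⟨_, (D k).nsmul_mem hy1 _⟩]
      apply h1
      exact hy2 _ Nat.one_le_two_pow (Nat.pow_le_pow_right (by norm_num) hj)
    refine h2.trans ?_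
    rw [div_le_iff₀ (by positivity)]
    rw [div_lt_iff₀ hδ] at hN
    linarith
  · rw [hg ⟨x, hxD k⟩]
    rw [hfχ x ((hM x).2 hxD)]
    exact hχx


theorem map_sep {X : Type*} [AddCommGroup X] [TopologicalSpace X] [IsTopologicalAddGroup X]
    [T2Space X] (D : ℕ → AddSubgroup X) (hanti : Antitone D)
    (hopen : ∀ k, IsOpen (D k : Set X)) (hcov : ∀ U ∈ 𝓝 (0 : X), ∃ k, Cov (D k : Set X) U)
    {x : X} (hx : x ≠ 0) : ∃ f : X →+ UnitAddCircle, Continuous f ∧ f x ≠ 0 := by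
  letI : UniformSpace X := IsTopologicalAddGroup.rightUniformSpace X
  haveI : IsUniformAddGroup X := isUniformAddGroup_of_addCommGroup
  let i : X →+ UniformSpace.Completion X := UniformSpace.Completion.toCompl
  have hic : Continuous i := UniformSpace.Completion.continuous_toCompl
  have hdi : IsDenseInducing i := UniformSpace.Completion.isDenseInducing_coe
  have hinj : Function.Injective i := UniformSpace.Completion.coe_injective X
  let D' : ℕ → AddSubgroup (UniformSpace.Completion X) := fun k =>
    ((D k).map i).topologicalClosure
  obtain ⟨f, hf, hfx⟩ := sep_complete D' (fun a b hab => AddSubgroup.topologicalClosure_mono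
    (AddSubgroup.map_mono (hanti hab))) (fun k => by
      apply AddSubgroup.isOpen_of_mem_nhds (g := 0)
      have := hdi.closure_image_mem_nhds ((hopen k).mem_nhds (D k).zero_mem)
      rw [map_zero] at this
      exact this) (fun U hU => by
      obtain ⟨U', hU', hc, hU'U⟩ := exists_mem_nhds_isClosed_subset hU
      obtain ⟨k, F, hF, h⟩ := hcov (i ⁻¹' U') (hic.continuousAt.preimage_mem_nhds
        (by rwa [map_zero]))
      refine ⟨k, i '' F, hF.image i, ?_⟩
      have hcl : IsClosed (⋃ f ∈ i '' F, (fun y => y - f) ⁻¹' U') :=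
        (hF.image i).isClosed_biUnion fun f _ => hc.preimage (by fun_prop)
      have hsub : closure (((D k).map i : AddSubgroup _) : Set (UniformSpace.Completion X)) ⊆
          (⋃ f ∈ i '' F, (fun y => y - f) ⁻¹' U') := by
        apply closure_minimal _ hcl
        rintro _ ⟨d, hd, rfl⟩
        obtain ⟨f, hf, h⟩ := h d hd
        simp only [Set.mem_iUnion]
        refine ⟨i f, ⟨f, hf, rfl⟩, ?_⟩
        rw [Set.mem_preimage, ← map_sub]
        exact h
      intro a ha
      have := hsub ha
      simp only [Set.mem_iUnion] at this
      obtain ⟨f, hf, h⟩ := this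
      exact ⟨f, hf, hU'U h⟩) (x := i x) (fun h => hx (hinj (by rw [h, map_zero])))
  exact ⟨f.comp i, hf.comp hic, hfx⟩

theorem map_crit {X : Type*} [AddCommGroup X] [TopologicalSpace X] [IsTopologicalAddGroup X]
    [T2Space X] (hmin : IsMinimal X) (D : ℕ → AddSubgroup X) (hanti : Antitone D)
    (hopen : ∀ k, IsOpen (D k : Set X)) (hcov : ∀ U ∈ 𝓝 (0 : X), ∃ k, Cov (D k : Set X) U) :
    ∀ V ∈ 𝓝 (0 : X), Cov Set.univ V := by
  let I := {f : X →+ UnitAddCircle // Continuous f}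
  let Φ : X →+ (I → UnitAddCircle) := AddMonoidHom.mk' (fun x f => f.1 x) (fun a b => by
    funext f; simp)
  have hΦ : Continuous Φ := continuous_pi fun f => f.2
  have key := locMin_apply (isMinimal_iff.1 hmin)
    (ι := {O : Set (I → UnitAddCircle) // O ∈ 𝓝 0}) (fun O => Φ ⁻¹' O.1)
    (fun O => by simpa using mem_of_mem_nhds O.2)
    (fun O => by
      obtain ⟨V, hV, hs, h3, hVU, h2, hd, -⟩ := exists_sym3 O.2
      refine ⟨⟨V, hV⟩, fun x hx => ?_⟩
      simp only [Set.mem_preimage, map_neg] at *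
      exact hVU (hs _ hx))
    (fun O => by
      obtain ⟨V, hV, hs, h3, hVU, h2, hd, -⟩ := exists_sym3 O.2
      refine ⟨⟨V, hV⟩, fun x hx y hy => ?_⟩
      simp only [Set.mem_preimage, map_add] at *
      exact h2 _ hx _ hy)
    (fun O P => ⟨⟨O.1 ∩ P.1, Filter.inter_mem O.2 P.2⟩, fun x hx => hx.1, fun x hx => hx.2⟩)
    (fun x hx => by
      obtain ⟨f, hf, hfx⟩ := map_sep D hanti hopen hcov hx
      have h1 : ({y | y ≠ Φ x} : Set (I → UnitAddCircle)) ∈ 𝓝 0 :=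
        isOpen_ne.mem_nhds (fun h => hfx (congrFun h ⟨f, hf⟩).symm)
      obtain ⟨V, hV, hs, h3, hVU, h2, hd, -⟩ := exists_sym3 h1
      refine ⟨Φ ⁻¹' V, hΦ.continuousAt.preimage_mem_nhds (by rwa [map_zero]), ⟨V, hV⟩, ?_⟩
      rintro ⟨a, ha, b, hb, rfl⟩
      exact h2 _ ha _ hb (map_add Φ a b).symm)
    ⟨Set.univ, Filter.univ_mem, ⟨Set.univ, Filter.univ_mem⟩, Set.subset_univ _⟩
  intro V hV
  obtain ⟨O, hO⟩ := key V hV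
  obtain ⟨P, hP, hs, h3, hVU, h2, hd, -⟩ := exists_sym3 O.2
  have : Cov (Set.range Φ) P := (cov_of_tb (isCompact_univ.totallyBounded) P hP).mono
    (Set.subset_univ _) subset_rfl
  obtain ⟨F, hF, hFA, h⟩ := cov_subset this
  choose! g hg using fun f (hf : f ∈ F) => hFA hf
  refine ⟨g '' F, hF.image g, fun a _ => ?_⟩
  obtain ⟨f, hf, v, hv, w, hw, e⟩ := h (Φ a) ⟨a, rfl⟩
  refine ⟨g f, ⟨f, hf, rfl⟩, hO ?_⟩
  rw [Set.mem_preimage, map_sub, hg f hf, e]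
  exact hd _ hv _ hw


theorem union_lem {G : Type*} [AddCommGroup G] {ι : Type*} [DecidableEq ι] (Y : ι → Set G)
    (T : Finset ι) : (∀ s ∈ T, ¬ Cov Set.univ (Y s - Y s)) → ∀ (E : ι → Set G),
    (∀ s, (E s).Finite) → ∃ x, ∀ s ∈ T, ∀ e ∈ E s, x - e ∉ Y s := by
  induction T using Finset.induction_on with
  | empty => intro _ E _; exact ⟨0, by simp⟩
  | insert r T hr ih =>
    intro h E hE
    have h1 := h r (Finset.mem_insert_self _ _)
    have h2 : ∃ x0, ∀ f ∈ E r, x0 - f ∉ Y r - Y r := by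
      by_contra hc
      push Not at hc
      exact h1 ⟨E r, hE r, fun a _ => hc a⟩
    obtain ⟨x0, hx0⟩ := h2
    by_contra hcon
    push Not at hcon
    obtain ⟨x, hx⟩ := ih (fun s hs => h s (Finset.mem_insert_of_mem hs))
      (fun s => E s ∪ Set.image2 (fun a b => a - x0 + b) (E r) (E s))
      (fun s => (hE s).union ((hE r).image2 _ (hE s)))
    obtain ⟨s, hs, e, he, hxe⟩ := hcon x
    rw [Finset.mem_insert] at hs
    rcases hs with rfl | hs
    · obtain ⟨s', hs', e', he', hxe'⟩ := hcon (x0 + (x - e))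
      rw [Finset.mem_insert] at hs'
      rcases hs' with rfl | hs'
      · exact hx0 e' he' ⟨_, hxe', _, hxe, by abel⟩
      · refine hx s' hs' (e - x0 + e') (Or.inr ⟨e, he, e', he', rfl⟩) ?_
        convert hxe' using 1
        abel
    · exact hx s hs e (Or.inl he) hxe

theorem select_lem {G : Type*} [AddCommGroup G] {ι : Type*} [DecidableEq ι] (T : Finset ι)
    (m : ι → ℕ) (Y U : ι → Set G)
    (hY : ∀ s ∈ T, ∀ a ∈ Y s, ∀ b ∈ Y s, ∀ c ∈ Y s, ∀ d ∈ Y s, (a - b) - (c - d) ∈ U s)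
    (h : ∀ s ∈ T, ¬ Cov (Set.range fun x : G => m s • x) (U s)) (E : ι → Set G)
    (hE : ∀ s, (E s).Finite) : ∃ x : G, ∀ s ∈ T, ∀ e ∈ E s, m s • x - e ∉ Y s := by
  classical
  let c : ι → G → G := fun s e => if h : ∃ y : G, m s • y - e ∈ Y s then h.choose else 0
  obtain ⟨x, hx⟩ := union_lem (fun s => {x : G | m s • x ∈ Y s - Y s}) T (by
    intro s hs hc
    apply h s hs
    obtain ⟨F, hF, hc⟩ := hc
    refine ⟨(fun x => m s • x) '' F, hF.image _, ?_⟩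
    rintro _ ⟨x, rfl⟩
    obtain ⟨f, hf, u, hu, v, hv, e⟩ := hc x trivial
    refine ⟨_, ⟨f, hf, rfl⟩, ?_⟩
    obtain ⟨a, ha, b, hb, e1⟩ := hu
    obtain ⟨a', ha', b', hb', e2⟩ := hv
    have : m s • x - m s • f = (a - b) - (a' - b') := by
      simp only at e1 e2 e
      rw [e1, e2, ← smul_sub, ← smul_sub, e]
    simp only [this]
    exact hY s hs _ ha _ hb _ ha' _ hb') (fun s => c s '' E s) (fun s => (hE s).image _)
  refine ⟨x, fun s hs e he hxe => ?_⟩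
  have hex : ∃ y : G, m s • y - e ∈ Y s := ⟨x, hxe⟩
  have hce : c s e = hex.choose := dif_pos hex
  have hc := hex.choose_spec
  rw [← hce] at hc
  refine hx s hs _ ⟨e, he, rfl⟩ ⟨_, hxe, _, hc, ?_⟩
  simp only [smul_sub]
  abel

theorem seq_lem {G : Type*} [Zero G] (P : ℕ → (ℕ → G) → G → Prop) (h : ∀ n f, ∃ a, P n f a) :
    ∃ x : ℕ → G, ∀ n, P n (fun i => if i < n then x i else 0) (x n) := by
  choose g hg using h
  let x : ℕ → G := fun n => Nat.strongRec (motive := fun _ => G)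
    (fun n ih => g n (fun i => if h : i < n then ih i h else 0)) n
  refine ⟨x, fun n => ?_⟩
  have : x n = g n (fun i => if i < n then x i else 0) := by
    simp only [x]
    conv_lhs => rw [Nat.strongRec_eq]
    simp
  rw [this]
  convert hg n (fun i => if i < n then x i else 0) using 1

theorem comb_finite {G : Type*} [AddCommGroup G] (K : ℕ) (x : ℕ → G) (n : ℕ) :
    {g : G | ∃ c : ℕ → ℤ, (∀ i, |c i| ≤ K) ∧ g = ∑ i ∈ Finset.range n, c i • x i}.Finite := by
  induction n with
  | zero =>
    apply (Set.finite_singleton (0 : G)).subset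
    rintro _ ⟨c, _, rfl⟩
    simp
  | succ n ih =>
    apply (ih.image2 (· + ·) ((Set.finite_Icc (-(K : ℤ)) K).image fun z : ℤ => z • x n)).subset
    rintro _ ⟨c, hc, rfl⟩
    refine ⟨_, ⟨c, hc, rfl⟩, _, ⟨c n, abs_le.1 (hc n), rfl⟩, ?_⟩
    rw [Finset.sum_range_succ]

theorem F1 {G : Type*} [AddCommGroup G] [TopologicalSpace G] [IsTopologicalAddGroup G] [T2Space G]
    (hmin : IsMinimal G) {U : Set G} (hU : U ∈ 𝓝 (0 : G)) :
    ∃ k : ℕ, 1 ≤ k ∧ Cov (Set.range fun x : G => k • x) U := by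
  by_contra hcon
  push Not at hcon
  obtain ⟨W, hW, hWs, -, -, -, -, hW4⟩ := exists_sym3 hU
  obtain ⟨x, hx⟩ := seq_lem (G := G) (fun n f a => ∀ l : ℕ, 1 ≤ l → l ≤ 2 ^ (n + 1) →
    ∀ c : ℕ → ℤ, (∀ i, |c i| ≤ (2 ^ (n + 1) : ℕ)) → l • a - ∑ i ∈ Finset.range n, c i • f i ∉ W)
    (by
      intro n f
      obtain ⟨a, ha⟩ := select_lem (Finset.Icc 1 (2 ^ (n + 1))) (fun l => l) (fun _ => W)
        (fun _ => U) (by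
          intro s _ a ha b hb c hc d hd
          have := hW4 _ ha _ (hWs _ hb) _ (hWs _ hc) _ hd
          convert this using 1
          abel) (by
          intro s hs
          exact hcon s (Finset.mem_Icc.1 hs).1) 
          (fun _ => {g : G | ∃ c : ℕ → ℤ, (∀ i, |c i| ≤ (2 ^ (n + 1) : ℕ)) ∧
            g = ∑ i ∈ Finset.range n, c i • f i}) (fun _ => comb_finite _ _ _)
      exact ⟨a, fun l h1 h2 c hc => ha l (Finset.mem_Icc.2 ⟨h1, h2⟩) _ ⟨c, hc, rfl⟩⟩)
  have hx' : ∀ n, ∀ l : ℕ, 1 ≤ l → l ≤ 2 ^ (n + 1) →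
    ∀ c : ℕ → ℤ, (∀ i, |c i| ≤ (2 ^ (n + 1) : ℕ)) →
      l • x n - ∑ i ∈ Finset.range n, c i • x i ∉ W := by
    intro n l h1 h2 c hc
    have := hx n l h1 h2 c hc
    rwa [Finset.sum_congr rfl (g := fun i => c i • x i)] at this
    intro i hi
    simp only [if_pos (Finset.mem_range.1 hi)]
  let lc : (ℕ →₀ ℤ) →ₗ[ℤ] G := Finsupp.linearCombination ℤ x
  have hlc : ∀ (c : ℕ →₀ ℤ) (m : ℕ), (∀ i, m ≤ i → c i = 0) →
      lc c = ∑ i ∈ Finset.range m, c i • x i := by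
    intro c m hm
    simp only [lc, Finsupp.linearCombination_apply]
    apply Finsupp.sum_of_support_subset _ _ _ (by simp)
    intro i hi
    rw [Finset.mem_range]
    by_contra hmi
    exact (Finsupp.mem_support_iff.1 hi) (hm i (not_lt.1 hmi))
  have key : ∀ c : ℕ →₀ ℤ, (∀ i, |c i| ≤ (2 ^ (i + 1) : ℕ)) → lc c ∈ W → c = 0 := by
    intro c hc hcW
    by_contra hc0
    have hne : c.support.Nonempty := Finsupp.support_nonempty_iff.2 hc0
    let m := c.support.max' hne
    have hm : c m ≠ 0 := Finsupp.mem_support_iff.1 (c.support.max'_mem hne)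
    have hgt : ∀ i, m + 1 ≤ i → c i = 0 := by
      intro i hi
      by_contra h
      have := c.support.le_max' i (Finsupp.mem_support_iff.2 h)
      omega
    have e := hlc c (m + 1) hgt
    rw [Finset.sum_range_succ] at e
    -- sign normalisation
    have hbd : ∀ i, |if i < m then c i else 0| ≤ ((2 ^ (m + 1) : ℕ) : ℤ) := by
      intro i
      split_ifs with hi
      · refine (hc i).trans ?_
        exact_mod_cast Nat.pow_le_pow_right (by norm_num) (by omega)
      · simp
    have hsum : ∑ i ∈ Finset.range m, c i • x i
        = ∑ i ∈ Finset.range m, (if i < m then c i else 0) • x i := by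
      apply Finset.sum_congr rfl
      intro i hi
      rw [if_pos (Finset.mem_range.1 hi)]
    have hcm := abs_le.1 (hc m)
    rcases lt_or_gt_of_ne hm with h | h
    · apply hx' m (-c m).toNat (by omega) (by omega) (fun i => if i < m then c i else 0) hbd
      have := hWs _ hcW
      rw [e, hsum] at this
      convert this using 1
      rw [← natCast_zsmul, Int.toNat_of_nonneg (by omega)]
      simp only [neg_smul]
      abel
    · apply hx' m (c m).toNat (by omega) (by omega) (fun i => -(if i < m then c i else 0))
        (fun i => by rw [abs_neg]; exact hbd i)
      rw [e, hsum] at hcW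
      convert hcW using 1
      rw [← natCast_zsmul, Int.toNat_of_nonneg (by omega)]
      simp only [neg_smul, Finset.sum_neg_distrib]
      abel
  let B : ℕ → Set G := fun n => {b | ∃ c : ℕ →₀ ℤ, (∀ i, |c i| * 2 ^ n ≤ 2 ^ i) ∧ b = lc c}
  have hB1 : ∀ n (c : ℕ →₀ ℤ), (∀ i, |c i| * 2 ^ n ≤ 2 ^ i) → ∀ i, |c i| ≤ 2 ^ i := by
    intro n c h i
    refine le_trans ?_ (h i)
    have : (1 : ℤ) ≤ 2 ^ n := one_le_pow₀ (by norm_num)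
    nlinarith [abs_nonneg (c i)]
  have hmono : ∀ a b, a ≤ b → B b ⊆ B a := by
    rintro a b hab _ ⟨c, hc, rfl⟩
    refine ⟨c, fun i => le_trans ?_ (hc i), rfl⟩
    have : (2 : ℤ) ^ a ≤ 2 ^ b := pow_le_pow_right₀ (by norm_num) hab
    nlinarith [abs_nonneg (c i)]
  have fin := locMin_apply (isMinimal_iff.1 hmin) B
    (fun n => ⟨0, by simp, by simp⟩)
    (fun n => ⟨n, by
      rintro _ ⟨c, hc, rfl⟩
      exact ⟨-c, by simpa using hc, by simp⟩⟩)
    (fun n => ⟨n + 1, by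
      rintro _ ⟨c, hc, rfl⟩ _ ⟨d, hd, rfl⟩
      refine ⟨c + d, fun i => ?_, by simp⟩
      have h1 := hc i
      have h2 := hd i
      have h3 := abs_add_le (c i) (d i)
      rw [pow_succ] at h1 h2
      rw [Finsupp.add_apply]
      have : (0 : ℤ) ≤ 2 ^ n := by positivity
      nlinarith⟩)
    (fun a b => ⟨max a b, hmono _ _ (le_max_left _ _), hmono _ _ (le_max_right _ _)⟩)
    (fun y hy => by
      obtain ⟨V, hV, hVs, -, -, -, hVd, -⟩ := exists_sym3 hW
      by_cases hyB : y ∈ V + B 0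
      swap
      · exact ⟨V, hV, 0, hyB⟩
      obtain ⟨v, hv, _, ⟨c, hc, rfl⟩, rfl⟩ := hyB
      obtain ⟨N, hN⟩ : ∃ N, ∀ i, N ≤ i → c i = 0 := by
        refine ⟨c.support.sup id + 1, fun i hi => ?_⟩
        by_contra h
        have : id i ≤ c.support.sup id := Finset.le_sup (Finsupp.mem_support_iff.2 h)
        simp only [id] at this
        omega
      refine ⟨V ∩ {z | z ≠ v + lc c}, Filter.inter_mem hV (isOpen_ne.mem_nhds hy.symm), N, ?_⟩
      rintro ⟨v', ⟨hv', hne⟩, _, ⟨d, hd, rfl⟩, e⟩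
      simp only at e
      have h1 : c - d = 0 := by
        apply key
        · intro i
          have h1 := hB1 _ _ hc i
          have h2 := hB1 _ _ hd i
          have h3 := abs_sub (c i) (d i)
          rw [Finsupp.sub_apply]
          push_cast
          rw [pow_succ]
          linarith
        · rw [map_sub]
          have := hVd _ hv' _ hv
          convert this using 1
          rw [sub_eq_sub_iff_add_eq_add, add_comm, ← e, add_comm]
      have h2 : d = 0 := by
        ext i
        rw [Finsupp.zero_apply]
        rcases lt_or_ge i N with hi | hi
        · have h3 := hd i
          by_contra h4
          have h5 : 1 ≤ |d i| := Int.one_le_abs h4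
          have h6 : (2 : ℤ) ^ i < 2 ^ N := pow_lt_pow_right₀ (by norm_num) hi
          have h7 : (0 : ℤ) < 2 ^ N := by positivity
          have h8 := mul_le_mul_of_nonneg_right h5 h7.le
          linarith
        · rw [← sub_eq_zero.1 h1]; exact hN i hi
      rw [h2, map_zero, add_zero] at e
      exact hne e)
    ⟨Set.univ, Filter.univ_mem, 0, Set.subset_univ _⟩
  obtain ⟨n, hn⟩ := fin W hW
  have h1 : lc (Finsupp.single n 1) ∈ W := hn ⟨_, fun i => by
    rw [Finsupp.single_apply]; split_ifs with h
    · subst h; simp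
    · simp, rfl⟩
  have h2 := key _ (fun i => by
    rw [Finsupp.single_apply]; split_ifs with h
    · simp [one_le_pow₀]
    · simp) h1
  have := DFunLike.congr_fun h2 n
  simp at this


/-- Multiples of `m`. -/
def HH (G : Type*) [AddCommGroup G] (m : ℕ) : AddSubgroup G := (nsmulAddMonoidHom m).range

theorem mem_HH {G : Type*} [AddCommGroup G] {m : ℕ} {g : G} : g ∈ HH G m ↔ ∃ y : G, m • y = g :=
  Iff.rfl

theorem HH_coe {G : Type*} [AddCommGroup G] (m : ℕ) :
    (HH G m : Set G) = Set.range fun x : G => m • x := rfl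

theorem HH_mono {G : Type*} [AddCommGroup G] {a b : ℕ} (h : a ∣ b) : HH G b ≤ HH G a := by
  obtain ⟨c, rfl⟩ := h
  rintro _ ⟨y, rfl⟩
  exact mem_HH.2 ⟨c • y, (mul_smul a c y).symm⟩

theorem cov_trans {G : Type*} [AddCommGroup G] {A B V W : Set G} (h1 : Cov A (B + V))
    (h2 : Cov B W) : Cov A (W + V) := by
  obtain ⟨F, hF, h1⟩ := h1
  obtain ⟨E, hE, h2⟩ := h2
  refine ⟨F + E, hF.add hE, fun a ha => ?_⟩
  obtain ⟨f, hf, b, hb, v, hv, e⟩ := h1 a ha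
  obtain ⟨g, hg, h⟩ := h2 b hb
  refine ⟨f + g, ⟨f, hf, g, hg, rfl⟩, b - g, h, v, hv, ?_⟩
  simp only at e ⊢
  rw [← sub_sub, ← e]
  abel

section
variable {G : Type*} [AddCommGroup G] [TopologicalSpace G] [IsTopologicalAddGroup G]

theorem cov_closure {A : Set G} (h : ∀ U ∈ 𝓝 (0 : G), ∃ B : Set G, A ⊆ B ∧ Cov B U) :
    ∀ U ∈ 𝓝 (0 : G), Cov (closure A) U := by
  intro U hU
  obtain ⟨U', hU', hc, hU'U⟩ := exists_mem_nhds_isClosed_subset hU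
  obtain ⟨B, hAB, F, hF, h⟩ := h U' hU'
  refine ⟨F, hF, ?_⟩
  have hcl : IsClosed (⋃ f ∈ F, (fun y => y - f) ⁻¹' U') :=
    hF.isClosed_biUnion fun f _ => hc.preimage (by fun_prop)
  have hsub : closure A ⊆ (⋃ f ∈ F, (fun y => y - f) ⁻¹' U') := by
    apply closure_minimal _ hcl
    intro d hd
    obtain ⟨f, hf, h⟩ := h d (hAB hd)
    simp only [Set.mem_iUnion]
    exact ⟨f, hf, h⟩
  intro a ha
  have := hsub ha
  simp only [Set.mem_iUnion] at this
  obtain ⟨f, hf, h⟩ := this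
  exact ⟨f, hf, hU'U h⟩

theorem cov_closure' {A : Set G} {U : Set G} (hU : IsClosed U) (h : Cov A U) :
    Cov (closure A) U := by
  obtain ⟨F, hF, h⟩ := h
  refine ⟨F, hF, ?_⟩
  have hcl : IsClosed (⋃ f ∈ F, (fun y => y - f) ⁻¹' U) :=
    hF.isClosed_biUnion fun f _ => hU.preimage (by fun_prop)
  have hsub : closure A ⊆ (⋃ f ∈ F, (fun y => y - f) ⁻¹' U) := by
    apply closure_minimal _ hcl
    intro d hd
    obtain ⟨f, hf, h⟩ := h d hd
    simp only [Set.mem_iUnion]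
    exact ⟨f, hf, h⟩
  intro a ha
  have := hsub ha
  simp only [Set.mem_iUnion] at this
  obtain ⟨f, hf, h⟩ := this
  exact ⟨f, hf, h⟩

theorem finish [T2Space G] (hmin : IsMinimal G) (S : AddSubgroup G) (D : ℕ → AddSubgroup G)
    (hanti : Antitone D) (hO : ∀ k, ∃ O ∈ 𝓝 (0 : G), ∀ s ∈ S, s ∈ O → s ∈ D k)
    (hcov : ∀ U ∈ 𝓝 (0 : G), ∃ k, Cov (D k : Set G) U) :
    ∀ V ∈ 𝓝 (0 : G), Cov (S : Set G) V := by
  let N := S.topologicalClosure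
  have hN : IsMinimal N := minimal_of_closed (isMinimal_iff.1 hmin) N
    S.isClosed_topologicalClosure ⟨Set.univ, Filter.univ_mem, Set.subset_univ _⟩
  have key := map_crit hN (fun k => (D k).topologicalClosure.addSubgroupOf N)
    (fun a b hab => AddSubgroup.comap_mono (AddSubgroup.topologicalClosure_mono (hanti hab)))
    (fun k => by
      apply AddSubgroup.isOpen_of_mem_nhds (g := 0)
      obtain ⟨O, hO, h⟩ := hO k
      rw [nhds_subtype_eq_comap]
      refine ⟨interior O, interior_mem_nhds.2 hO, ?_⟩
      rintro ⟨y, hy⟩ hyO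
      change y ∈ closure (D k : Set G)
      have h1 : y ∈ closure (interior O ∩ (S : Set G)) :=
        (isOpen_interior.inter_closure ⟨hyO, hy⟩)
      exact closure_mono (fun s hs => h s hs.2 (interior_subset hs.1)) h1)
    (fun U hU => by
      rw [nhds_subtype_eq_comap] at hU
      obtain ⟨U', hU', hUU⟩ := hU
      obtain ⟨V, hV, -, -, -, -, hVd, -⟩ := exists_sym3 (U := U') hU'
      obtain ⟨V', hV', hc, hV'V⟩ := exists_mem_nhds_isClosed_subset hV
      obtain ⟨k, hk⟩ := hcov V' hV'
      have h1 := (cov_closure' hc hk).mono (B := closure (D k : Set G) ∩ N)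
        Set.inter_subset_left subset_rfl
      obtain ⟨F, hF, hFs, h⟩ := cov_subset h1
      refine ⟨k, Subtype.val ⁻¹' F, hF.preimage Subtype.val_injective.injOn, ?_⟩
      rintro ⟨a, haN⟩ ha
      obtain ⟨f, hf, v, hv, w, hw, e⟩ := h a ⟨ha, haN⟩
      refine ⟨⟨f, (hFs hf).2⟩, hf, hUU ?_⟩
      change a - f ∈ U'
      rw [e]
      exact hVd _ (hV'V hv) _ (hV'V hw))
  intro V hV
  obtain ⟨F, hF, h⟩ := key (Subtype.val ⁻¹' V) (continuous_subtype_val.continuousAt.preimage_mem_nhds hV)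
  refine ⟨Subtype.val '' F, hF.image _, fun a ha => ?_⟩
  obtain ⟨f, hf, h⟩ := h ⟨a, S.le_topologicalClosure ha⟩ trivial
  exact ⟨f, ⟨f, hf, rfl⟩, h⟩

/-- Multiplication pulls back neighbourhoods. -/
theorem smul_nhds {V : Set G} (hV : V ∈ 𝓝 (0 : G)) (m : ℕ) :
    {x : G | m • x ∈ V} ∈ 𝓝 (0 : G) := by
  have : Continuous (fun x : G => m • x) := by fun_prop
  exact this.continuousAt.preimage_mem_nhds (by simpa using hV)

theorem caseA [T2Space G] (hmin : IsMinimal G)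
    (h : ∀ n p : ℕ, 1 ≤ n → p.Prime → ∀ W ∈ 𝓝 (0 : G),
      Cov (HH G n : Set G) ((HH G (n * p) : Set G) + W)) :
    ∀ V ∈ 𝓝 (0 : G), Cov (Set.univ : Set G) V := by
  have h1 : ∀ m : ℕ, 1 ≤ m → ∀ W ∈ 𝓝 (0 : G), Cov (Set.univ : Set G) ((HH G m : Set G) + W) := by
    intro m
    induction m using induction_on_primes with
    | zero => intro h; omega
    | one =>
      intro _ W hW
      refine ⟨{0}, Set.finite_singleton _, fun a _ => ⟨0, rfl, a, mem_HH.2 ⟨a, by simp⟩, 0,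
        mem_of_mem_nhds hW, by simp⟩⟩
    | prime_mul p a hp ih =>
      intro h1 W hW
      have ha : 1 ≤ a := by
        rcases Nat.eq_zero_or_pos a with h | h
        · subst h; simp at h1
        · exact h
      obtain ⟨V, hV, -, -, -, hV2, -⟩ := exists_sym3 hW
      refine (cov_trans (ih ha V hV) (h a p ha hp V hV)).mono subset_rfl ?_
      rintro _ ⟨_, ⟨g, hg, v, hv, rfl⟩, w, hw, rfl⟩
      rw [mul_comm] at hg
      exact ⟨g, hg, v + w, hV2 _ hv _ hw, (add_assoc _ _ _).symm⟩
  intro V hV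
  obtain ⟨W, hW, -, -, -, hW2, -⟩ := exists_sym3 hV
  obtain ⟨k, hk, hc⟩ := F1 hmin hW
  refine (cov_trans (h1 k hk W hW) hc).mono subset_rfl ?_
  rintro _ ⟨v, hv, w, hw, rfl⟩
  exact hW2 _ hv _ hw

/-- Non-covering at level `j`. -/
def NC (G : Type*) [AddCommGroup G] [TopologicalSpace G] (n p j : ℕ) : Prop :=
  ∃ W ∈ 𝓝 (0 : G), ¬ Cov (HH G (n * p ^ j) : Set G) ((HH G (n * p ^ (j + 1)) : Set G) + W)

theorem star_seq (n p : ℕ) (hp : p.Prime) :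
    ∃ (x : ℕ → G) (W : ℕ → Set G), (∀ i, ∃ y, x i = n • y) ∧ (∀ j, W j ∈ 𝓝 (0 : G)) ∧
      ∀ i j, j ≤ i → NC G n p j → ∀ u, 1 ≤ u → u < p → ∀ c : ℕ → ℤ,
        (∀ i', |c i'| ≤ (p ^ (i + 1) : ℕ)) →
        (p ^ j * u) • x i - ∑ i' ∈ Finset.range i, c i' • x i' ∉
          (HH G (n * p ^ (j + 1)) : Set G) + W j := by
  classical
  have h0 : ∀ j, ∃ U ∈ 𝓝 (0 : G), NC G n p j →
      ¬ Cov (HH G (n * p ^ j) : Set G) ((HH G (n * p ^ (j + 1)) : Set G) + U) := by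
    intro j
    by_cases h : NC G n p j
    · obtain ⟨W, hW, h⟩ := h
      exact ⟨W, hW, fun _ => h⟩
    · exact ⟨Set.univ, Filter.univ_mem, fun h' => absurd h' h⟩
  choose U hU hNC using h0
  choose W hW hWs _ _ _ _ hW4 using fun j => exists_sym3 (hU j)
  obtain ⟨y, hy⟩ := seq_lem (G := G) (fun i f a => ∀ j, j ≤ i → NC G n p j →
      ∀ u, 1 ≤ u → u < p → ∀ c : ℕ → ℤ,
        (∀ i', |c i'| ≤ (p ^ (i + 1) : ℕ)) →
        (n * (p ^ j * u)) • a - ∑ i' ∈ Finset.range i, c i' • (n • f i') ∉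
          (HH G (n * p ^ (j + 1)) : Set G) + W j) (by
    intro i f
    obtain ⟨a, ha⟩ := select_lem (((Finset.range (i + 1)) ×ˢ (Finset.Ico 1 p)).filter
        fun s => NC G n p s.1)
      (fun s => n * (p ^ s.1 * s.2)) (fun s => (HH G (n * p ^ (s.1 + 1)) : Set G) + W s.1)
      (fun s => (HH G (n * p ^ (s.1 + 1)) : Set G) + U s.1) (by
        rintro s - _ ⟨a, ha, a', ha', rfl⟩ _ ⟨b, hb, b', hb', rfl⟩ _ ⟨c, hc, c', hc', rfl⟩
          _ ⟨d, hd, d', hd', rfl⟩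
        refine ⟨_, sub_mem (sub_mem ha hb) (sub_mem hc hd), _,
          hW4 _ _ ha' _ (hWs _ _ hb') _ (hWs _ _ hc') _ hd', ?_⟩
        simp only
        abel) (by
        intro s hs hc
        simp only [Finset.mem_filter, Finset.mem_product, Finset.mem_range, Finset.mem_Ico] at hs
        obtain ⟨⟨hs1, hs2, hs3⟩, hN⟩ := hs
        apply hNC _ hN
        have hcop : IsCoprime (s.2 : ℤ) (p : ℤ) := by
          rw [Nat.isCoprime_iff_coprime]
          exact ((hp.coprime_iff_not_dvd).2 (Nat.not_dvd_of_pos_of_lt (by omega) hs3)).symm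
        obtain ⟨α, β, hab⟩ := hcop
        obtain ⟨F, hF, hc⟩ := hc
        refine ⟨F, hF, ?_⟩
        rintro _ ⟨y, rfl⟩
        obtain ⟨f, hf, h, hh, w, hw, e⟩ := hc _ ⟨α • y, rfl⟩
        obtain ⟨z, rfl⟩ := mem_HH.1 hh
        refine ⟨f, hf, _, mem_HH.2 ⟨z + β • y, rfl⟩, w, hw, ?_⟩
        simp only at e ⊢
        have e2 : (n * (p ^ s.1 * s.2)) • α • y = f + (n * p ^ (s.1 + 1)) • z + w := by
          rw [add_assoc, e]; abel
        have e3 : (nsmulAddMonoidHom (n * p ^ s.1)) y = (n * (p ^ s.1 * s.2)) • α • y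
            + (n * p ^ (s.1 + 1)) • β • y := by
          change (n * p ^ s.1) • y = _
          simp only [← natCast_zsmul, ← mul_smul, ← add_smul]
          congr 1
          push_cast
          linear_combination (-(n : ℤ) * p ^ s.1) * hab
        rw [e3, e2, smul_add]
        abel)
      (fun _ => {g : G | ∃ c : ℕ → ℤ, (∀ i', |c i'| ≤ (p ^ (i + 1) : ℕ)) ∧
            g = ∑ i' ∈ Finset.range i, c i' • (n • f i')}) (fun _ => comb_finite _ _ _)
    refine ⟨a, fun j hj hN u hu1 hu2 c hc => ?_⟩
    exact ha (j, u) (by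
      simp only [Finset.mem_filter, Finset.mem_product, Finset.mem_range, Finset.mem_Ico]
      exact ⟨⟨by omega, hu1, hu2⟩, hN⟩) _ ⟨c, hc, rfl⟩)
  refine ⟨fun i => n • y i, W, fun i => ⟨_, rfl⟩, hW, ?_⟩
  intro i j hj hN u hu1 hu2 c hc
  have := hy i j hj hN u hu1 hu2 c hc
  rw [Finset.sum_congr rfl (g := fun i' => c i' • n • y i')] at this
  · rwa [mul_comm n (p ^ j * u), mul_smul] at this
  · intro i' hi
    simp only [if_pos (Finset.mem_range.1 hi)]

/-- Properties of the sequence used. -/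
theorem star (n p : ℕ) (hp : p.Prime) :
    ∃ x : ℕ → G, (∀ i, ∃ y, x i = n • y) ∧ ∀ k, (∀ j < k, NC G n p j) →
      ∃ W ∈ 𝓝 (0 : G), ∀ (N : ℕ) (c : ℕ → ℤ), ∑ i ∈ Finset.range N, c i • x i ∈ W →
        ∀ i < N, k ≤ i + 1 → (p ^ k : ℤ) ∣ c i := by
  obtain ⟨x, W, hxn, hW, hx⟩ := star_seq (G := G) n p hp
  refine ⟨x, hxn, fun k hk => ?_⟩
  refine ⟨⋂ j ∈ Finset.range k, W j, (Filter.biInter_finset_mem _).2 fun j _ => hW j, ?_⟩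
  intro N c hc
  have hcj : ∀ j < k, ∑ i ∈ Finset.range N, c i • x i ∈ W j := by
    intro j hj
    simp only [Set.mem_iInter] at hc
    exact hc j (Finset.mem_range.2 hj)
  have main : ∀ j ≤ k, ∀ i < N, k ≤ i + 1 → (p ^ j : ℤ) ∣ c i := by
    intro j
    induction j with
    | zero => intro _ i _ _; simp
    | succ j ih =>
      intro hjk
      by_contra hcon
      push Not at hcon
      have hne : ((Finset.range N).filter fun i => k ≤ i + 1 ∧ ¬ (p ^ (j + 1) : ℤ) ∣ c i).Nonempty := by
        obtain ⟨i, h1, h2, h3⟩ := hcon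
        exact ⟨i, by simp only [Finset.mem_filter, Finset.mem_range]; exact ⟨h1, h2, h3⟩⟩
      obtain ⟨m, hm, hmax⟩ := Finset.exists_max_image _ id hne
      simp only [Finset.mem_filter, Finset.mem_range, id] at hm hmax
      obtain ⟨hmN, hkm, hnd⟩ := hm
      have hgt : ∀ i, m < i → i < N → (p ^ (j + 1) : ℤ) ∣ c i := by
        intro i h1 h2
        by_contra h3
        have := hmax i ⟨h2, by omega, h3⟩
        omega
      obtain ⟨w, hw⟩ := ih (by omega) m hmN hkm
      have hpw : ¬ (p : ℤ) ∣ w := by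
        rintro ⟨t, rfl⟩
        exact hnd ⟨t, by rw [hw]; ring⟩
      have hp0 : (0 : ℤ) < p := by exact_mod_cast hp.pos
      have hr0 := Int.emod_nonneg w hp0.ne'
      have hr1 := Int.emod_lt_of_pos w hp0
      have hr2 : w % p ≠ 0 := fun h => hpw (Int.dvd_of_emod_eq_zero h)
      have hq0 : (0 : ℤ) < p ^ (j + 1) := by positivity
      refine hx m j (by omega) (hk j (by omega)) (w % p).toNat (by omega) (by omega)
        (fun i => -(c i % p ^ (j + 1))) ?_ ?_
      · intro i
        rw [abs_neg, abs_of_nonneg (Int.emod_nonneg _ hq0.ne')]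
        refine (Int.emod_lt_of_pos _ hq0).le.trans ?_
        push_cast
        exact pow_le_pow_right₀ (by omega) (by omega)
      · have hsum : ∑ i ∈ Finset.range N, c i • x i - ((p ^ j * (w % p).toNat) • x m -
            ∑ i ∈ Finset.range m, (-(c i % p ^ (j + 1))) • x i) ∈ HH G (n * p ^ (j + 1)) := by
          have hsm : ∀ (z : ℤ) i, ((p ^ (j + 1) : ℤ) ∣ z) → z • x i ∈ HH G (n * p ^ (j + 1)) := by
            rintro _ i ⟨t, rfl⟩
            obtain ⟨y, hy⟩ := hxn i
            refine mem_HH.2 ⟨t • y, ?_⟩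
            rw [hy]
            simp only [← natCast_zsmul, ← mul_smul]
            congr 1
            push_cast
            ring
          have e : ∑ i ∈ Finset.range N, c i • x i - ((p ^ j * (w % p).toNat) • x m -
            ∑ i ∈ Finset.range m, (-(c i % p ^ (j + 1))) • x i) =
            ∑ i ∈ Finset.range m, (c i - c i % p ^ (j + 1)) • x i +
              (c m - p ^ j * (w % p)) • x m + ∑ i ∈ Finset.Ico (m + 1) N, c i • x i := by
            rw [← Finset.sum_range_add_sum_Ico _ (show m + 1 ≤ N by omega), Finset.sum_range_succ]
            simp only [sub_smul, neg_smul, Finset.sum_sub_distrib, Finset.sum_neg_distrib]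
            have : (p ^ j * (w % p).toNat) • x m = ((p : ℤ) ^ j * (w % p)) • x m := by
              rw [← natCast_zsmul]
              congr 1
              push_cast
              rw [Int.toNat_of_nonneg hr0]
            rw [this]
            abel
          rw [e]
          refine add_mem (add_mem (sum_mem fun i _ => hsm _ _ ?_) (hsm _ _ ?_))
            (sum_mem fun i hi => hsm _ _ ?_)
          · exact Int.dvd_self_sub_emod
          · rw [hw, ← mul_sub, pow_succ]
            exact mul_dvd_mul_left _ Int.dvd_self_sub_emod
          · rw [Finset.mem_Ico] at hi
            exact hgt i (by omega) hi.2
        refine ⟨_, neg_mem hsum, _, hcj j (by omega), ?_⟩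
        simp only
        abel
  exact main k le_rfl
end


theorem coef_exists (p : ℕ) (hp : p.Prime) : ∃ A : ℕ → ℕ, (∀ k, ¬ p ∣ A k) ∧
    (∀ k j, k ≤ j → A k ∣ A j) ∧ (∀ m, 1 ≤ m → ∃ k, m ∣ p ^ k * A k) := by
  have hd : ∀ k j : ℕ, k ≤ j → ordCompl[p] k.factorial ∣ ordCompl[p] j.factorial := fun k j h =>
    Nat.ordCompl_dvd_ordCompl_of_dvd (Nat.factorial_dvd_factorial h) p
  refine ⟨fun k => ordCompl[p] k.factorial,
    fun k => Nat.not_dvd_ordCompl hp (Nat.factorial_ne_zero k), hd, fun m hm => ?_⟩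
  refine ⟨max m (m.factorial.factorization p), ?_⟩
  refine (Nat.dvd_factorial hm le_rfl).trans ?_
  conv_lhs => rw [← Nat.ordProj_mul_ordCompl_eq_self m.factorial p]
  exact mul_dvd_mul (pow_dvd_pow _ (le_max_right _ _)) (hd _ _ (le_max_left _ _))

section
variable {G : Type*} [AddCommGroup G] [TopologicalSpace G] [IsTopologicalAddGroup G]

theorem covChain (n p : ℕ) (h : ¬ NC G n p 1) (k : ℕ) : ∀ W ∈ 𝓝 (0 : G),
    Cov (HH G (n * p) : Set G) ((HH G (n * p ^ (k + 1)) : Set G) + W) := by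
  unfold NC at h
  push Not at h
  induction k with
  | zero =>
    intro W hW
    refine ⟨{0}, Set.finite_singleton _, fun a ha => ⟨0, rfl, a, by simpa using ha, 0,
        mem_of_mem_nhds hW, by simp⟩⟩
  | succ k ih =>
    intro W hW
    obtain ⟨V, hV, -, -, -, hV2, -⟩ := exists_sym3 hW
    have h1 : Cov (HH G (n * p ^ (k + 1)) : Set G) ((HH G (n * p ^ (k + 1 + 1)) : Set G) + V) := by
      obtain ⟨F, hF, h⟩ := h _ (smul_nhds hV (p ^ k))
      refine ⟨(fun z => p ^ k • z) '' F, hF.image _, ?_⟩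
      rintro _ ⟨y, rfl⟩
      obtain ⟨f, hf, g, hg, v, hv, e⟩ := h _ ⟨y, rfl⟩
      obtain ⟨z, rfl⟩ := mem_HH.1 hg
      refine ⟨_, ⟨f, hf, rfl⟩, _, mem_HH.2 ⟨z, rfl⟩, _, hv, ?_⟩
      have e2 := congrArg (fun t => p ^ k • t) e
      simp only [smul_add, smul_sub, nsmulAddMonoidHom_apply, ← mul_smul] at e2 ⊢
      rw [show n * p ^ (k + 1 + 1) = p ^ k * (n * p ^ (1 + 1)) by ring,
        show n * p ^ (k + 1) = p ^ k * (n * p ^ 1) by ring]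
      exact e2
    refine (cov_trans (ih V hV) h1).mono subset_rfl ?_
    rintro _ ⟨_, ⟨g, hg, v, hv, rfl⟩, w, hw, rfl⟩
    exact ⟨g, hg, v + w, hV2 _ hv _ hw, (add_assoc _ _ _).symm⟩

theorem caseB [T2Space G] (hmin : IsMinimal G) (n p : ℕ) (hp : p.Prime) (h0 : NC G n p 0)
    (hor : (∀ j, NC G n p j) ∨ ¬ NC G n p 1) : False := by
  obtain ⟨A, hA, hAd, hAm⟩ := coef_exists p hp
  obtain ⟨x, hxn, hx⟩ := star (G := G) n p hp
  let x' : ℕ → G := fun i => A i • x i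
  have hp0 : 0 < p := hp.pos
  have hA0 : ∀ k, 0 < A k := fun k => Nat.pos_of_ne_zero fun h => hA k (by simp [h])
  have hx' : ∀ k, (∀ j < k, NC G n p j) →
      ∃ W ∈ 𝓝 (0 : G), ∀ (N : ℕ) (c : ℕ → ℤ), ∑ i ∈ Finset.range N, c i • x' i ∈ W →
        ∀ i < N, k ≤ i + 1 → (p ^ k : ℤ) ∣ c i := by
    intro k hk
    obtain ⟨W, hW, h⟩ := hx k hk
    refine ⟨W, hW, fun N c hc i hi hki => ?_⟩
    have h1 := h N (fun i => c i * A i) (by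
      simp only [mul_smul, natCast_zsmul]
      exact hc) i hi hki
    have hcop : IsCoprime ((p : ℤ) ^ k) (A i : ℤ) := by
      apply IsCoprime.pow_left
      rw [Nat.isCoprime_iff_coprime]
      exact (hp.coprime_iff_not_dvd).2 (hA i)
    exact hcop.dvd_of_dvd_mul_right h1
  let S : AddSubgroup G := (Finsupp.linearCombination ℤ x').toAddMonoidHom.range
  have hS : ∀ s ∈ S, ∃ c : ℕ → ℤ, ∃ N0, ∀ N ≥ N0, s = ∑ i ∈ Finset.range N, c i • x' i := by
    rintro _ ⟨c, rfl⟩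
    refine ⟨c, c.support.sup id + 1, fun N hN => ?_⟩
    change Finsupp.linearCombination ℤ x' c = _
    rw [Finsupp.linearCombination_apply]
    apply Finsupp.sum_of_support_subset _ _ _ (by simp)
    intro i hi
    rw [Finset.mem_range]
    have : id i ≤ c.support.sup id := Finset.le_sup hi
    simp only [id] at this
    omega
  have hxS : ∀ i, x' i ∈ S := fun i => ⟨Finsupp.single i 1, by
    change Finsupp.linearCombination ℤ x' _ = _
    simp⟩
  obtain ⟨W1, hW1, hW1d⟩ := hx' 1 (by
    intro j hj
    have : j = 0 := by omega
    rwa [this])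
  have hncov : ¬ ∀ V ∈ 𝓝 (0 : G), Cov (S : Set G) V := by
    intro hcov
    obtain ⟨V, hV, -, -, -, -, hVd, -⟩ := exists_sym3 hW1
    obtain ⟨F, hF, h⟩ := hcov V hV
    choose f hfF hf using fun i => h (x' i) (hxS i)
    obtain ⟨i, -, j, -, hij, e⟩ := Set.infinite_univ.exists_ne_map_eq_of_mapsTo
      (f := f) (s := (Set.univ : Set ℕ)) (t := F) (fun i _ => hfF i) hF
    have h1 := hVd _ (hf i) _ (hf j)
    have h2 := hW1d (max i j + 1) (fun l => (if l = i then 1 else 0) - (if l = j then 1 else 0)) (by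
      simp only [sub_smul, Finset.sum_sub_distrib, ite_smul, one_smul, zero_smul,
        Finset.sum_ite_eq', Finset.mem_range]
      rw [if_pos (by omega), if_pos (by omega)]
      rw [e] at h1
      convert h1 using 1
      abel) i (by omega) (by omega)
    rw [if_pos rfl, if_neg hij, sub_zero, pow_one] at h2
    have h3 : p ∣ 1 := by exact_mod_cast h2
    exact hp.one_lt.ne' (Nat.dvd_one.1 h3)
  have hQcov : ∀ U ∈ 𝓝 (0 : G), ∃ k, Cov (HH G (p ^ k * A k) : Set G) U := by
    intro U hU
    obtain ⟨m, hm, h⟩ := F1 hmin hU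
    obtain ⟨k, hk⟩ := hAm m hm
    exact ⟨k, h.mono (HH_mono hk) subset_rfl⟩
  have hQ0 : ∀ k, (0 : ℤ) < (p ^ k * A k : ℕ) := fun k => by
    have := hA0 k
    exact_mod_cast Nat.mul_pos (Nat.pow_pos hp0) (hA0 k)
  let Z : ℕ → Set G := fun k => {g : G | ∃ c : ℕ → ℤ, (∀ i, |c i| ≤ (p ^ k * A k : ℕ)) ∧
    g = ∑ i ∈ Finset.range k, c i • x' i}
  have hZ : ∀ k, (Z k).Finite := fun k => comb_finite _ _ _
  have hZr : ∀ k (c : ℕ → ℤ), ∃ z ∈ Z k, ∑ i ∈ Finset.range k, c i • x' i - z ∈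
      HH G (p ^ k * A k) := by
    intro k c
    refine ⟨∑ i ∈ Finset.range k, (c i % (p ^ k * A k : ℕ)) • x' i, ⟨_, fun i => ?_, rfl⟩, ?_⟩
    · rw [abs_of_nonneg (Int.emod_nonneg _ (hQ0 k).ne')]
      exact (Int.emod_lt_of_pos _ (hQ0 k)).le
    · rw [← Finset.sum_sub_distrib]
      refine sum_mem fun i _ => ?_
      rw [← sub_smul]
      obtain ⟨t, ht⟩ : ((p ^ k * A k : ℕ) : ℤ) ∣ c i - c i % (p ^ k * A k : ℕ) :=
        Int.dvd_self_sub_emod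
      rw [ht]
      refine mem_HH.2 ⟨t • x' i, ?_⟩
      rw [← natCast_zsmul, ← mul_smul]
  apply hncov
  rcases hor with hall | hno
  · refine finish hmin S (fun k => (HH G (p ^ k * A k)).topologicalClosure) ?_ ?_ ?_
    · intro a b hab
      exact AddSubgroup.topologicalClosure_mono
        (HH_mono (mul_dvd_mul (pow_dvd_pow _ hab) (hAd _ _ hab)))
    · intro k
      obtain ⟨W, hW, h⟩ := hx' k (fun j _ => hall j)
      let D := (HH G (p ^ k * A k)).topologicalClosure
      have hDc : IsClosed (D : Set G) := AddSubgroup.isClosed_topologicalClosure _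
      have hle : HH G (p ^ k * A k) ≤ D := AddSubgroup.le_topologicalClosure _
      refine ⟨W ∩ ⋂ z ∈ Z k, {s | z ∈ D ∨ s - z ∉ D}, Filter.inter_mem hW
        ((Filter.biInter_mem (hZ k)).2 fun z _ => ?_), ?_⟩
      · by_cases hz : z ∈ D
        · simp [hz]
        · simp only [hz, false_or]
          have hcl : IsOpen {s : G | s - z ∉ D} :=
            (hDc.preimage (show Continuous fun s : G => s - z by fun_prop)).isOpen_compl
          exact hcl.mem_nhds (by simpa using hz)
      · rintro s hs ⟨hsW, hsZ⟩
        simp only [Set.mem_iInter] at hsZ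
        obtain ⟨c, N0, hc⟩ := hS s hs
        have e := hc (max N0 k) (le_max_left _ _)
        have hdiv := h (max N0 k) c (by rw [← e]; exact hsW)
        obtain ⟨z, hz, hzr⟩ := hZr k c
        rw [← Finset.sum_range_add_sum_Ico _ (le_max_right N0 k)] at e
        have htail : ∑ i ∈ Finset.Ico k (max N0 k), c i • x' i ∈ HH G (p ^ k * A k) := by
          refine sum_mem fun i hi => ?_
          rw [Finset.mem_Ico] at hi
          obtain ⟨t, ht⟩ := hdiv i hi.2 (by omega)
          obtain ⟨a, ha⟩ := hAd k i hi.1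
          refine mem_HH.2 ⟨t • a • x i, ?_⟩
          rw [ht]
          simp only [x', ha, ← natCast_zsmul, ← mul_smul]
          congr 1
          push_cast
          ring
        have h1 : s - z ∈ D := by
          apply hle
          rw [e, add_sub_right_comm]
          exact add_mem hzr htail
        rcases hsZ z hz with h2 | h2
        · have := add_mem h1 h2
          rwa [sub_add_cancel] at this
        · exact absurd h1 h2
    · intro U hU
      obtain ⟨U', hU', hc, hU'U⟩ := exists_mem_nhds_isClosed_subset hU
      obtain ⟨k, hk⟩ := hQcov U' hU'
      exact ⟨k, (cov_closure' hc hk).mono subset_rfl hU'U⟩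
  · refine finish hmin S (fun _ => S.map (nsmulAddMonoidHom p)) (fun _ _ _ => le_rfl) ?_ ?_
    · intro _
      refine ⟨W1, hW1, fun s hs hsW => ?_⟩
      obtain ⟨c, N, hc⟩ := hS s hs
      have e := hc N le_rfl
      have hdiv := hW1d N c (by rw [← e]; exact hsW)
      rw [e]
      refine sum_mem fun i hi => ?_
      obtain ⟨t, ht⟩ := hdiv i (Finset.mem_range.1 hi) (by omega)
      refine ⟨t • x' i, S.zsmul_mem (hxS i) t, ?_⟩
      rw [ht, nsmulAddMonoidHom_apply, pow_one, mul_smul, natCast_zsmul]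
    · intro U hU
      refine ⟨0, ?_⟩
      obtain ⟨V, hV, -, -, -, hV2, -⟩ := exists_sym3 hU
      obtain ⟨k, hk⟩ := hQcov V hV
      obtain ⟨F, hF, hch⟩ := covChain n p hno k _ (smul_nhds hV (A k))
      have h1 : Cov (S.map (nsmulAddMonoidHom p) : Set G) ((HH G (p ^ k * A k) : Set G) + V) := by
        refine ⟨Z k + (fun f => A k • f) '' F, (hZ k).add (hF.image _), ?_⟩
        rintro _ ⟨s, hs, rfl⟩
        obtain ⟨c, N0, hc⟩ := hS s hs
        have e := hc (max N0 k) (le_max_left _ _)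
        obtain ⟨z, hz, hzr⟩ := hZr k (fun i => p * c i)
        rw [← Finset.sum_range_add_sum_Ico _ (le_max_right N0 k)] at e
        have htail : ∃ b ∈ HH G (n * p),
            p • ∑ i ∈ Finset.Ico k (max N0 k), c i • x' i = A k • b := by
          choose! a ha using hAd k
          refine ⟨∑ i ∈ Finset.Ico k (max N0 k), (p * c i * a i) • x i, sum_mem fun i hi => ?_, ?_⟩
          · obtain ⟨y, hy⟩ := hxn i
            refine mem_HH.2 ⟨(c i * a i) • y, ?_⟩
            rw [hy]
            simp only [← natCast_zsmul, ← mul_smul]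
            congr 1
            push_cast
            ring
          · rw [Finset.smul_sum, Finset.smul_sum]
            refine Finset.sum_congr rfl fun i hi => ?_
            rw [Finset.mem_Ico] at hi
            simp only [x', ← natCast_zsmul, ← mul_smul]
            congr 1
            rw [ha i hi.1]
            push_cast
            ring
        obtain ⟨b, hb, eb⟩ := htail
        obtain ⟨f, hf, g, hg, v, hv, ev⟩ := hch b hb
        obtain ⟨y, rfl⟩ := mem_HH.1 hg
        refine ⟨z + A k • f, ⟨z, hz, _, ⟨f, hf, rfl⟩, rfl⟩, ?_⟩
        refine ⟨_, add_mem hzr (mem_HH.2 ⟨(n * p) • y, rfl⟩), _, hv, ?_⟩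
        simp only at ev ⊢
        have e2 : b = f + (n * p ^ (k + 1)) • y + v := by
          rw [add_assoc, ev]; abel
        rw [nsmulAddMonoidHom_apply, e, smul_add, eb, e2]
        simp only [smul_add, mul_smul, natCast_zsmul, Finset.smul_sum]
        have e3 : A k • n • p ^ (k + 1) • y = p ^ k • A k • n • p • y := by
          simp only [← mul_smul]
          congr 1
          ring
        rw [e3]
        abel
      refine (cov_trans h1 hk).mono subset_rfl ?_
      rintro _ ⟨v, hv, w, hw, rfl⟩
      exact hV2 _ hv _ hw

theorem PS [T2Space G] (hmin : IsMinimal G) : ∀ V ∈ 𝓝 (0 : G), Cov (Set.univ : Set G) V := by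
  by_cases h : ∀ n p : ℕ, 1 ≤ n → p.Prime → ∀ W ∈ 𝓝 (0 : G),
      Cov (HH G n : Set G) ((HH G (n * p) : Set G) + W)
  · exact caseA hmin h
  · exfalso
    push Not at h
    obtain ⟨n, p, hn, hp, W, hW, h⟩ := h
    have h0 : NC G n p 0 := ⟨W, hW, by simpa using h⟩
    by_cases hall : ∀ j, NC G n p j
    · exact caseB hmin n p hp h0 (Or.inl hall)
    · push Not at hall
      classical
      obtain ⟨j, hj1, hj2⟩ : ∃ j, NC G n p j ∧ ¬ NC G n p (j + 1) := by
        by_contra hc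
        push Not at hc
        obtain ⟨j, hj⟩ := hall
        apply hj
        clear hj
        induction j with
        | zero => exact h0
        | succ j ih => exact hc j ih
      refine caseB hmin (n * p ^ j) p hp ?_ (Or.inr ?_)
      · unfold NC at hj1 ⊢
        simpa [mul_assoc, pow_succ] using hj1
      · unfold NC at hj2 ⊢
        simpa [mul_assoc, pow_succ] using hj2
end


end helpers

/-- For a Hausdorff topological abelian group `G` the following are equivalent:
(a) `G` is almost minimal;
(b) there is a GTG neighborhood `U` of `0` such that `G` is `U`-locally minimal and
`G/U_∞` is UFSS;
(c) there is a GTG neighborhood `U` of `0` such that `G` is `U`-locally minimal and for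
every neighborhood `V` of `0` there are `n ∈ ℕ` and a finite `F ⊆ U_∞` with
`(1/n)U ⊆ F + V`. -/
theorem almostMinimal_tfae {G : Type*} [AddCommGroup G] [TopologicalSpace G]
    [IsTopologicalAddGroup G] [T2Space G] :
    (IsAlmostMinimal G ↔
      ∃ U ∈ nhds (0 : G), IsGTG U ∧ LocallyMinimalAt G U ∧
        ∃ N : AddSubgroup G, (N : Set G) = uInf U ∧ IsUFSS (G ⧸ N)) ∧
    (IsAlmostMinimal G ↔
      ∃ U ∈ nhds (0 : G), IsGTG U ∧ LocallyMinimalAt G U ∧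
        ∀ V ∈ nhds (0 : G), ∃ n : ℕ, 1 ≤ n ∧
          ∃ F : Finset G, (F : Set G) ⊆ uInf U ∧ invDiv n U ⊆ (F : Set G) + V) :=
  tfae_of_PS (fun _ h => PS h)
end

section
/- Let H be a dense subgroup of a Hausdorff abelian topological group G. If H (with the subspace topology) is almost minimal, then G is almost minimal. -/
open Topology Filter in
theorem isMinimal_of_denseRange {A B : Type*} [AddCommGroup A] [AddCommGroup B]
    [τA : TopologicalSpace A] [τB : TopologicalSpace B] [IsTopologicalAddGroup B]
    (f : A →+ B) (hinj : Function.Injective f) (hind : IsInducing f) (hd : DenseRange f)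
    (h : IsMinimal A) : IsMinimal B := by
  have hreg : ∀ V ∈ 𝓝 (0 : B), ∃ W ∈ 𝓝 (0 : B), IsClosed W ∧ W ⊆ V := fun V hV =>
    exists_mem_nhds_isClosed_subset hV
  have hpre : ∀ W ∈ 𝓝 (0 : B), f ⁻¹' W ∈ 𝓝 (0 : A) := fun W hW =>
    hind.continuous.continuousAt.preimage_mem_nhds (by simpa using hW)
  have hcl : ∀ U W : Set B, IsOpen U → IsClosed W → U ∩ Set.range f ⊆ W → U ⊆ W :=
    fun U W hU hW hUW => (hd.open_subset_closure_inter hU).trans (closure_minimal hUW hW)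
  have hτ : τA = TopologicalSpace.induced f τB := hind.eq_induced
  have hgB : @IsTopologicalAddGroup B τB _ := inferInstance
  intro σ hσ hg ht
  have e : TopologicalSpace.induced f σ = τA := by
    apply h
    · rw [hτ]; exact induced_mono hσ
    · exact @topologicalAddGroup_induced B A σ _ hg (A →+ B) _ _ _ f
    · exact @T2Space.of_injective_continuous A B (TopologicalSpace.induced f σ) σ ht f hinj
        (@continuous_induced_dom A B f σ)
  refine IsTopologicalAddGroup.ext hg hgB ?_
  refine le_antisymm ?_ (nhds_mono hσ)
  intro V hV
  obtain ⟨W, hW, hWc, hWV⟩ := hreg V hV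
  have h1 : f ⁻¹' W ∈ @nhds A τA 0 := hpre W hW
  rw [← e, @nhds_induced B A σ, map_zero, mem_comap] at h1
  obtain ⟨U, hU, hUW⟩ := h1
  obtain ⟨U', hU'U, hU'o, hU'0⟩ := (@mem_nhds_iff B σ 0 U).1 hU
  refine mem_of_superset ((@mem_nhds_iff B σ 0 U').2 ⟨U', le_rfl, hU'o, hU'0⟩) ?_
  have ho : IsOpen[τB] U' := hσ _ hU'o
  refine (hcl U' W ho hWc ?_).trans hWV
  rintro _ ⟨hx, a, rfl⟩
  exact hUW (hU'U hx)

open Topology Filter in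
theorem isUFSS_of_denseRange {A B : Type*} [AddCommGroup A] [AddCommGroup B]
    [TopologicalSpace A] [TopologicalSpace B] [IsTopologicalAddGroup B]
    (f : A →+ B) (hc : Continuous f) (hn : ∀ U ∈ 𝓝 (0 : A), ∃ W ∈ 𝓝 (0 : B), f ⁻¹' W ⊆ U)
    (hd : DenseRange f) (h : IsUFSS A) : IsUFSS B := by
  obtain ⟨U, hU, -, -, hb⟩ := h
  obtain ⟨W, hW, hWU⟩ := hn U hU
  obtain ⟨W1, hW1, hW1o, hW10⟩ := mem_nhds_iff.1 hW
  let W0 : Set B := W1 ∩ -W1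
  have h0o : IsOpen W0 := hW1o.inter hW1o.neg
  have h00 : (0 : B) ∈ W0 := ⟨hW10, by simpa using hW10⟩
  have hopen : ∀ n : ℕ, IsOpen (invDiv n W0) := by
    intro n
    have : invDiv n W0 = ⋂ k ∈ Finset.Icc 1 n, (fun x : B => k • x) ⁻¹' W0 := by
      ext x; simp [invDiv]
    rw [this]
    exact isOpen_biInter_finset fun k _ => h0o.preimage (continuous_const_smul k)
  refine ⟨W0, h0o.mem_nhds h00, ?_, ?_, ?_⟩
  · rintro x ⟨h1, h2⟩
    exact ⟨h2, by simpa using h1⟩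
  · intro n _
    exact (hopen n).mem_nhds (by intro k _ _; simpa using h00)
  · intro V hV
    obtain ⟨C, hC, hCc, hCV⟩ := exists_mem_nhds_isClosed_subset hV
    obtain ⟨n, hn1, hn2⟩ := hb (f ⁻¹' C)
      (hc.continuousAt.preimage_mem_nhds (by simpa using hC))
    refine ⟨n, hn1, (hd.open_subset_closure_inter (hopen n)).trans
      ((closure_minimal ?_ hCc).trans hCV)⟩
    rintro _ ⟨hx, a, rfl⟩
    apply hn2
    intro k hk1 hk2
    apply hWU
    have := hx k hk1 hk2
    rw [← map_nsmul] at this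
    exact hW1 this.1

open Topology Filter in
/-- If a dense subgroup `H` of a Hausdorff abelian topological group `G` is almost
minimal, then so is `G`. -/
theorem almostMinimal_of_dense_almostMinimal {G : Type*} [AddCommGroup G]
    [TopologicalSpace G] [IsTopologicalAddGroup G] [T2Space G]
    (H : AddSubgroup G) (hd : Dense (H : Set G)) (h : IsAlmostMinimal ↥H) :
    IsAlmostMinimal G := by
  obtain ⟨N, -, hmin, hufss⟩ := h
  let N' : AddSubgroup G := N.map H.subtype
  let M : AddSubgroup G := N'.topologicalClosure
  have hNM : ∀ x : N, ((x : H) : G) ∈ M := fun x =>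
    N'.le_topologicalClosure ⟨x, x.2, rfl⟩
  refine ⟨M, N'.isClosed_topologicalClosure, ?_, ?_⟩
  · let f : N →+ M := (H.subtype.comp N.subtype).codRestrict M hNM
    have hfi : IsInducing f := by
      have h1 : IsInducing ((Subtype.val : M → G) ∘ f) :=
        (IsInducing.subtypeVal (t := (H : Set G))).comp (IsInducing.subtypeVal (t := (N : Set H)))
      exact (IsInducing.subtypeVal.of_comp_iff).1 h1
    refine isMinimal_of_denseRange f ?_ hfi ?_ hmin
    · intro x y hxy
      have := congrArg (Subtype.val : M → G) hxy
      exact Subtype.ext (Subtype.ext this)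
    · intro y
      rw [closure_subtype]
      have hy : (y : G) ∈ closure (N' : Set G) := y.2
      refine closure_mono ?_ hy
      rintro _ ⟨x, hx, rfl⟩
      exact ⟨f ⟨x, hx⟩, ⟨_, rfl⟩, rfl⟩
  · let f : (↥H ⧸ N) →+ (G ⧸ M) := QuotientAddGroup.map N M H.subtype
      (fun x hx => hNM ⟨x, hx⟩)
    have hf : ∀ x : H, f (x : ↥H ⧸ N) = ((x : G) : G ⧸ M) := fun x => rfl
    refine isUFSS_of_denseRange f ?_ ?_ ?_ hufss
    · refine (QuotientAddGroup.isQuotientMap_mk (N := N)).continuous_iff.2 ?_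
      exact (QuotientAddGroup.continuous_mk (N := M)).comp continuous_subtype_val
    · intro U hU
      have h1 : (fun x : H => (x : ↥H ⧸ N)) ⁻¹' U ∈ 𝓝 (0 : H) :=
        (QuotientAddGroup.continuous_mk (N := N)).continuousAt.preimage_mem_nhds hU
      rw [nhds_subtype, mem_comap] at h1
      obtain ⟨O, hO, hOU⟩ := h1
      obtain ⟨O1, hO1o, hO10, hO1⟩ := exists_open_nhds_zero_add_subset hO
      refine ⟨(fun x : G => (x : G ⧸ M)) '' O1,
        (QuotientAddGroup.isOpenMap_coe (N := M)).image_mem_nhds (hO1o.mem_nhds hO10), ?_⟩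
      intro q hq
      obtain ⟨x, rfl⟩ := QuotientAddGroup.mk_surjective q
      obtain ⟨o, ho, hox⟩ := hq
      have hm : -o + (x : G) ∈ M := QuotientAddGroup.eq.1 hox
      have hm' : -o + (x : G) ∈ closure (N' : Set G) := hm
      have hnb : (fun z : G => (-o + (x : G)) - z) ⁻¹' O1 ∈ 𝓝 (-o + (x : G)) :=
        (continuous_const.sub continuous_id).continuousAt.preimage_mem_nhds
          (by simpa using hO1o.mem_nhds hO10)
      obtain ⟨z, hz, n, hn, rfl⟩ := mem_closure_iff_nhds.1 hm' _ hnb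
      have h2 : ((x - n : H) : G) ∈ O := by
        have := hO1 (Set.add_mem_add ho hz)
        convert this using 1
        simp; abel
      have h3 : ((x - n : H) : ↥H ⧸ N) ∈ U := hOU h2
      have h4 : ((x - n : H) : ↥H ⧸ N) = (x : ↥H ⧸ N) := by
        rw [QuotientAddGroup.eq]; simpa using hn
      rwa [h4] at h3
    · have h1 : DenseRange (fun x : H => ((x : G) : G ⧸ M)) :=
        (QuotientAddGroup.mk_surjective (s := M)).denseRange.comp hd.denseRange_val
          QuotientAddGroup.continuous_mk
      refine h1.mono ?_
      rintro _ ⟨x, rfl⟩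
      exact ⟨(x : ↥H ⧸ N), rfl⟩
end

section
/- Let A be a Hausdorff abelian topological group, let G be a closed subgroup of A and B a compact subgroup of A, and set N := B ∩ G. Then the canonical map ι : G/N → A/B, x + N ↦ x + B, is a topological embedding (a homeomorphism onto its image). -/
/-- Open mapping theorem for quotients: if `G` is a closed subgroup and `B` a compact
subgroup of a Hausdorff abelian topological group `A`, and `N := B ∩ G`, then the
canonical map `ι : G/N → A/B`, `x + N ↦ x + B`, is a topological embedding. -/
theorem quotient_map_embedding {A : Type*} [AddCommGroup A] [TopologicalSpace A]
    [IsTopologicalAddGroup A] [T2Space A] (G B : AddSubgroup A)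
    (hG : IsClosed (G : Set A)) (hB : IsCompact (B : Set A)) :
    Topology.IsEmbedding (QuotientAddGroup.map (B.addSubgroupOf G) B G.subtype le_rfl) := by
  have hcont : Continuous (QuotientAddGroup.map (B.addSubgroupOf G) B G.subtype le_rfl) :=
    continuous_quot_lift _ (QuotientAddGroup.continuous_mk.comp continuous_subtype_val)
  refine (Topology.IsClosedEmbedding.of_continuous_injective_isClosedMap hcont ?_ ?_).isEmbedding
  · intro x y
    induction x using QuotientAddGroup.induction_on with | H x =>
    induction y using QuotientAddGroup.induction_on with | H y =>
    intro h
    have h' : ((x : A) : A ⧸ B) = ((y : A) : A ⧸ B) := h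
    rw [QuotientAddGroup.eq] at h' ⊢
    exact h'
  · intro s hs
    have h1 : IsClosed ((QuotientAddGroup.mk : G → G ⧸ B.addSubgroupOf G) ⁻¹' s) :=
      hs.preimage QuotientAddGroup.continuous_mk
    have h2 := QuotientAddGroup.isClosedMap_coe hB _ (hG.isClosedMap_subtype_val _ h1)
    convert h2 using 1
    ext z
    constructor
    · rintro ⟨x, hx, rfl⟩
      induction x using QuotientAddGroup.induction_on with | H x =>
      exact ⟨x, ⟨x, hx, rfl⟩, rfl⟩
    · rintro ⟨_, ⟨x, hx, rfl⟩, rfl⟩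
      exact ⟨_, hx, rfl⟩
end
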